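/- arXiv:1806.04566 — 4 statements merged into one kernel-verified Lean document; each statement's English description precedes it below -/
import Mathlib

section
/- Let k ≥ 2 and j ∈ {1,…,k−1}, and set p̄_j := ((j+1)·log n + (1/2)·log log n)·(k−j)!/((k−j+1)·n^{k−j}). With high probability, for all p ≥ p̄_j simultaneously, every local obstacle that exists in G_p also exists in G_{p̄_j}: every k-simplex K of G_p that is a local obstacle in G_p is a k-simplex of G_{p̄_j} and is a local obstacle in G_{p̄_j}. -/
open MeasureTheory Filter

attribute [local instance] Classical.propDecidable

namespace RSC

variable {V : Type*}

/-- `A` is an `i`-dimensional simplex of the complex `G`. -/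
def IsSimplex (G : Set (Finset V)) (i : ℕ) (A : Finset V) : Prop :=
  A ∈ G ∧ A.card = i + 1

/-- A `k`-dimensional simplicial complex on vertex set `V`. -/
structure IsKComplex (G : Set (Finset V)) (k : ℕ) : Prop where
  down : ∀ A ∈ G, ∀ B, B ⊆ A → B.Nonempty → B ∈ G
  singletons : ∀ v : V, ({v} : Finset V) ∈ G
  dim : ∀ A ∈ G, A.card ≤ k + 1

/-- `i`-cochains with `F₂`-coefficients. -/
abbrev Cochain (G : Set (Finset V)) (i : ℕ) : Type _ :=
  {A : Finset V // IsSimplex G i A} → ZMod 2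

/-- The coboundary map `δ^i : C^i(G) → C^{i+1}(G)`. -/
noncomputable def coboundary (G : Set (Finset V)) (i : ℕ) :
    Cochain G i →ₗ[ZMod 2] Cochain G (i + 1) where
  toFun f := fun σ => ∑ τ ∈ Finset.powersetCard (i + 1) (σ : Finset V),
      if h : IsSimplex G i τ then f ⟨τ, h⟩ else 0
  map_add' f g := by
    funext σ
    simp only [Pi.add_apply, ← Finset.sum_add_distrib]
    refine Finset.sum_congr rfl fun τ _ => ?_
    by_cases h : IsSimplex G i τ <;> simp [h]
  map_smul' c f := by
    funext σ
    simp only [Pi.smul_apply, RingHom.id_apply, Finset.smul_sum]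
    refine Finset.sum_congr rfl fun τ _ => ?_
    by_cases h : IsSimplex G i τ <;> simp [h]

/-- The submodule of `i`-cocycles. -/
noncomputable def cocycles (G : Set (Finset V)) (i : ℕ) : Submodule (ZMod 2) (Cochain G i) :=
  LinearMap.ker (coboundary G i)

/-- The submodule of `i`-coboundaries (`δ^{-1}` is the zero map). -/
noncomputable def coboundaries (G : Set (Finset V)) : (i : ℕ) → Submodule (ZMod 2) (Cochain G i)
  | 0 => ⊥
  | (i + 1) => LinearMap.range (coboundary G i)

/-- The `i`-th cohomology group `H^i(G;F₂) = ker δ^i / im δ^{i-1}`. -/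
noncomputable abbrev cohomology (G : Set (Finset V)) (i : ℕ) :=
  (cocycles G i) ⧸ ((coboundaries G i).comap (cocycles G i).subtype)

/-- `F₂`-cohomological `j`-connectedness: `H^0 ≅ F₂` and `H^i = 0` for `1 ≤ i ≤ j`. -/
def CohomConnected (G : Set (Finset V)) (j : ℕ) : Prop :=
  Nonempty (cohomology G 0 ≃ₗ[ZMod 2] ZMod 2) ∧
    ∀ i, 1 ≤ i → i ≤ j → Subsingleton (cohomology G i)

/-- The `j`-flower in `K` with centre `C`: the set of petals `C ∪ {w}`, `w ∈ K \ C`. -/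
def Flower [DecidableEq V] (K C : Finset V) : Set (Finset V) :=
  {P | ∃ w ∈ K \ C, P = insert w C}

/-- A copy of `M_j^-`: a `k`-simplex `K` together with a `(j-1)`-simplex `C ⊆ K` such that
each petal of the flower `F(K,C)` is contained in no `k`-simplex other than `K`. -/
def IsMjMinus [DecidableEq V] (G : Set (Finset V)) (k j : ℕ) (K C : Finset V) : Prop :=
  IsSimplex G k K ∧ C ∈ G ∧ C.card = j ∧ C ⊆ K ∧
    ∀ P ∈ Flower K C, ∀ K', IsSimplex G k K' → P ⊆ K' → K' = K

/-- A `j`-cycle: every `(j-1)`-simplex lies in an even number of members of `J`. -/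
def IsCycle (G : Set (Finset V)) (j : ℕ) (J : Finset (Finset V)) : Prop :=
  (∀ σ ∈ J, IsSimplex G j σ) ∧
    ∀ τ : Finset V, τ.card = j → Even (J.filter (fun σ => τ ⊆ σ)).card

/-- A copy of `M_j`. -/
def IsMj [DecidableEq V] (G : Set (Finset V)) (k j : ℕ) (K C : Finset V)
    (J : Finset (Finset V)) : Prop :=
  IsMjMinus G k j K C ∧ IsCycle G j J ∧ ∃! P : Finset V, P ∈ J ∧ P ∈ Flower K C

/-- A `j`-shell: a `(j+2)`-set all of whose `(j+1)`-subsets are `j`-simplices. -/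
def IsShell (G : Set (Finset V)) (j : ℕ) (A : Finset V) : Prop :=
  A.card = j + 2 ∧ ∀ τ ⊆ A, τ.card = j + 1 → τ ∈ G

/-- A copy of `M_j^*`. -/
def IsMjStar [DecidableEq V] (G : Set (Finset V)) (k j : ℕ) (K C : Finset V) (w a : V) : Prop :=
  IsMjMinus G k j K C ∧ w ∈ K \ C ∧ a ∉ K ∧ IsShell G j (insert a (insert w C))

/-- The support of a cochain. -/
def cochainSupport {G : Set (Finset V)} {i : ℕ} (f : Cochain G i) : Set (Finset V) :=
  {A | ∃ h : IsSimplex G i A, f ⟨A, h⟩ = 1}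

/-- A cochain arising from a copy of `M_j^-`: its support is the flower `F(K,C)`. -/
def ArisesFrom [DecidableEq V] (G : Set (Finset V)) (k j : ℕ) (f : Cochain G j)
    (K C : Finset V) : Prop :=
  IsMjMinus G k j K C ∧ cochainSupport f = Flower K C

/-- A `j`-cocycle generated by copies of `M_j^-`: it differs by a `j`-coboundary from a sum
of `j`-cocycles arising from copies of `M_j^-`. -/
def GeneratedByMjMinus [DecidableEq V] (G : Set (Finset V)) (k j : ℕ) (f : Cochain G j) : Prop :=
  ∃ (m : ℕ) (fs : Fin m → Cochain G j),
    (∀ i, ∃ K C, ArisesFrom G k j (fs i) K C) ∧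
      f - (∑ i, fs i) ∈ coboundaries G j

/-- Membership in `N_G`: a `j`-cocycle not generated by copies of `M_j^-`. -/
def InNG [DecidableEq V] (G : Set (Finset V)) (k j : ℕ) (f : Cochain G j) : Prop :=
  f ∈ cocycles G j ∧ ¬ GeneratedByMjMinus G k j f

/-- Traversability: the transitive closure of "lying in a common `k`-simplex" is `S × S`. -/
def Traversable (G : Set (Finset V)) (k : ℕ) (S : Set (Finset V)) : Prop :=
  ∀ σ₁ ∈ S, ∀ σ₂ ∈ S,
    Relation.TransGen
      (fun a b => a ∈ S ∧ b ∈ S ∧ ∃ K, IsSimplex G k K ∧ a ⊆ K ∧ b ⊆ K) σ₁ σ₂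

/-- A local obstacle: a `k`-simplex containing at least `k-j+1` many `j`-simplices,
each lying in no other `k`-simplex. -/
def IsLocalObstacle (G : Set (Finset V)) (k j : ℕ) (K : Finset V) : Prop :=
  IsSimplex G k K ∧
    k - j + 1 ≤ {σ : Finset V | IsSimplex G j σ ∧ σ ⊆ K ∧
      ∀ K', IsSimplex G k K' → σ ⊆ K' → K' = K}.ncard

/-- The random complex `G_p` given birth times `t`: all singletons together with all
non-empty subsets of `(k+1)`-sets with birth time at most `p`. -/
def complexAt (k n : ℕ) (t : Finset (Fin n) → ℝ) (p : ℝ) : Set (Finset (Fin n)) :=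
  {A | (∃ v, A = {v}) ∨
    (A.Nonempty ∧ ∃ K : Finset (Fin n), K.card = k + 1 ∧ t K ≤ p ∧ A ⊆ K)}

/-- The distribution of birth times: i.i.d. uniform on `[0,1]`. -/
noncomputable def birthMeasure (n : ℕ) : Measure (Finset (Fin n) → ℝ) :=
  Measure.pi fun _ => volume.restrict (Set.Icc (0 : ℝ) 1)

/-- `p_{M_j}`: the supremum of the probabilities `p ∈ [0,1]` at which `G_p` contains
a copy of `M_j`. -/
noncomputable def pMj (k j n : ℕ) (t : Finset (Fin n) → ℝ) : ℝ :=
  sSup {p : ℝ | p ∈ Set.Icc (0 : ℝ) 1 ∧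
    ∃ K C J, IsMj (complexAt k n t p) k j K C J}

/-- The threshold `p_j`. -/
noncomputable def pjThreshold (k j n : ℕ) : ℝ :=
  ((j + 1 : ℝ) * Real.log n + Real.log (Real.log n)) * (Nat.factorial (k - j)) /
    (((k - j + 1 : ℕ) : ℝ) * (n : ℝ) ^ (k - j))

/-- `p_j^-`. -/
noncomputable def pjMinus (k j n : ℕ) : ℝ :=
  (1 - 1 / Real.sqrt (Real.log n)) * ((j + 1 : ℝ) * Real.log n) * (Nat.factorial (k - j)) /
    (((k - j + 1 : ℕ) : ℝ) * (n : ℝ) ^ (k - j))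

/-- `p_{j-1}^-`. -/
noncomputable def pjPrevMinus (k j n : ℕ) : ℝ :=
  (1 - 1 / Real.sqrt (Real.log n)) * ((j : ℝ) * Real.log n) * (Nat.factorial (k - j + 1)) /
    (((k - j + 2 : ℕ) : ℝ) * (n : ℝ) ^ (k - j + 1))

/-- `p_j^{(1)}`. -/
noncomputable def pjOne (k j n : ℕ) : ℝ :=
  1 / (10 * ((j : ℝ) + 1) * (Nat.choose (k + 1) (j + 1)) * (n : ℝ) ^ (k - j))

/-- The number of copies of `M_j^-` in `G`. -/
noncomputable def countMjMinus (k j : ℕ) {n : ℕ} (G : Set (Finset (Fin n))) : ℕ :=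
  {x : Finset (Fin n) × Finset (Fin n) | IsMjMinus G k j x.1 x.2}.ncard

/-- The number of copies of `M_j^*` in `G`. -/
noncomputable def countMjStar (k j : ℕ) {n : ℕ} (G : Set (Finset (Fin n))) : ℕ :=
  {x : Finset (Fin n) × Finset (Fin n) × Fin n × Fin n |
    IsMjStar G k j x.1 x.2.1 x.2.2.1 x.2.2.2}.ncard

/-- `p̄_j = ((j+1)·log n + (1/2)·log log n)·(k-j)!/((k-j+1)·n^{k-j})`. -/
noncomputable def pbar (k j n : ℕ) : ℝ :=
  ((j + 1 : ℝ) * Real.log n + Real.log (Real.log n) / 2) * (Nat.factorial (k - j)) /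
    (((k - j + 1 : ℕ) : ℝ) * (n : ℝ) ^ (k - j))

theorem prob_bound {ι : Type*} [Fintype ι] (q : ℝ) (i : ι) (T : Finset ι) (hi : i ∉ T) :
    Measure.pi (fun _ : ι => volume.restrict (Set.Icc (0 : ℝ) 1))
      {t | q < t i ∧ ∀ l ∈ T, t i < t l} ≤
    ENNReal.ofReal (Real.exp (-(q * (T.card + 1))) / (T.card + 1)) := by
  set μ : Measure (ι → ℝ) := Measure.pi (fun _ : ι => volume.restrict (Set.Icc (0 : ℝ) 1)) with hμ
  set U := insert i T with hU
  have hUc : U.card = T.card + 1 := Finset.card_insert_of_notMem hi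
  let E : ι → Set (ι → ℝ) := fun a => {t | q < t a ∧ ∀ l ∈ U, l ≠ a → t a < t l}
  have hEm : ∀ a, MeasurableSet (E a) := by
    intro a
    have : E a = {t | q < t a} ∩ ⋂ l ∈ U, ⋂ (_ : l ≠ a), {t : ι → ℝ | t a < t l} := by
      ext t; simp [E]
    rw [this]
    refine (measurableSet_lt measurable_const (measurable_pi_apply a)).inter ?_
    refine Finset.measurableSet_biInter _ fun l _ => MeasurableSet.iInter fun _ => ?_
    exact measurableSet_lt (measurable_pi_apply a) (measurable_pi_apply l)
  have hEeq : ∀ a ∈ U, μ (E a) = μ (E i) := by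
    intro a ha
    have hiU : i ∈ U := Finset.mem_insert_self i T
    have mp := measurePreserving_piCongrLeft
      (fun _ : ι => (volume.restrict (Set.Icc (0 : ℝ) 1) : Measure ℝ)) (Equiv.swap i a)
    have h1 := mp.measure_preimage (hEm a).nullMeasurableSet
    have h2 : (MeasurableEquiv.piCongrLeft (fun _ : ι => ℝ) (Equiv.swap i a)) ⁻¹' (E a) = E i := by
      have key : ∀ (t : ι → ℝ) (b : ι),
          (MeasurableEquiv.piCongrLeft (fun _ : ι => ℝ) (Equiv.swap i a)) t b
            = t (Equiv.swap i a b) := by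
        intro t b
        have := Equiv.piCongrLeft_apply_apply (fun _ : ι => ℝ) (Equiv.swap i a) t (Equiv.swap i a b)
        rw [Equiv.swap_apply_self] at this
        exact this
      have hsU : ∀ l ∈ U, Equiv.swap i a l ∈ U := by
        intro l hl
        rcases eq_or_ne l i with rfl | h
        · simpa using ha
        rcases eq_or_ne l a with rfl | h'
        · simpa using hiU
        rwa [Equiv.swap_apply_of_ne_of_ne h h']
      ext t
      simp only [Set.mem_preimage, E, Set.mem_ofPred_eq, key, Equiv.swap_apply_right]
      refine and_congr_right fun _ => ⟨fun h l hl hne => ?_, fun h l hl hne => ?_⟩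
      · have := h _ (hsU l hl) (by
          intro hh
          apply hne
          have := congrArg (Equiv.swap i a) hh
          simpa using this)
        simpa using this
      · refine h _ (hsU l hl) ?_
        intro hh
        apply hne
        have := congrArg (Equiv.swap i a) hh
        simpa using this
    rw [h2] at h1
    exact h1.symm
  have hsub : {t : ι → ℝ | q < t i ∧ ∀ l ∈ T, t i < t l} ⊆ E i := by
    rintro t ⟨h1, h2⟩
    refine ⟨h1, fun l hl hne => h2 l ?_⟩
    rcases Finset.mem_insert.1 hl with h | h
    · exact absurd h hne
    · exact h
  have hdisj : Set.PairwiseDisjoint (↑U : Set ι) E := by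
    intro a ha b hb hab
    refine Set.disjoint_left.2 fun t h1 h2 => ?_
    have := h1.2 b hb hab.symm
    have := h2.2 a ha hab
    linarith
  have hsum : ∑ a ∈ U, μ (E a) = μ (⋃ a ∈ U, E a) :=
    (measure_biUnion_finset hdisj (fun a _ => hEm a)).symm
  have hbox : (⋃ a ∈ U, E a) ⊆
      Set.pi Set.univ (fun l => if l ∈ U then Set.Ioi q else Set.univ) := by
    intro t ht
    simp only [Set.mem_iUnion] at ht
    obtain ⟨a, ha, h1, h2⟩ := ht
    intro l _
    by_cases hl : l ∈ U
    · simp only [hl, if_true, Set.mem_Ioi]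
      by_cases hla : l = a
      · rw [hla]; exact h1
      · exact h1.trans (h2 l hl hla)
    · simp [hl]
  have hmeas1 : (volume.restrict (Set.Icc (0 : ℝ) 1)) (Set.Ioi q) ≤
      ENNReal.ofReal (Real.exp (-q)) := by
    rw [Measure.restrict_apply measurableSet_Ioi]
    calc volume (Set.Ioi q ∩ Set.Icc (0 : ℝ) 1) ≤ volume (Set.Ioc q 1) :=
          measure_mono fun x hx => ⟨hx.1, hx.2.2⟩
      _ = ENNReal.ofReal (1 - q) := Real.volume_Ioc
      _ ≤ _ := ENNReal.ofReal_le_ofReal (by linarith [Real.add_one_le_exp (-q)])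
  have hboxm : μ (Set.pi Set.univ (fun l => if l ∈ U then Set.Ioi q else Set.univ)) ≤
      ENNReal.ofReal (Real.exp (-q)) ^ U.card := by
    rw [hμ, Measure.pi_pi]
    calc ∏ l, (volume.restrict (Set.Icc (0 : ℝ) 1)) (if l ∈ U then Set.Ioi q else Set.univ)
        ≤ ∏ l, (if l ∈ U then ENNReal.ofReal (Real.exp (-q)) else 1) := by
          refine Finset.prod_le_prod' fun l _ => ?_
          by_cases hl : l ∈ U
          · simpa [hl] using hmeas1
          · simp [hl]
      _ = _ := by
          rw [Finset.prod_ite_mem]; simp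
  have hfin : (U.card : ENNReal) * μ (E i) ≤ ENNReal.ofReal (Real.exp (-q)) ^ U.card := by
    have : ∑ a ∈ U, μ (E a) = (U.card : ENNReal) * μ (E i) := by
      rw [Finset.sum_congr rfl hEeq]; simp
    rw [← this, hsum]
    exact (measure_mono hbox).trans hboxm
  refine (measure_mono hsub).trans ?_
  have hpos : (0 : ℝ) < (T.card : ℝ) + 1 := by positivity
  rw [ENNReal.ofReal_div_of_pos hpos, ENNReal.le_div_iff_mul_le
    (Or.inl (by simpa using hpos)) (Or.inl ENNReal.ofReal_ne_top)]
  have e1 : ENNReal.ofReal ((T.card : ℝ) + 1) = (U.card : ENNReal) := by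
    rw [hUc, ← ENNReal.ofReal_natCast]; push_cast; rfl
  have e2 : ENNReal.ofReal (Real.exp (-(q * (T.card + 1)))) =
      ENNReal.ofReal (Real.exp (-q)) ^ U.card := by
    rw [← ENNReal.ofReal_pow (Real.exp_pos _).le, ← Real.exp_nat_mul, hUc]
    congr 2; push_cast; ring
  rw [e1, e2, mul_comm]
  exact hfin

/-- The sets `σ ∪ A` with `σ ∈ F` and `A` a `d`-set outside `K`. -/
noncomputable def extSets {n : ℕ} (d : ℕ) (K : Finset (Fin n)) (F : Finset (Finset (Fin n))) :
    Finset (Finset (Fin n)) :=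
  (F ×ˢ Finset.powersetCard d Kᶜ).image (fun x => x.1 ∪ x.2)

theorem card_extSets {n d j m : ℕ} (K : Finset (Fin n)) (F : Finset (Finset (Fin n)))
    (hF : F ∈ Finset.powersetCard m (Finset.powersetCard (j + 1) K)) :
    (extSets d K F).card = m * (n - K.card).choose d := by
  rw [Finset.mem_powersetCard] at hF
  unfold extSets
  rw [Finset.card_image_of_injOn, Finset.card_product, hF.2, Finset.card_powersetCard,
    Finset.card_compl, Fintype.card_fin]
  rintro ⟨a, A⟩ h1 ⟨b, B⟩ h2 h
  simp only [Finset.coe_product, Set.mem_prod, Finset.mem_coe, Finset.mem_powersetCard] at h1 h2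
  have ha := (Finset.mem_powersetCard.1 (hF.1 h1.1)).1
  have hb := (Finset.mem_powersetCard.1 (hF.1 h2.1)).1
  have hA := h1.2.1
  have hB := h2.2.1
  simp only at h
  have h' : ∀ x, (x ∈ a ∨ x ∈ A) ↔ (x ∈ b ∨ x ∈ B) := by
    intro x
    have := congrArg (fun s => x ∈ s) h
    simpa using this
  have hA' : ∀ x, x ∈ A → x ∉ K := fun x hx => by simpa using hA hx
  have hB' : ∀ x, x ∈ B → x ∉ K := fun x hx => by simpa using hB hx
  refine Prod.ext ?_ ?_
  · ext x
    have := h' x; have := hA' x; have := hB' x; have := @ha x; have := @hb x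
    simp only at *
    tauto
  · ext x
    have := h' x; have := hA' x; have := hB' x; have := @ha x; have := @hb x
    simp only at *
    tauto

theorem not_mem_extSets {n d : ℕ} (hd : 1 ≤ d) (K : Finset (Fin n))
    (F : Finset (Finset (Fin n))) : K ∉ extSets d K F := by
  intro h
  simp only [extSets, Finset.mem_image, Finset.mem_product, Finset.mem_powersetCard] at h
  obtain ⟨⟨a, A⟩, ⟨_, hA, hc⟩, hu⟩ := h
  simp only at hA hc hu
  have : A.Nonempty := by rw [← Finset.card_pos]; omega
  obtain ⟨x, hx⟩ := this
  have h1 : x ∉ K := by simpa using hA hx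
  apply h1
  rw [← hu]
  exact Finset.mem_union_right _ hx

theorem isSimplex_top {k n : ℕ} (hk : 1 ≤ k) (t : Finset (Fin n) → ℝ) (p : ℝ)
    (K : Finset (Fin n)) :
    IsSimplex (complexAt k n t p) k K ↔ K.card = k + 1 ∧ t K ≤ p := by
  constructor
  · rintro ⟨h, hc⟩
    refine ⟨hc, ?_⟩
    rcases h with ⟨v, rfl⟩ | ⟨_, L, hL, hp, hs⟩
    · simp at hc; omega
    · have : K = L := Finset.eq_of_subset_of_card_le hs (by omega)
      rwa [this]
  · rintro ⟨hc, hp⟩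
    refine ⟨Or.inr ⟨?_, K, hc, hp, le_rfl⟩, hc⟩
    rw [← Finset.card_pos]; omega

theorem bad_event {k j n : ℕ} (hk : 2 ≤ k) (hjk : j < k) (q : ℝ) (t : Finset (Fin n) → ℝ)
    (h : ¬ ∀ p : ℝ, q ≤ p →
        ∀ K : Finset (Fin n), IsLocalObstacle (complexAt k n t p) k j K →
          IsLocalObstacle (complexAt k n t q) k j K) :
    ∃ K ∈ Finset.powersetCard (k + 1) (Finset.univ : Finset (Fin n)),
      ∃ F ∈ Finset.powersetCard (k - j + 1) (Finset.powersetCard (j + 1) K),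
        q < t K ∧ ∀ L ∈ extSets (k - j) K F, t K < t L := by
  push Not at h
  obtain ⟨p, hp, K, hO, hN⟩ := h
  obtain ⟨hK, hm⟩ := hO
  have hK' := (isSimplex_top (by omega) t p K).1 hK
  have hqK : q < t K := by
    by_contra hle
    push Not at hle
    apply hN
    refine ⟨(isSimplex_top (by omega) t q K).2 ⟨hK'.1, hle⟩, hm.trans ?_⟩
    refine Set.ncard_le_ncard ?_ (Set.toFinite _)
    rintro σ ⟨h1, h2, h3⟩
    refine ⟨⟨Or.inr ⟨?_, K, hK'.1, hle, h2⟩, h1.2⟩, h2, fun K' hK2 hs => h3 K' ?_ hs⟩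
    · rw [← Finset.card_pos, h1.2]; omega
    · rw [isSimplex_top (by omega)] at hK2 ⊢
      exact ⟨hK2.1, hK2.2.trans hp⟩
  refine ⟨K, by simp [Finset.mem_powersetCard, hK'.1], ?_⟩
  rw [Set.ncard_eq_toFinset_card _ (Set.toFinite _)] at hm
  obtain ⟨F, hF, hFc⟩ := Finset.exists_subset_card_eq hm
  have hF' : ∀ σ ∈ F, _ := fun σ hσ => (Set.Finite.mem_toFinset _).1 (hF hσ)
  refine ⟨F, ?_, hqK, ?_⟩
  · rw [Finset.mem_powersetCard]
    refine ⟨fun σ hσ => ?_, hFc⟩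
    have := hF' σ hσ
    exact Finset.mem_powersetCard.2 ⟨this.2.1, this.1.2⟩
  · intro L hL
    by_contra hle
    push Not at hle
    have hne : L ≠ K := by
      rintro rfl
      exact not_mem_extSets (by omega) _ _ hL
    simp only [extSets, Finset.mem_image, Finset.mem_product, Finset.mem_powersetCard] at hL
    obtain ⟨⟨a, A⟩, ⟨ha, hA, hc⟩, hu⟩ := hL
    simp only at ha hA hc hu
    have hs := hF' a ha
    refine hne (hs.2.2 L ?_ (by rw [← hu]; exact Finset.subset_union_left))
    rw [isSimplex_top (by omega)]
    refine ⟨?_, hle.trans hK'.2⟩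
    have hd : Disjoint a A := by
      rw [Finset.disjoint_left]
      intro x hx hx'
      have h1 : x ∉ K := by simpa using hA hx'
      exact h1 (hs.2.1 hx)
    rw [← hu, Finset.card_union_of_disjoint hd, hs.1.2, hc]
    omega

theorem measure_bad {k j n : ℕ} (hk : 2 ≤ k) (hjk : j < k) (q : ℝ) :
    birthMeasure n {t : Finset (Fin n) → ℝ | ∀ p : ℝ, q ≤ p →
        ∀ K : Finset (Fin n), IsLocalObstacle (complexAt k n t p) k j K →
          IsLocalObstacle (complexAt k n t q) k j K}ᶜ ≤
    ENNReal.ofReal ((n : ℝ) ^ (k + 1) * ((k + 1).choose (j + 1)).choose (k - j + 1) *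
      (Real.exp (-(q * (((k - j + 1) * (n - (k + 1)).choose (k - j) : ℕ) + 1))) /
        (((k - j + 1) * (n - (k + 1)).choose (k - j) : ℕ) + 1))) := by
  set B := (Real.exp (-(q * (((k - j + 1) * (n - (k + 1)).choose (k - j) : ℕ) + 1))) /
        (((k - j + 1) * (n - (k + 1)).choose (k - j) : ℕ) + 1)) with hB
  have hB0 : 0 ≤ B := by positivity
  calc _ ≤ birthMeasure n (⋃ K ∈ Finset.powersetCard (k + 1) (Finset.univ : Finset (Fin n)),
      ⋃ F ∈ Finset.powersetCard (k - j + 1) (Finset.powersetCard (j + 1) K),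
        {t | q < t K ∧ ∀ L ∈ extSets (k - j) K F, t K < t L}) := by
        refine measure_mono fun t ht => ?_
        obtain ⟨K, hK, F, hF, h⟩ := bad_event hk hjk q t ht
        simp only [Set.mem_iUnion]
        exact ⟨K, hK, F, hF, h⟩
    _ ≤ ∑ K ∈ Finset.powersetCard (k + 1) (Finset.univ : Finset (Fin n)),
        ∑ F ∈ Finset.powersetCard (k - j + 1) (Finset.powersetCard (j + 1) K),
          birthMeasure n {t | q < t K ∧ ∀ L ∈ extSets (k - j) K F, t K < t L} := by
        refine (measure_biUnion_finset_le _ _).trans ?_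
        exact Finset.sum_le_sum fun K _ => measure_biUnion_finset_le _ _
    _ ≤ ∑ K ∈ Finset.powersetCard (k + 1) (Finset.univ : Finset (Fin n)),
        ∑ F ∈ Finset.powersetCard (k - j + 1) (Finset.powersetCard (j + 1) K),
          ENNReal.ofReal B := by
        refine Finset.sum_le_sum fun K hK => Finset.sum_le_sum fun F hF => ?_
        have := prob_bound q K (extSets (k - j) K F)
          (not_mem_extSets (by omega) _ _)
        rw [card_extSets K F hF, (Finset.mem_powersetCard.1 hK).2] at this
        exact this
    _ = ((n.choose (k + 1) * ((k + 1).choose (j + 1)).choose (k - j + 1) : ℕ) : ENNReal) *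
          ENNReal.ofReal B := by
        rw [Finset.sum_congr rfl (g := fun _ =>
          ((((k + 1).choose (j + 1)).choose (k - j + 1) : ℕ) : ENNReal) * ENNReal.ofReal B)]
        · simp [mul_assoc]
        · intro K hK
          simp [(Finset.mem_powersetCard.1 hK).2]
    _ ≤ _ := by
        rw [← ENNReal.ofReal_natCast, ← ENNReal.ofReal_mul (by positivity)]
        refine ENNReal.ofReal_le_ofReal (mul_le_mul_of_nonneg_right ?_ hB0)
        push_cast
        gcongr
        exact_mod_cast Nat.choose_le_pow n (k + 1)

theorem real_bound {k j n : ℕ} (hjk : j < k) (hn : 0 < n)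
    (hc : k + (k - j) ≤ n) (hlog : 1 ≤ Real.log n)
    (h2 : (((k - j) * (k + (k - j)) : ℕ) : ℝ) / n ≤ 1 / 2)
    (h1 : ((j + 1 : ℝ) * Real.log n + Real.log (Real.log n) / 2) *
      ((((k - j) * (k + (k - j)) : ℕ) : ℝ) / n) ≤ 1) (M : ℝ) (hM : 0 ≤ M) :
    (n : ℝ) ^ (k + 1) * M *
      (Real.exp (-(pbar k j n * (((k - j + 1) * (n - (k + 1)).choose (k - j) : ℕ) + 1))) /
        (((k - j + 1) * (n - (k + 1)).choose (k - j) : ℕ) + 1)) ≤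
    (2 * Real.exp 1 * M * (k - j).factorial) * Real.exp (-(Real.log (Real.log n) / 2)) := by
  unfold pbar
  set a := (j + 1 : ℝ) * Real.log n + Real.log (Real.log n) / 2 with ha
  have hll : 0 ≤ Real.log (Real.log n) := Real.log_nonneg hlog
  have ha0 : 0 ≤ a := by positivity
  obtain ⟨d, rfl⟩ : ∃ d, k = j + d := ⟨k - j, by omega⟩
  have hd : j + d - j = d := by omega
  rw [hd] at hc h1 h2 ⊢
  set C := (n - (j + d + 1)).choose d with hC
  set e : ℝ := ((d * (j + d + d) : ℕ) : ℝ) / n with he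
  have hn' : (0 : ℝ) < n := by exact_mod_cast hn
  have hf : (0 : ℝ) < d.factorial := by exact_mod_cast Nat.factorial_pos d
  have hCl : (n : ℝ) ^ d * (1 - e) ≤ d.factorial * C := by
    have hnat : (n - (j + d + d)) ^ d ≤ d.factorial * C := by
      rw [hC, ← Nat.descFactorial_eq_factorial_mul_choose]
      refine le_trans ?_ (Nat.pow_sub_le_descFactorial _ d)
      exact Nat.pow_le_pow_left (by omega) d
    have hr : ((n : ℝ) - (j + d + d : ℕ)) ^ d ≤ d.factorial * C := by
      rw [← Nat.cast_sub hc]; exact_mod_cast hnat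
    refine le_trans ?_ hr
    have hx : (n : ℝ) - (j + d + d : ℕ) = n * (1 + -((j + d + d : ℕ) / n)) := by
      field_simp; ring
    have hx1 : ((j + d + d : ℕ) : ℝ) / n ≤ 1 := by
      rw [div_le_one hn']; exact_mod_cast hc
    rw [hx, mul_pow]
    refine mul_le_mul_of_nonneg_left ?_ (by positivity)
    have := one_add_mul_le_pow (a := -(((j + d + d : ℕ) : ℝ) / n)) (by linarith) d
    refine le_trans (le_of_eq ?_) this
    rw [he]; push_cast; ring
  have hC' : (n : ℝ) ^ d * (1 - e) / d.factorial ≤ C := by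
    rw [div_le_iff₀ hf]; linarith
  have hNcast : (((d + 1) * C : ℕ) : ℝ) = (d + 1 : ℝ) * C := by push_cast; ring
  rw [hNcast]
  have hexp : a - 1 ≤ a * d.factorial / (((d + 1 : ℕ) : ℝ) * (n : ℝ) ^ d) *
      ((d + 1 : ℝ) * C + 1) := by
    have hq0 : 0 ≤ a * d.factorial / (((d + 1 : ℕ) : ℝ) * (n : ℝ) ^ d) := by positivity
    calc a - 1 ≤ a * (1 - e) := by linarith
      _ = a * d.factorial / (((d + 1 : ℕ) : ℝ) * (n : ℝ) ^ d) *
          ((d + 1 : ℝ) * ((n : ℝ) ^ d * (1 - e) / d.factorial)) := by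
            push_cast; field_simp
      _ ≤ _ := by
            refine mul_le_mul_of_nonneg_left ?_ hq0
            have := mul_le_mul_of_nonneg_left hC' (by positivity : (0 : ℝ) ≤ d + 1)
            linarith
  have hNl : (n : ℝ) ^ d / (2 * d.factorial) ≤ (d + 1 : ℝ) * C + 1 := by
    have h3 : (n : ℝ) ^ d / (2 * d.factorial) ≤ (n : ℝ) ^ d * (1 - e) / d.factorial := by
      rw [div_le_div_iff₀ (by positivity) hf]
      have : 0 ≤ (n : ℝ) ^ d * d.factorial * (1 - 2 * e) :=
        mul_nonneg (by positivity) (by linarith)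
      nlinarith
    have : (0 : ℝ) ≤ d * C := by positivity
    linarith
  have hE : Real.exp (1 - a) = Real.exp 1 * ((n : ℝ) ^ (j + 1))⁻¹ *
      Real.exp (-(Real.log (Real.log n) / 2)) := by
    have : (1 - a) = 1 + -(((j + 1 : ℕ) : ℝ) * Real.log n) + -(Real.log (Real.log n) / 2) := by
      rw [ha]; push_cast; ring
    rw [this, Real.exp_add, Real.exp_add, Real.exp_neg (((j + 1 : ℕ) : ℝ) * Real.log n),
      Real.exp_nat_mul, Real.exp_log hn']
  calc _ ≤ (n : ℝ) ^ (j + d + 1) * M * (Real.exp (1 - a) / ((n : ℝ) ^ d / (2 * d.factorial))) := by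
        gcongr
        linarith
    _ = _ := by
        rw [hE]
        have : (n : ℝ) ^ (j + d + 1) = (n : ℝ) ^ (j + 1) * (n : ℝ) ^ d := by ring
        rw [this]
        field_simp

/-- Lemma 4.5: whp, for all `p ≥ p̄_j` simultaneously, every local obstacle of `G_p`
is already a local obstacle of `G_{p̄_j}`. -/
theorem statement11 (k j : ℕ) (hk : 2 ≤ k) (hj : 1 ≤ j) (hjk : j < k) :
    Tendsto (fun n : ℕ => birthMeasure n {t : Finset (Fin n) → ℝ |
      ∀ p : ℝ, pbar k j n ≤ p →
        ∀ K : Finset (Fin n), IsLocalObstacle (complexAt k n t p) k j K →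
          IsLocalObstacle (complexAt k n t (pbar k j n)) k j K})
      atTop (nhds 1) := by
  have hprob : ∀ n, IsProbabilityMeasure (birthMeasure n) := by
    intro n
    have : IsProbabilityMeasure ((volume : Measure ℝ).restrict (Set.Icc (0 : ℝ) 1)) :=
      ⟨by simp⟩
    unfold birthMeasure
    infer_instance
  set M : ℝ := ((((k + 1).choose (j + 1)).choose (k - j + 1) : ℕ) : ℝ) with hM
  have hlogT : Tendsto (fun n : ℕ => Real.log (n : ℝ)) atTop atTop :=
    Real.tendsto_log_atTop.comp tendsto_natCast_atTop_atTop
  have hllT : Tendsto (fun n : ℕ => Real.log (Real.log (n : ℝ))) atTop atTop :=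
    Real.tendsto_log_atTop.comp hlogT
  have hlim : Tendsto (fun n : ℕ => ENNReal.ofReal
      ((2 * Real.exp 1 * M * (k - j).factorial) * Real.exp (-(Real.log (Real.log n) / 2))))
      atTop (nhds 0) := by
    rw [← ENNReal.ofReal_zero]
    refine ENNReal.tendsto_ofReal ?_
    rw [← mul_zero (2 * Real.exp 1 * M * (k - j).factorial)]
    refine Tendsto.const_mul _ (Real.tendsto_exp_neg_atTop_nhds_zero.comp ?_)
    exact hllT.atTop_div_const (by norm_num)
  set D : ℝ := (((k - j) * (k + (k - j)) : ℕ) : ℝ) with hD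
  have hD0 : 0 ≤ D := by positivity
  have hlo : Tendsto (fun n : ℕ => Real.log (n : ℝ) / n) atTop (nhds 0) :=
    (Real.isLittleO_log_id_atTop.tendsto_div_nhds_zero).comp tendsto_natCast_atTop_atTop
  have hlo1 : Tendsto (fun n : ℕ => (j + 2 : ℝ) * D * (Real.log (n : ℝ) / n)) atTop (nhds 0) := by
    simpa using hlo.const_mul ((j + 2 : ℝ) * D)
  have hlo2 : Tendsto (fun n : ℕ => D / (n : ℝ)) atTop (nhds 0) :=
    tendsto_const_div_atTop_nhds_zero_nat D
  have hev : ∀ᶠ n : ℕ in atTop, birthMeasure n {t : Finset (Fin n) → ℝ |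
      ∀ p : ℝ, pbar k j n ≤ p →
        ∀ K : Finset (Fin n), IsLocalObstacle (complexAt k n t p) k j K →
          IsLocalObstacle (complexAt k n t (pbar k j n)) k j K}ᶜ ≤ ENNReal.ofReal
      ((2 * Real.exp 1 * M * (k - j).factorial) * Real.exp (-(Real.log (Real.log n) / 2))) := by
    filter_upwards [eventually_gt_atTop 0, eventually_ge_atTop (k + (k - j)),
      hlogT.eventually_ge_atTop 1, hlo1.eventually_le_const (by norm_num : (0 : ℝ) < 1),
      hlo2.eventually_le_const (by norm_num : (0 : ℝ) < 1 / 2)] with n hn hc hl h1 h2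
    refine (measure_bad hk hjk _).trans (ENNReal.ofReal_le_ofReal ?_)
    refine real_bound hjk hn hc hl h2 ?_ M (by positivity)
    refine le_trans ?_ h1
    have hll : Real.log (Real.log n) ≤ Real.log n := Real.log_le_self (by linarith)
    have hdn : 0 ≤ D / (n : ℝ) := by positivity
    calc _ ≤ ((j + 2 : ℝ) * Real.log n) * (D / n) := by
          refine mul_le_mul_of_nonneg_right ?_ hdn
          linarith
      _ = _ := by ring
  have hT := tendsto_of_tendsto_of_tendsto_of_le_of_le' tendsto_const_nhds hlim
    (Eventually.of_forall fun n => zero_le) hev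
  have hT1 := ENNReal.Tendsto.sub (tendsto_const_nhds (x := (1 : ENNReal))) hT
    (Or.inl ENNReal.one_ne_top)
  rw [tsub_zero] at hT1
  refine tendsto_of_tendsto_of_tendsto_of_le_of_le hT1 tendsto_const_nhds ?_ ?_
  · intro n
    refine tsub_le_iff_right.2 ?_
    have := hprob n
    rw [← measure_univ (μ := birthMeasure n), ← Set.union_compl_self {t : Finset (Fin n) → ℝ |
      ∀ p : ℝ, pbar k j n ≤ p →
        ∀ K : Finset (Fin n), IsLocalObstacle (complexAt k n t p) k j K →
          IsLocalObstacle (complexAt k n t (pbar k j n)) k j K}]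
    exact measure_union_le _ _
  · intro n
    have := hprob n
    exact prob_le_one

end RSC
end

section
/- Let k ≥ 2 and j ∈ {1,…,k−1}. With high probability, for all p ≥ p_{M_j} simultaneously, there are no copies of M_j^- in G_p. -/
open MeasureTheory Filter

attribute [local instance] Classical.propDecidable

namespace RSC

variable {V : Type*}

theorem mem_complexAt_of_card {k n : ℕ} (hk : 1 ≤ k) {t : Finset (Fin n) → ℝ} {p : ℝ}
    {K : Finset (Fin n)} (h : IsSimplex (complexAt k n t p) k K) : t K ≤ p := by
  obtain ⟨h1, h2⟩ := h
  rcases h1 with ⟨v, rfl⟩ | ⟨_, K', h3, h4, h5⟩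
  · simp at h2; omega
  · have : K = K' := Finset.eq_of_subset_of_card_le h5 (by omega)
    rwa [this]

theorem isSimplex_of_le {k n : ℕ} {t : Finset (Fin n) → ℝ} {p : ℝ}
    {K : Finset (Fin n)} (hc : K.card = k + 1) (h : t K ≤ p) :
    IsSimplex (complexAt k n t p) k K :=
  ⟨Or.inr ⟨Finset.card_pos.1 (by omega), K, hc, h, Finset.Subset.refl _⟩, hc⟩

theorem even_boundary {V : Type*} (A τ : Finset V) (j : ℕ) (hA : A.card = j + 2)
    (hτ : τ.card = j) :
    Even ((Finset.powersetCard (j + 1) A).filter (fun σ => τ ⊆ σ)).card := by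
  by_cases h : τ ⊆ A
  · have : (Finset.powersetCard (j + 1) A).filter (fun σ => τ ⊆ σ)
        = (A \ τ).image (fun x => insert x τ) := by
      ext σ
      simp only [Finset.mem_filter, Finset.mem_powersetCard, Finset.mem_image, Finset.mem_sdiff]
      constructor
      · rintro ⟨⟨h1, h2⟩, h3⟩
        have h4 : (σ \ τ).card = 1 := by
          rw [Finset.card_sdiff_of_subset h3]; omega
        obtain ⟨x, hx⟩ := Finset.card_eq_one.1 h4
        have hx' : x ∈ σ \ τ := by rw [hx]; simp
        rw [Finset.mem_sdiff] at hx'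
        refine ⟨x, ⟨h1 hx'.1, hx'.2⟩, ?_⟩
        refine Finset.eq_of_subset_of_card_le (Finset.insert_subset hx'.1 h3) ?_
        rw [Finset.card_insert_of_notMem hx'.2]; omega
      · rintro ⟨x, ⟨h1, h2⟩, rfl⟩
        refine ⟨⟨Finset.insert_subset h1 h, ?_⟩, Finset.subset_insert _ _⟩
        rw [Finset.card_insert_of_notMem h2, hτ]
    rw [this, Finset.card_image_of_injOn, Finset.card_sdiff_of_subset h, hA, hτ]
    · simp
    · intro x hx y hy hxy
      simp only [Finset.coe_sdiff, Set.mem_sdiff, Finset.mem_coe] at hx hy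
      have : x ∈ insert y τ := by
        have h0 : x ∈ insert x τ := Finset.mem_insert_self _ _
        simp only at hxy
        rwa [hxy] at h0
      rcases Finset.mem_insert.1 this with h | h
      · exact h
      · exact absurd h hx.2
  · rw [Finset.filter_eq_empty_iff.2]
    · simp
    · intro σ hσ h'
      exact h (h'.trans (Finset.mem_powersetCard.1 hσ).1)

/-- Every potential petal can be completed to a shell at time `p0`. -/
def Good2 (k j n : ℕ) (p0 : ℝ) (t : Finset (Fin n) → ℝ) : Prop :=
  ∀ S K : Finset (Fin n), S ⊆ K → S.card = j + 1 → K.card = k + 1 →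
    ∃ a, a ∉ K ∧ ∀ s ∈ S, ∃ K' : Finset (Fin n), K'.card = k + 1 ∧
      insert a (S.erase s) ⊆ K' ∧ t K' ≤ p0

def Good1 (k j n : ℕ) (p0 : ℝ) (t : Finset (Fin n) → ℝ) : Prop :=
  ∃ K : Finset (Fin n), K.card = k + 1 ∧ t K ≤ p0 ∧
    ∀ K' : Finset (Fin n), K'.card = k + 1 → K' ≠ K → j + 1 ≤ (K ∩ K').card → p0 < t K'

theorem extend_Mj {k j n : ℕ} (hjk : j < k) {p0 p : ℝ} (hp : p0 ≤ p)
    {t : Finset (Fin n) → ℝ} (h2 : Good2 k j n p0 t) {K C : Finset (Fin n)}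
    (h : IsMjMinus (complexAt k n t p) k j K C) :
    ∃ J, IsMj (complexAt k n t p) k j K C J := by
  have h' := h
  obtain ⟨hK, hCG, hCc, hCK, hfl⟩ := h
  have hKc : K.card = k + 1 := hK.2
  have hKt : t K ≤ p := mem_complexAt_of_card (by omega) hK
  obtain ⟨w, hw⟩ : (K \ C).Nonempty := by
    rw [← Finset.card_pos, Finset.card_sdiff_of_subset hCK]; omega
  have hw' := Finset.mem_sdiff.1 hw
  have hSc : (insert w C).card = j + 1 := by
    rw [Finset.card_insert_of_notMem hw'.2, hCc]
  have hSK : insert w C ⊆ K := Finset.insert_subset hw'.1 hCK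
  obtain ⟨a, haK, ha⟩ := h2 (insert w C) K hSK hSc hKc
  have haS : a ∉ insert w C := fun h => haK (hSK h)
  have hAc : (insert a (insert w C)).card = j + 2 := by
    rw [Finset.card_insert_of_notMem haS, hSc]
  refine ⟨Finset.powersetCard (j + 1) (insert a (insert w C)), h', ⟨?_, ?_⟩, ?_⟩
  · intro σ hσ
    obtain ⟨hσ1, hσ2⟩ := Finset.mem_powersetCard.1 hσ
    refine ⟨?_, hσ2⟩
    have hne : σ.Nonempty := Finset.card_pos.1 (by omega)
    by_cases haσ : a ∈ σ
    · have : ∃ s ∈ insert w C, s ∉ σ := by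
        by_contra hcon
        push Not at hcon
        have : insert a (insert w C) ⊆ σ := Finset.insert_subset haσ hcon
        have := Finset.card_le_card this
        omega
      obtain ⟨s, hs, hsσ⟩ := this
      obtain ⟨K', hK'c, hK's, hK't⟩ := ha s hs
      refine Or.inr ⟨hne, K', hK'c, hK't.trans hp, ?_⟩
      refine Finset.Subset.trans ?_ hK's
      intro x hx
      rcases Finset.mem_insert.1 (hσ1 hx) with h | h
      · rw [h]; exact Finset.mem_insert_self _ _
      · refine Finset.mem_insert_of_mem (Finset.mem_erase.2 ⟨?_, h⟩)
        rintro rfl; exact hsσ hx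
    · refine Or.inr ⟨hne, K, hKc, hKt, ?_⟩
      intro x hx
      rcases Finset.mem_insert.1 (hσ1 hx) with h | h
      · rw [h] at hx; exact absurd hx haσ
      · exact hSK h
  · intro τ hτ
    exact even_boundary _ τ j hAc hτ
  · refine ⟨insert w C, ⟨Finset.mem_powersetCard.2 ⟨Finset.subset_insert _ _, hSc⟩, w, hw, rfl⟩, ?_⟩
    rintro P ⟨hP1, w', hw1, rfl⟩
    have hw2 := Finset.mem_sdiff.1 hw1
    have h3 := (Finset.mem_powersetCard.1 hP1).1 (Finset.mem_insert_self w' C)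
    rcases Finset.mem_insert.1 h3 with h | h
    · rw [h] at hw2; exact absurd hw2.1 haK
    · rcases Finset.mem_insert.1 h with h | h
      · rw [h]
      · exact absurd h hw2.2

theorem deterministic {k j n : ℕ} (hj : 1 ≤ j) (hjk : j < k) (hn : k + 2 ≤ n) {p0 : ℝ}
    (hp0 : 0 ≤ p0) (hp1 : p0 ≤ 1)
    {t : Finset (Fin n) → ℝ} (h0 : ∀ K, t K ≤ 1) (h1 : Good1 k j n p0 t) (h2 : Good2 k j n p0 t)
    (p : ℝ) (hp : pMj k j n t ≤ p) (K C : Finset (Fin n)) :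
    ¬ IsMjMinus (complexAt k n t p) k j K C := by
  intro hM
  have hbdd : BddAbove {p : ℝ | p ∈ Set.Icc (0 : ℝ) 1 ∧
    ∃ K C J, IsMj (complexAt k n t p) k j K C J} := ⟨1, fun x hx => hx.1.2⟩
  have hpp : p0 ≤ pMj k j n t := by
    obtain ⟨K, hKc, hKt, hK⟩ := h1
    obtain ⟨C, hCK, hCc⟩ := Finset.exists_subset_card_eq (s := K) (n := j) (by omega)
    have : IsMjMinus (complexAt k n t p0) k j K C := by
      refine ⟨isSimplex_of_le hKc hKt, Or.inr ⟨Finset.card_pos.1 (by omega), K, hKc, hKt, hCK⟩,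
        hCc, hCK, ?_⟩
      rintro P ⟨w, hw, rfl⟩ K' hK' hPK'
      have hw' := Finset.mem_sdiff.1 hw
      by_contra hne
      have h3 : insert w C ⊆ K ∩ K' :=
        Finset.subset_inter (Finset.insert_subset hw'.1 hCK) hPK'
      have h4 := Finset.card_le_card h3
      rw [Finset.card_insert_of_notMem hw'.2, hCc] at h4
      have h5 := hK K' hK'.2 hne h4
      have h6 := mem_complexAt_of_card (by omega) hK'
      linarith
    obtain ⟨J, hJ⟩ := extend_Mj hjk le_rfl h2 this
    exact le_csSup hbdd ⟨⟨hp0, hp1⟩, K, C, J, hJ⟩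
  rcases lt_or_ge p 1 with hlt | hge
  · obtain ⟨J, hJ⟩ := extend_Mj hjk (hpp.trans hp) h2 hM
    have hev : ∀ᶠ q in nhdsWithin p (Set.Ioi p), ∀ K, (t K ≤ q ↔ t K ≤ p) := by
      rw [Filter.eventually_all]
      intro K
      rcases le_or_gt (t K) p with h | h
      · filter_upwards [self_mem_nhdsWithin] with q hq
        exact ⟨fun _ => h, fun _ => h.trans (le_of_lt hq)⟩
      · filter_upwards [Ioo_mem_nhdsGT h] with q hq
        exact ⟨fun h' => absurd h' (not_le.2 hq.2), fun h' => absurd h' (not_le.2 h)⟩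
    obtain ⟨q, hq, hq'⟩ := (hev.and (Ioo_mem_nhdsGT hlt)).exists
    have hG : complexAt k n t q = complexAt k n t p := by
      unfold complexAt
      simp only [hq]
    have : q ≤ pMj k j n t := by
      refine le_csSup hbdd ⟨⟨?_, hq'.2.le⟩, K, C, J, ?_⟩
      · linarith [hq'.1]
      · rw [hG]; exact hJ
    linarith [hq'.1]
  · obtain ⟨hK, hCG, hCc, hCK, hfl⟩ := hM
    have hKc : K.card = k + 1 := hK.2
    obtain ⟨w, hw⟩ : (K \ C).Nonempty := by
      rw [← Finset.card_pos, Finset.card_sdiff_of_subset hCK]; omega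
    have hw' := Finset.mem_sdiff.1 hw
    have hSc : (insert w C).card = j + 1 := by
      rw [Finset.card_insert_of_notMem hw'.2, hCc]
    have hSK : insert w C ⊆ K := Finset.insert_subset hw'.1 hCK
    obtain ⟨u, hu⟩ : (K \ insert w C).Nonempty := by
      rw [← Finset.card_pos, Finset.card_sdiff_of_subset hSK]; omega
    have hu' := Finset.mem_sdiff.1 hu
    obtain ⟨v, hv⟩ : ∃ v, v ∉ K := by
      by_contra hcon
      push Not at hcon
      have : K = Finset.univ := Finset.eq_univ_iff_forall.2 hcon
      rw [this, Finset.card_univ, Fintype.card_fin] at hKc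
      omega
    have hK'c : (insert v (K.erase u)).card = k + 1 := by
      rw [Finset.card_insert_of_notMem (fun h => hv (Finset.mem_of_mem_erase h)),
        Finset.card_erase_of_mem hu'.1]; omega
    have := hfl (insert w C) ⟨w, hw, rfl⟩ (insert v (K.erase u))
      (isSimplex_of_le hK'c ((h0 _).trans hge)) (by
        intro x hx
        refine Finset.mem_insert_of_mem (Finset.mem_erase.2 ⟨?_, hSK hx⟩)
        rintro rfl; exact hu'.2 hx)
    exact hv (this ▸ Finset.mem_insert_self _ _)

/-- The event `E` is determined by the coordinates in `S`. -/
def Dep {ι : Type*} (E : Set (ι → ℝ)) (S : Finset ι) : Prop :=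
  ∀ x y : ι → ℝ, (∀ i ∈ S, x i = y i) → x ∈ E → y ∈ E

theorem Dep.compl {ι : Type*} {E : Set (ι → ℝ)} {S : Finset ι} (h : Dep E S) : Dep Eᶜ S :=
  fun x y hxy hx hy => hx (h y x (fun i hi => (hxy i hi).symm) hy)

theorem Dep.mono {ι : Type*} {E : Set (ι → ℝ)} {S S' : Finset ι} (h : Dep E S) (hs : S ⊆ S') :
    Dep E S' :=
  fun x y hxy hx => h x y (fun i hi => hxy i (hs hi)) hx

theorem Dep.iInter {ι α : Type*} {E : α → Set (ι → ℝ)} {S : Finset ι} (h : ∀ a, Dep (E a) S) :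
    Dep (⋂ a, E a) S := by
  intro x y hxy hx
  rw [Set.mem_iInter] at hx ⊢
  exact fun a => h a x y hxy (hx a)

section Indep

variable {ι : Type*} [Fintype ι] (ν : Measure ℝ) [IsProbabilityMeasure ν]

theorem indep_two {E F : Set (ι → ℝ)} {S S' : Finset ι} (hE : MeasurableSet E)
    (hF : MeasurableSet F) (hES : Dep E S) (hFS : Dep F S') (hd : Disjoint S S') :
    (Measure.pi fun _ : ι => ν).real (E ∩ F)
      = (Measure.pi fun _ : ι => ν).real E * (Measure.pi fun _ : ι => ν).real F := by
  have h1 : ProbabilityTheory.iIndepFun (fun (i : ι) (t : ι → ℝ) => t i)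
      (Measure.pi fun _ : ι => ν) :=
    ProbabilityTheory.iIndepFun_pi (X := fun _ => id) (fun _ => aemeasurable_id)
  have h2 := h1.indepFun_finset S S' hd (fun i => measurable_pi_apply i)
  have key : ∀ (E : Set (ι → ℝ)) (S : Finset ι), MeasurableSet E → Dep E S →
      MeasurableSet {y : S → ℝ | (fun i => if h : i ∈ S then y ⟨i, h⟩ else 0) ∈ E} ∧
      E = (fun (t : ι → ℝ) (i : S) => t i) ⁻¹'
        {y : S → ℝ | (fun i => if h : i ∈ S then y ⟨i, h⟩ else 0) ∈ E} := by
    intro E S hE hES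
    constructor
    · have : Measurable (fun (y : S → ℝ) (i : ι) => if h : i ∈ S then y ⟨i, h⟩ else 0) := by
        rw [measurable_pi_iff]
        intro i
        by_cases h : i ∈ S
        · simp only [h, dif_pos]
          exact measurable_pi_apply _
        · simp only [h]
          exact measurable_const
      exact this hE
    · ext x
      simp only [Set.mem_preimage, Set.mem_ofPred_eq]
      constructor
      · exact hES _ _ (fun i hi => by simp [hi])
      · exact hES _ _ (fun i hi => by simp [hi])
  obtain ⟨hE1, hE2⟩ := key E S hE hES
  obtain ⟨hF1, hF2⟩ := key F S' hF hFS
  have h3 := h2.measure_inter_preimage_eq_mul _ _ hE1 hF1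
  rw [← hE2, ← hF2] at h3
  simp only [Measure.real]
  rw [h3, ENNReal.toReal_mul]

theorem indep_many {α : Type*} [Fintype α] {E : α → Set (ι → ℝ)} {S : α → Finset ι}
    (hE : ∀ a, MeasurableSet (E a)) (hS : ∀ a, Dep (E a) (S a))
    (hd : ∀ a b, a ≠ b → Disjoint (S a) (S b)) :
    (Measure.pi fun _ : ι => ν).real (⋂ a, E a)
      = ∏ a, (Measure.pi fun _ : ι => ν).real (E a) := by
  have key : ∀ T : Finset α, (Measure.pi fun _ : ι => ν).real (⋂ a ∈ T, E a)
      = ∏ a ∈ T, (Measure.pi fun _ : ι => ν).real (E a) := by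
    intro T
    induction T using Finset.induction_on with
    | empty => simp
    | insert a T ha ih =>
      rw [Finset.prod_insert ha, Finset.set_biInter_insert, ← ih]
      refine indep_two ν (S := S a) (S' := T.biUnion S) (hE a)
        (Finset.measurableSet_biInter _ fun b _ => hE b) (hS a) ?_ ?_
      · intro x y hxy hx
        rw [Set.mem_iInter₂] at hx ⊢
        intro b hb
        exact hS b x y (fun i hi => hxy i (Finset.mem_biUnion.2 ⟨b, hb, hi⟩)) (hx b hb)
      · rw [Finset.disjoint_biUnion_right]
        intro b hb
        exact hd a b (by rintro rfl; exact ha hb)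
  have := key Finset.univ
  simpa using this

theorem three_level {α σ ρ : Type*} [Fintype α] [Fintype σ] [Fintype ρ]
    (φ : α → σ → ρ → ι) (hφ : ∀ a s r a' s' r', φ a s r = φ a' s' r' → a = a' ∧ s = s' ∧ r = r')
    (p q : ℝ) (hq : ∀ i : ι, (Measure.pi fun _ : ι => ν).real {t | p < t i} = q) :
    (Measure.pi fun _ : ι => ν).real {t | ∀ a, ∃ s, ∀ r, p < t (φ a s r)}
      = (1 - (1 - q ^ Fintype.card ρ) ^ Fintype.card σ) ^ Fintype.card α := by
  have m0 : ∀ i : ι, MeasurableSet {t : ι → ℝ | p < t i} := fun i =>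
    measurableSet_lt measurable_const (measurable_pi_apply i)
  have d0 : ∀ i : ι, Dep {t : ι → ℝ | p < t i} {i} := by
    intro i x y hxy hx
    simp only [Set.mem_ofPred_eq, Finset.mem_singleton, forall_eq] at *
    rwa [← hxy]
  have m1 : ∀ a s, MeasurableSet (⋂ r, {t : ι → ℝ | p < t (φ a s r)}) := fun a s =>
    MeasurableSet.iInter fun r => m0 _
  have d1 : ∀ a s, Dep (⋂ r, {t : ι → ℝ | p < t (φ a s r)})
      (Finset.univ.image (φ a s)) := fun a s =>
    Dep.iInter fun r => (d0 _).mono (by simp)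
  have e1 : ∀ a s, (Measure.pi fun _ : ι => ν).real (⋂ r, {t : ι → ℝ | p < t (φ a s r)})
      = q ^ Fintype.card ρ := by
    intro a s
    rw [indep_many ν (fun r => m0 _) (fun r => d0 (φ a s r))]
    · simp [hq]
    · intro r r' hr
      rw [Finset.disjoint_singleton]
      exact fun h => hr (hφ _ _ _ _ _ _ h).2.2
  have m2 : ∀ a, MeasurableSet (⋂ s, (⋂ r, {t : ι → ℝ | p < t (φ a s r)})ᶜ) := fun a =>
    MeasurableSet.iInter fun s => (m1 a s).compl
  have d2 : ∀ a, Dep (⋂ s, (⋂ r, {t : ι → ℝ | p < t (φ a s r)})ᶜ)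
      (Finset.univ.image (fun x : σ × ρ => φ a x.1 x.2)) := fun a =>
    Dep.iInter fun s => (d1 a s).compl.mono (by
      intro i hi
      simp only [Finset.mem_image, Finset.mem_univ, true_and] at hi ⊢
      obtain ⟨r, hr⟩ := hi
      exact ⟨(s, r), hr⟩)
  have e2 : ∀ a, (Measure.pi fun _ : ι => ν).real
      (⋂ s, (⋂ r, {t : ι → ℝ | p < t (φ a s r)})ᶜ)
      = (1 - q ^ Fintype.card ρ) ^ Fintype.card σ := by
    intro a
    rw [indep_many ν (fun s => (m1 a s).compl) (fun s => (d1 a s).compl)]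
    · simp only [probReal_compl_eq_one_sub (m1 _ _), e1, Finset.prod_const, Finset.card_univ]
    · intro s s' hs
      rw [Finset.disjoint_left]
      intro i hi hi'
      simp only [Finset.mem_image, Finset.mem_univ, true_and] at hi hi'
      obtain ⟨r, hr⟩ := hi
      obtain ⟨r', hr'⟩ := hi'
      exact hs (hφ _ _ _ _ _ _ (hr.trans hr'.symm)).2.1
  have e3 : {t : ι → ℝ | ∀ a, ∃ s, ∀ r, p < t (φ a s r)}
      = ⋂ a, (⋂ s, (⋂ r, {t : ι → ℝ | p < t (φ a s r)})ᶜ)ᶜ := by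
    ext t
    simp
  rw [e3, indep_many ν (fun a => (m2 a).compl) (fun a => (d2 a).compl)]
  · simp only [probReal_compl_eq_one_sub (m2 _), e2, Finset.prod_const, Finset.card_univ]
  · intro s s' hs
    rw [Finset.disjoint_left]
    intro i hi hi'
    simp only [Finset.mem_image, Finset.mem_univ, true_and] at hi hi'
    obtain ⟨r, hr⟩ := hi
    obtain ⟨r', hr'⟩ := hi'
    exact hs (hφ _ _ _ _ _ _ (hr.trans hr'.symm)).1

end Indep

instance probUnit : IsProbabilityMeasure (volume.restrict (Set.Icc (0 : ℝ) 1)) :=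
  ⟨by simp⟩

instance probBirth (n : ℕ) : IsProbabilityMeasure (birthMeasure n) := by
  unfold birthMeasure; infer_instance

theorem coord_le (n : ℕ) (K : Finset (Fin n)) {p : ℝ} (h0 : 0 ≤ p) (h1 : p ≤ 1) :
    (birthMeasure n).real {t | t K ≤ p} = p := by
  have h := (measurePreserving_eval (fun _ : Finset (Fin n) =>
    volume.restrict (Set.Icc (0 : ℝ) 1)) K).measure_preimage
      (measurableSet_Iic (a := p)).nullMeasurableSet
  have e : (Set.Iic p ∩ Set.Icc (0 : ℝ) 1) = Set.Icc 0 p := by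
    ext x; simp only [Set.mem_inter_iff, Set.mem_Iic, Set.mem_Icc]
    constructor
    · rintro ⟨a, b, c⟩; exact ⟨b, a⟩
    · rintro ⟨a, b⟩; exact ⟨b, a, b.trans h1⟩
  rw [Measure.restrict_apply measurableSet_Iic, e, Real.volume_Icc] at h
  unfold birthMeasure Measure.real
  have e2 : {t : Finset (Fin n) → ℝ | t K ≤ p} = Function.eval K ⁻¹' Set.Iic p := rfl
  rw [e2, h]
  simp [h0]

theorem coord_gt (n : ℕ) (K : Finset (Fin n)) {p : ℝ} (h0 : 0 ≤ p) (h1 : p ≤ 1) :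
    (birthMeasure n).real {t | p < t K} = 1 - p := by
  have : {t : Finset (Fin n) → ℝ | p < t K} = {t | t K ≤ p}ᶜ := by ext; simp
  rw [this, probReal_compl_eq_one_sub, coord_le n K h0 h1]
  exact measurableSet_le (measurable_pi_apply K) measurable_const

theorem bad0 (n : ℕ) : (birthMeasure n).real {t | ¬ ∀ K, t K ≤ 1} = 0 := by
  have : {t : Finset (Fin n) → ℝ | ¬ ∀ K, t K ≤ 1} = ⋃ K, {t | 1 < t K} := by
    ext; simp
  rw [this]
  refine le_antisymm ((measureReal_iUnion_fintype_le _).trans ?_) measureReal_nonneg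
  simp [coord_gt n _ zero_le_one le_rfl]

theorem card_near {n : ℕ} (k j : ℕ) (hjk : j < k) (K : Finset (Fin n)) (hK : K.card = k + 1) :
    (Finset.univ.filter (fun K' : Finset (Fin n) =>
      K'.card = k + 1 ∧ j + 1 ≤ (K ∩ K').card)).card ≤ 2 ^ (k + 1) * n ^ (k - j) := by
  have : Finset.univ.filter (fun K' : Finset (Fin n) =>
      K'.card = k + 1 ∧ j + 1 ≤ (K ∩ K').card) ⊆
      (K.powerset ×ˢ Finset.powersetCard (k - j) (Finset.univ : Finset (Fin n))).image
        (fun x => x.1 ∪ x.2) := by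
    intro K' hK'
    simp only [Finset.mem_filter, Finset.mem_univ, true_and] at hK'
    obtain ⟨P, hP, hPc⟩ := Finset.exists_subset_card_eq hK'.2
    have hPK := hP.trans Finset.inter_subset_left
    have hPK' := hP.trans Finset.inter_subset_right
    rw [Finset.mem_image]
    refine ⟨(P, K' \ P), ?_, Finset.union_sdiff_of_subset hPK'⟩
    rw [Finset.mem_product, Finset.mem_powerset, Finset.mem_powersetCard]
    refine ⟨hPK, Finset.subset_univ _, ?_⟩
    simp only
    rw [Finset.card_sdiff_of_subset hPK']; omega
  refine (Finset.card_le_card this).trans (Finset.card_image_le.trans ?_)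
  rw [Finset.card_product, Finset.card_powerset, Finset.card_powersetCard, hK, Finset.card_univ,
    Fintype.card_fin]
  exact Nat.mul_le_mul_left _ (Nat.choose_le_pow _ _)

theorem bad1 {k j n m : ℕ} (hjk : j < k) (hm : m ≤ n.choose (k + 1)) {p : ℝ}
    (h0 : 0 ≤ p) (h1 : p ≤ 1) :
    (birthMeasure n).real {t | ¬ Good1 k j n p t} ≤
      (1 - p) ^ m + m * (2 ^ (k + 1) * n ^ (k - j)) * p ^ 2 := by
  obtain ⟨B, hB, hBc⟩ := Finset.exists_subset_card_eq
    (s := Finset.powersetCard (k + 1) (Finset.univ : Finset (Fin n))) (n := m) (by simpa using hm)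
  have hB' : ∀ K ∈ B, K.card = k + 1 := fun K hK => (Finset.mem_powersetCard.1 (hB hK)).2
  have m0 : ∀ i : Finset (Fin n), MeasurableSet {t : Finset (Fin n) → ℝ | p < t i} := fun i =>
    measurableSet_lt measurable_const (measurable_pi_apply i)
  have d0 : ∀ i : Finset (Fin n), Dep {t : Finset (Fin n) → ℝ | p < t i} {i} := by
    intro i x y hxy hx
    simp only [Set.mem_ofPred_eq, Finset.mem_singleton, forall_eq] at *
    rwa [← hxy]
  let N : Finset (Fin n) → Finset (Finset (Fin n)) := fun K =>
    (Finset.univ.filter (fun K' : Finset (Fin n) => K'.card = k + 1 ∧ j + 1 ≤ (K ∩ K').card)).erase K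
  have hsub : {t : Finset (Fin n) → ℝ | ¬ Good1 k j n p t} ⊆
      (⋂ K : B, {t | p < t K}) ∪ ⋃ K ∈ B, ⋃ K' ∈ N K, ({t | p < t K}ᶜ ∩ {t | p < t K'}ᶜ) := by
    intro t ht
    by_contra hcon
    apply ht
    simp only [Set.mem_union, Set.mem_iInter, Set.mem_iUnion, not_or, not_forall, not_exists,
      Set.mem_ofPred_eq, Set.mem_inter_iff, Set.mem_compl_iff, not_lt, not_and] at hcon
    obtain ⟨⟨K, hK⟩, hcon2⟩ := hcon
    refine ⟨K, hB' _ K.2, hK, fun K' h1 h2 h3 => ?_⟩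
    have := hcon2 K K.2 K' (by simp [N, h1, h2]; omega) hK
    exact not_le.1 this
  refine (measureReal_mono hsub).trans ((measureReal_union_le _ _).trans (add_le_add ?_ ?_))
  · have h := indep_many (volume.restrict (Set.Icc (0 : ℝ) 1)) (fun K : B => m0 K)
      (fun K => d0 K) (by
        intro a b hab
        rw [Finset.disjoint_singleton]
        exact fun h => hab (Subtype.ext h))
    change (birthMeasure n).real _ = ∏ a, (birthMeasure n).real _ at h
    rw [h]
    simp [coord_gt n _ h0 h1, hBc]
  · refine (measureReal_biUnion_finset_le _ _).trans ?_
    have : ∀ K ∈ B, (birthMeasure n).real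
        (⋃ K' ∈ N K, ({t | p < t K}ᶜ ∩ {t | p < t K'}ᶜ)) ≤ (2 ^ (k + 1) * n ^ (k - j)) * p ^ 2 := by
      intro K hK
      refine (measureReal_biUnion_finset_le _ _).trans ?_
      have h2 : ∀ K' ∈ N K, (birthMeasure n).real ({t | p < t K}ᶜ ∩ {t | p < t K'}ᶜ) ≤ p ^ 2 := by
        intro K' hK'
        have h := indep_two (volume.restrict (Set.Icc (0 : ℝ) 1)) (m0 K).compl (m0 K').compl
          (d0 K).compl (d0 K').compl (by
            rw [Finset.disjoint_singleton]
            exact (Finset.ne_of_mem_erase hK').symm)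
        change (birthMeasure n).real _ = (birthMeasure n).real _ * (birthMeasure n).real _ at h
        rw [h, probReal_compl_eq_one_sub (m0 K), probReal_compl_eq_one_sub (m0 K'),
          coord_gt n _ h0 h1, coord_gt n _ h0 h1]
        apply le_of_eq; ring
      refine (Finset.sum_le_card_nsmul _ _ _ h2).trans ?_
      rw [nsmul_eq_mul]
      refine mul_le_mul_of_nonneg_right ?_ (sq_nonneg _)
      have h3 := (Finset.card_le_card (Finset.erase_subset K _)).trans (card_near k j hjk K (hB' K hK))
      exact_mod_cast h3
    refine (Finset.sum_le_card_nsmul _ _ _ this).trans ?_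
    rw [nsmul_eq_mul, hBc]
    apply le_of_eq; ring

theorem bad2_single {k j n h : ℕ} (hjk : j < k) (hh : 2 * h + (k + 1) ≤ n) {p : ℝ}
    (h0 : 0 ≤ p) (h1 : p ≤ 1) (S K : Finset (Fin n)) (hSK : S ⊆ K) (hS : S.card = j + 1)
    (hK : K.card = k + 1) :
    (birthMeasure n).real {t | ¬ ∃ a, a ∉ K ∧ ∀ s ∈ S, ∃ K' : Finset (Fin n), K'.card = k + 1 ∧
      insert a (S.erase s) ⊆ K' ∧ t K' ≤ p} ≤
      (1 - (1 - (1 - p) ^ (h.choose (k - j))) ^ (j + 1)) ^ h := by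
  have hKc : Kᶜ.card = n - (k + 1) := by rw [Finset.card_compl, Fintype.card_fin, hK]
  obtain ⟨A, hA, hAc⟩ := Finset.exists_subset_card_eq (s := Kᶜ) (n := h) (by omega)
  obtain ⟨R, hR, hRc⟩ := Finset.exists_subset_card_eq (s := Kᶜ \ A) (n := h) (by
    rw [Finset.card_sdiff_of_subset hA]; omega)
  have hAK : ∀ a ∈ A, a ∉ K := fun a ha => Finset.mem_compl.1 (hA ha)
  have hRK : ∀ a ∈ R, a ∉ K := fun a ha => Finset.mem_compl.1 (Finset.mem_sdiff.1 (hR ha)).1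
  have hRA : ∀ a ∈ R, a ∉ A := fun a ha => (Finset.mem_sdiff.1 (hR ha)).2
  let φ : A → S → (Finset.powersetCard (k - j) R : Finset (Finset (Fin n))) → Finset (Fin n) :=
    fun a s r => insert (a : Fin n) (S.erase s) ∪ r
  have hr1 : ∀ r : (Finset.powersetCard (k - j) R : Finset (Finset (Fin n))), (r : Finset (Fin n)) ⊆ R :=
    fun r => (Finset.mem_powersetCard.1 r.2).1
  have hr2 : ∀ r : (Finset.powersetCard (k - j) R : Finset (Finset (Fin n))),
      (r : Finset (Fin n)).card = k - j := fun r => (Finset.mem_powersetCard.1 r.2).2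
  have hmem : ∀ a s r x, x ∈ φ a s r ↔ (x = a ∨ (x ≠ s ∧ x ∈ S)) ∨ x ∈ (r : Finset (Fin n)) := by
    intro a s r x
    simp only [φ, Finset.mem_union, Finset.mem_insert, Finset.mem_erase]
  have hφ : ∀ a s r a' s' r', φ a s r = φ a' s' r' → a = a' ∧ s = s' ∧ r = r' := by
    intro a s r a' s' r' he
    have he' : ∀ x, x ∈ φ a s r ↔ x ∈ φ a' s' r' := fun x => by rw [he]
    simp only [hmem] at he'
    refine ⟨?_, ?_, ?_⟩
    · have := (he' a).1 (Or.inl (Or.inl rfl))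
      rcases this with (h | h) | h
      · exact Subtype.ext h
      · exact absurd (hSK h.2) (hAK a a.2)
      · exact absurd a.2 (hRA _ (hr1 _ h))
    · by_contra hne
      have hne' : (s : Fin n) ≠ s' := fun h => hne (Subtype.ext h)
      have := (he' s).2 (Or.inl (Or.inr ⟨hne', s.2⟩))
      rcases this with (h | h) | h
      · exact absurd (hSK s.2) (h ▸ hAK a a.2)
      · exact h.1 rfl
      · exact absurd (hSK s.2) (hRK _ (hr1 _ h))
    · have key : ∀ (r r' : (Finset.powersetCard (k - j) R : Finset (Finset (Fin n)))) (a' : A)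
          (s' : S) (x : Fin n), x ∈ (r : Finset (Fin n)) →
          ((x = a' ∨ (x ≠ s' ∧ x ∈ S)) ∨ x ∈ (r' : Finset (Fin n))) →
          x ∈ (r' : Finset (Fin n)) := by
        intro r r' a' s' x hx h
        rcases h with (h | h) | h
        · exact absurd a'.2 (h ▸ hRA _ (hr1 _ hx))
        · exact absurd (hSK h.2) (hRK _ (hr1 _ hx))
        · exact h
      apply Subtype.ext
      ext x
      exact ⟨fun hx => key r r' a' s' x hx ((he' x).1 (Or.inr hx)),
        fun hx => key r' r a s x hx ((he' x).2 (Or.inr hx))⟩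
  have h3 := three_level (volume.restrict (Set.Icc (0 : ℝ) 1)) φ hφ p (1 - p)
    (fun i => coord_gt n i h0 h1)
  change (birthMeasure n).real _ = _ at h3
  simp only [Fintype.card_coe, Finset.card_powersetCard, hAc, hRc, hS] at h3
  rw [← h3]
  refine measureReal_mono ?_
  intro t ht a
  by_contra hcon
  push Not at hcon
  apply ht
  refine ⟨a, hAK a a.2, fun s hs => ?_⟩
  obtain ⟨r, hr⟩ := hcon ⟨s, hs⟩
  refine ⟨φ a ⟨s, hs⟩ r, ?_, Finset.subset_union_left, hr⟩
  simp only [φ]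
  rw [Finset.card_union_of_disjoint, hr2, Finset.card_insert_of_notMem, Finset.card_erase_of_mem hs,
    hS]
  · omega
  · exact fun h => hAK a a.2 (hSK (Finset.mem_of_mem_erase h))
  · rw [Finset.disjoint_right]
    intro x hx h
    have hxR := hr1 _ hx
    rcases Finset.mem_insert.1 h with h | h
    · exact hRA _ hxR (h ▸ a.2)
    · exact hRK _ hxR (hSK (Finset.mem_of_mem_erase h))

theorem bad2 {k j n h : ℕ} (hjk : j < k) (hh : 2 * h + (k + 1) ≤ n) {p : ℝ}
    (h0 : 0 ≤ p) (h1 : p ≤ 1) :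
    (birthMeasure n).real {t | ¬ Good2 k j n p t} ≤
      (n : ℝ) ^ (j + k + 2) * (1 - (1 - (1 - p) ^ (h.choose (k - j))) ^ (j + 1)) ^ h := by
  let Q := ((Finset.powersetCard (j + 1) (Finset.univ : Finset (Fin n))) ×ˢ
    (Finset.powersetCard (k + 1) (Finset.univ : Finset (Fin n)))).filter (fun x => x.1 ⊆ x.2)
  have hQ : Q.card ≤ n ^ (j + k + 2) := by
    refine (Finset.card_filter_le _ _).trans ?_
    rw [Finset.card_product, Finset.card_powersetCard, Finset.card_powersetCard, Finset.card_univ,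
      Fintype.card_fin]
    calc _ ≤ n ^ (j + 1) * n ^ (k + 1) :=
          Nat.mul_le_mul (Nat.choose_le_pow _ _) (Nat.choose_le_pow _ _)
      _ = _ := by rw [← pow_add]; congr 1; ring
  have hsub : {t | ¬ Good2 k j n p t} ⊆ ⋃ x ∈ Q, {t | ¬ ∃ a, a ∉ x.2 ∧ ∀ s ∈ x.1,
      ∃ K' : Finset (Fin n), K'.card = k + 1 ∧ insert a (x.1.erase s) ⊆ K' ∧ t K' ≤ p} := by
    intro t ht
    by_contra hcon
    apply ht
    intro S K hSK hS hK
    by_contra hc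
    apply hcon
    rw [Set.mem_iUnion₂]
    refine ⟨(S, K), ?_, hc⟩
    simp only [Q, Finset.mem_filter, Finset.mem_product, Finset.mem_powersetCard]
    exact ⟨⟨⟨Finset.subset_univ _, hS⟩, Finset.subset_univ _, hK⟩, hSK⟩
  refine (measureReal_mono hsub (measure_ne_top _ _)).trans ((measureReal_biUnion_finset_le _ _).trans ?_)
  refine (Finset.sum_le_card_nsmul _ _
    ((1 - (1 - (1 - p) ^ (h.choose (k - j))) ^ (j + 1)) ^ h) ?_).trans ?_
  · rintro ⟨S, K⟩ hx
    simp only [Q, Finset.mem_filter, Finset.mem_product, Finset.mem_powersetCard] at hx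
    exact bad2_single hjk hh h0 h1 S K hx.2 hx.1.1.2 hx.1.2.2
  · rw [nsmul_eq_mul]
    have e1 : (1 - p) ^ (h.choose (k - j)) ≤ 1 := pow_le_one₀ (by linarith) (by linarith)
    have e2 : 0 ≤ (1 - p) ^ (h.choose (k - j)) := pow_nonneg (by linarith) _
    have e3 : (1 - (1 - p) ^ (h.choose (k - j))) ^ (j + 1) ≤ 1 :=
      pow_le_one₀ (by linarith) (by linarith)
    refine mul_le_mul_of_nonneg_right ?_ (pow_nonneg (by linarith) _)
    exact_mod_cast hQ

theorem numeric1 {r k n m : ℕ} {L p : ℝ} (hn : 1 ≤ n) (hL : 1 ≤ L)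
    (hp : p = 1 / ((n : ℝ) ^ r * L ^ 2)) (hm : m = ⌈(n : ℝ) ^ r * L ^ 3⌉₊) :
    (1 - p) ^ m + m * (2 ^ (k + 1) * (n : ℝ) ^ r) * p ^ 2 ≤ Real.exp (-L) + 2 ^ (k + 2) / L := by
  have hx : (1 : ℝ) ≤ (n : ℝ) ^ r := one_le_pow₀ (by exact_mod_cast hn)
  have hL2 : 1 ≤ L ^ 2 := one_le_pow₀ hL
  have hL3 : 1 ≤ L ^ 3 := one_le_pow₀ hL
  set X := (n : ℝ) ^ r with hX
  have hX0 : 0 < X := by linarith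
  have hL0 : 0 < L := by linarith
  have hm1 : X * L ^ 3 ≤ m := by rw [hm]; exact Nat.le_ceil _
  have hm2 : (m : ℝ) ≤ 2 * (X * L ^ 3) := by
    have := (Nat.ceil_lt_add_one (a := X * L ^ 3) (by positivity)).le
    rw [← hm] at this
    nlinarith
  have hp0 : 0 ≤ p := by rw [hp]; positivity
  have hp1 : p ≤ 1 := by
    rw [hp, div_le_one (by positivity)]; nlinarith
  refine add_le_add ?_ ?_
  · calc (1 - p) ^ m ≤ (Real.exp (-p)) ^ m :=
          pow_le_pow_left₀ (by linarith) (Real.one_sub_le_exp_neg p) m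
      _ = Real.exp (-(m * p)) := by rw [← Real.exp_nat_mul]; congr 1; ring
      _ ≤ Real.exp (-L) := by
          apply Real.exp_le_exp.2
          have : L ≤ m * p := by
            calc L = (X * L ^ 3) * p := by rw [hp]; field_simp
              _ ≤ m * p := mul_le_mul_of_nonneg_right hm1 hp0
          linarith
  · calc m * (2 ^ (k + 1) * X) * p ^ 2 ≤ (2 * (X * L ^ 3)) * (2 ^ (k + 1) * X) * p ^ 2 := by
          gcongr
      _ = 2 ^ (k + 2) / L := by
          rw [hp]; field_simp; ring

theorem numeric2 {r j N n h : ℕ} {L p : ℝ} (hn : 8 * (r + 1) ≤ n) (hL : 1 ≤ L)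
    (hLn : L ^ (2 * (j + 1)) = Real.sqrt n) (hh : h = n / 4)
    (hp : p = 1 / ((n : ℝ) ^ r * L ^ 2)) :
    (n : ℝ) ^ N * (1 - (1 - (1 - p) ^ (h.choose r)) ^ (j + 1)) ^ h ≤
      (n : ℝ) ^ N * Real.exp (-((1 / (8 ^ r * (r.factorial : ℝ)) / 2) ^ (j + 1) / 8 * Real.sqrt n)) := by
  have hnR : (8 * ((r : ℝ) + 1)) ≤ n := by exact_mod_cast hn
  have hn0 : (0 : ℝ) < n := by have : (0 : ℝ) ≤ r := Nat.cast_nonneg r; linarith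
  have hx : (1 : ℝ) ≤ (n : ℝ) ^ r := one_le_pow₀ (by exact_mod_cast (by omega : 1 ≤ n))
  have hL2 : 1 ≤ L ^ 2 := one_le_pow₀ hL
  have hL0 : 0 < L := by linarith
  set c : ℝ := 1 / (8 ^ r * (r.factorial : ℝ)) with hc
  have hc0 : 0 < c := by
    have : (0 : ℝ) < r.factorial := by exact_mod_cast Nat.factorial_pos r
    rw [hc]; positivity
  have hc1 : c ≤ 1 := by
    have h1 : (1 : ℝ) ≤ r.factorial := by exact_mod_cast Nat.factorial_pos r
    have h2 : (1 : ℝ) ≤ 8 ^ r := one_le_pow₀ (by norm_num)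
    rw [hc, div_le_one (by positivity)]; nlinarith
  have hp0 : 0 ≤ p := by rw [hp]; positivity
  have hp1 : p ≤ 1 := by
    rw [hp, div_le_one (by positivity)]; nlinarith
  have hM : c * (n : ℝ) ^ r ≤ (h.choose r : ℝ) := by
    have h1 := Nat.pow_le_choose (α := ℝ) r h
    refine le_trans ?_ h1
    have h2 : (n : ℝ) / 8 ≤ ((h + 1 - r : ℕ) : ℝ) := by
      have : n ≤ 8 * (h + 1 - r) := by omega
      have : (n : ℝ) ≤ 8 * ((h + 1 - r : ℕ) : ℝ) := by exact_mod_cast this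
      linarith
    have h3 : ((n : ℝ) / 8) ^ r ≤ ((h + 1 - r : ℕ) : ℝ) ^ r := pow_le_pow_left₀ (by positivity) h2 r
    calc c * (n : ℝ) ^ r = ((n : ℝ) / 8) ^ r / r.factorial := by
          rw [hc, div_pow]; field_simp
      _ ≤ _ := by gcongr
  have hpM : c / L ^ 2 ≤ h.choose r * p := by
    calc c / L ^ 2 = (c * (n : ℝ) ^ r) * p := by rw [hp]; field_simp
      _ ≤ _ := mul_le_mul_of_nonneg_right hM hp0
  have hq : (1 - p) ^ (h.choose r) ≤ 1 - c / 2 / L ^ 2 := by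
    calc (1 - p) ^ (h.choose r) ≤ (Real.exp (-p)) ^ (h.choose r) :=
          pow_le_pow_left₀ (by linarith) (Real.one_sub_le_exp_neg p) _
      _ = Real.exp (-(h.choose r * p)) := by rw [← Real.exp_nat_mul]; congr 1; ring
      _ ≤ Real.exp (-(c / L ^ 2)) := Real.exp_le_exp.2 (by linarith)
      _ ≤ 1 - c / 2 / L ^ 2 := by
          set x := c / L ^ 2 with hx
          have hx0 : 0 ≤ x := by positivity
          have hx1 : x ≤ 1 := by rw [hx, div_le_one (by positivity)]; linarith
          have e1 : c / 2 / L ^ 2 = x / 2 := by rw [hx]; ring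
          rw [e1, Real.exp_neg, inv_le_comm₀ (Real.exp_pos _) (by linarith)]
          have h4 := Real.add_one_le_exp x
          refine le_trans ?_ h4
          rw [inv_le_iff_one_le_mul₀ (by linarith)]
          nlinarith
  have hu0 : 0 ≤ c / 2 / L ^ 2 := by positivity
  have hV : (c / 2) ^ (j + 1) / Real.sqrt n ≤ (1 - (1 - p) ^ (h.choose r)) ^ (j + 1) := by
    calc (c / 2) ^ (j + 1) / Real.sqrt n = (c / 2 / L ^ 2) ^ (j + 1) := by
          rw [← hLn, div_pow (c / 2) (L ^ 2), ← pow_mul]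
      _ ≤ _ := pow_le_pow_left₀ hu0 (by linarith) _
  have hpow0 : 0 ≤ (1 - p) ^ (h.choose r) := pow_nonneg (by linarith) _
  have hV1 : (1 - (1 - p) ^ (h.choose r)) ^ (j + 1) ≤ 1 :=
    pow_le_one₀ (by linarith) (by linarith)
  refine mul_le_mul_of_nonneg_left ?_ (by positivity)
  set v := (1 - (1 - p) ^ (h.choose r)) ^ (j + 1) with hv
  have hs : 0 < Real.sqrt n := Real.sqrt_pos.2 hn0
  calc (1 - v) ^ h ≤ (Real.exp (-v)) ^ h :=
        pow_le_pow_left₀ (by linarith) (Real.one_sub_le_exp_neg v) _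
    _ = Real.exp (-(h * v)) := by rw [← Real.exp_nat_mul]; congr 1; ring
    _ ≤ _ := by
        apply Real.exp_le_exp.2
        have h5 : (n : ℝ) / 8 ≤ h := by
          have : n ≤ 8 * h := by omega
          have : (n : ℝ) ≤ 8 * (h : ℝ) := by exact_mod_cast this
          linarith
        have h6 : (c / 2) ^ (j + 1) / 8 * Real.sqrt n ≤ h * v := by
          calc (c / 2) ^ (j + 1) / 8 * Real.sqrt n
              = ((n : ℝ) / 8) * ((c / 2) ^ (j + 1) / Real.sqrt n) := by
                have := Real.mul_self_sqrt hn0.le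
                field_simp
                rw [sq, this]
            _ ≤ h * v := by gcongr
        linarith

theorem numeric3 {k r n m : ℕ} {L : ℝ} (hr : r < k) (hn : 2 ^ (k + 2) * (k + 1).factorial ≤ n)
    (hn2 : 2 * k ≤ n) (hL : 1 ≤ L)
    (hL3 : L ^ 3 ≤ n) (hm : m = ⌈(n : ℝ) ^ r * L ^ 3⌉₊) : m ≤ n.choose (k + 1) := by
  have hn1 : 1 ≤ n := le_trans (Nat.mul_pos (by positivity) (Nat.factorial_pos _)) hn
  have hn1' : (1 : ℝ) ≤ n := by exact_mod_cast hn1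
  rw [hm, Nat.ceil_le]
  have h1 := Nat.pow_le_choose (α := ℝ) (k + 1) n
  refine le_trans ?_ h1
  have h2 : (n : ℝ) / 2 ≤ ((n + 1 - (k + 1) : ℕ) : ℝ) := by
    have : n ≤ 2 * (n + 1 - (k + 1)) := by omega
    have : (n : ℝ) ≤ 2 * ((n + 1 - (k + 1) : ℕ) : ℝ) := by exact_mod_cast this
    linarith
  have h3 : ((n : ℝ) / 2) ^ (k + 1) ≤ ((n + 1 - (k + 1) : ℕ) : ℝ) ^ (k + 1) :=
    pow_le_pow_left₀ (by positivity) h2 _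
  have hf : (0 : ℝ) < (k + 1).factorial := by exact_mod_cast Nat.factorial_pos _
  rw [le_div_iff₀ hf]
  refine le_trans ?_ h3
  have hn' : (2 : ℝ) ^ (k + 2) * (k + 1).factorial ≤ n := by exact_mod_cast hn
  calc (n : ℝ) ^ r * L ^ 3 * (k + 1).factorial ≤ (n : ℝ) ^ r * n * (k + 1).factorial := by gcongr
    _ = (n : ℝ) ^ (r + 1) * (k + 1).factorial := by ring
    _ ≤ (n : ℝ) ^ k * (k + 1).factorial := by gcongr; omega
    _ ≤ ((n : ℝ) / 2) ^ (k + 1) := by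
        rw [div_pow, le_div_iff₀ (by positivity), pow_succ (n : ℝ) k, mul_assoc]
        gcongr
        rw [pow_succ] at hn'
        have : (0 : ℝ) < 2 ^ (k + 1) * (k + 1).factorial := by positivity
        linarith

theorem tendsto_aux (N : ℕ) {b : ℝ} (hb : 0 < b) :
    Tendsto (fun n : ℕ => (n : ℝ) ^ N * Real.exp (-(b * Real.sqrt n))) atTop (nhds 0) := by
  have h1 : Tendsto (fun n : ℕ => b * Real.sqrt n) atTop atTop :=
    (Real.tendsto_sqrt_atTop.comp tendsto_natCast_atTop_atTop).const_mul_atTop hb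
  have h2 := ((Real.tendsto_pow_mul_exp_neg_atTop_nhds_zero (2 * N)).comp h1).const_mul
    (1 / b ^ (2 * N))
  rw [mul_zero] at h2
  refine h2.congr fun n => ?_
  have : Real.sqrt (n : ℝ) ^ (2 * N) = (n : ℝ) ^ N := by
    rw [pow_mul, Real.sq_sqrt (Nat.cast_nonneg n)]
  simp only [Function.comp]
  rw [mul_pow, this]
  field_simp

/-- Corollary 4.6: whp, for all `p ≥ p_{M_j}` simultaneously, there are no copies of
`M_j^-` in `G_p`. -/
theorem statement12 (k j : ℕ) (hk : 2 ≤ k) (hj : 1 ≤ j) (hjk : j < k) :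
    Tendsto (fun n : ℕ => birthMeasure n {t : Finset (Fin n) → ℝ |
      ∀ p : ℝ, pMj k j n t ≤ p →
        ∀ K C : Finset (Fin n), ¬ IsMjMinus (complexAt k n t p) k j K C})
      atTop (nhds 1) := by
  set b : ℝ := (1 / (8 ^ (k - j) * ((k - j).factorial : ℝ)) / 2) ^ (j + 1) / 8 with hb
  have hb0 : 0 < b := by
    have : (0 : ℝ) < (k - j).factorial := by exact_mod_cast Nat.factorial_pos _
    rw [hb]; positivity
  let L : ℕ → ℝ := fun n => (n : ℝ) ^ (1 / (4 * ((j : ℝ) + 1)))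
  have hLt : Tendsto L atTop atTop :=
    (tendsto_rpow_atTop (by positivity)).comp tendsto_natCast_atTop_atTop
  let ε : ℕ → ℝ := fun n => (Real.exp (-(L n)) + 2 ^ (k + 2) / L n) +
    (n : ℝ) ^ (j + k + 2) * Real.exp (-(b * Real.sqrt n))
  have hε : Tendsto ε atTop (nhds 0) := by
    have e1 : Tendsto (fun n => Real.exp (-(L n))) atTop (nhds 0) :=
      Real.tendsto_exp_neg_atTop_nhds_zero.comp hLt
    have e2 : Tendsto (fun n => 2 ^ (k + 2) / L n) atTop (nhds 0) := hLt.const_div_atTop _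
    simpa using (e1.add e2).add (tendsto_aux (j + k + 2) hb0)
  have hlow : Tendsto (fun n => ENNReal.ofReal (1 - ε n)) atTop (nhds 1) := by
    have := ENNReal.tendsto_ofReal (hε.const_sub 1)
    simpa using this
  refine tendsto_of_tendsto_of_tendsto_of_le_of_le' hlow tendsto_const_nhds ?_
    (Eventually.of_forall fun n => prob_le_one)
  filter_upwards [eventually_ge_atTop (2 ^ (k + 2) * (k + 1).factorial + 8 * (k + 2))] with n hn
  have hn1 : 1 ≤ n := by omega
  have hn1' : (1 : ℝ) ≤ n := by exact_mod_cast hn1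
  have hL1 : 1 ≤ L n := Real.one_le_rpow hn1' (by positivity)
  have hLn : L n ^ (2 * (j + 1)) = Real.sqrt n := by
    simp only [L]
    rw [← Real.rpow_natCast, ← Real.rpow_mul (by linarith), Real.sqrt_eq_rpow]
    congr 1
    push_cast
    field_simp
    norm_num
  have hL3 : L n ^ 3 ≤ n := by
    calc L n ^ 3 ≤ L n ^ (2 * (j + 1)) := pow_le_pow_right₀ hL1 (by omega)
      _ = Real.sqrt n := hLn
      _ ≤ n := by
        rw [Real.sqrt_le_left (by linarith)]
        nlinarith
  obtain ⟨p, hp⟩ : ∃ p : ℝ, p = 1 / ((n : ℝ) ^ (k - j) * L n ^ 2) := ⟨_, rfl⟩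
  have hp0 : 0 ≤ p := by rw [hp]; positivity
  have hp1 : p ≤ 1 := by
    have a1 : (1 : ℝ) ≤ (n : ℝ) ^ (k - j) := one_le_pow₀ hn1'
    have a2 : 1 ≤ L n ^ 2 := one_le_pow₀ hL1
    rw [hp, div_le_one (by positivity)]; nlinarith
  have B1 := (bad1 hjk (numeric3 (r := k - j) (by omega) (by omega) (by omega) hL1 hL3 rfl) hp0 hp1).trans
    (numeric1 (k := k) hn1 hL1 hp rfl)
  have B2 := (bad2 (h := n / 4) hjk (by omega) hp0 hp1).trans
    (numeric2 (N := j + k + 2) (by omega) hL1 hLn rfl hp)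
  have B0 := bad0 n
  set T := {t : Finset (Fin n) → ℝ | ∀ p : ℝ, pMj k j n t ≤ p →
        ∀ K C : Finset (Fin n), ¬ IsMjMinus (complexAt k n t p) k j K C} with hT
  have hcov : (Set.univ : Set (Finset (Fin n) → ℝ)) ⊆
      T ∪ ({t | ¬ ∀ K, t K ≤ 1} ∪ ({t | ¬ Good1 k j n p t} ∪ {t | ¬ Good2 k j n p t})) := by
    intro t _
    by_contra hcon
    simp only [Set.mem_union, not_or] at hcon
    obtain ⟨c0, c1, c2, c3⟩ := hcon
    exact c0 (deterministic hj hjk (by omega) hp0 hp1 (not_not.1 c1) (not_not.1 c2) (not_not.1 c3))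
  have h1 : 1 ≤ (birthMeasure n).real T + ε n := by
    have a0 := measureReal_mono hcov (μ := birthMeasure n)
    rw [probReal_univ] at a0
    have a1 := measureReal_union_le (μ := birthMeasure n) T
      ({t | ¬ ∀ K, t K ≤ 1} ∪ ({t | ¬ Good1 k j n p t} ∪ {t | ¬ Good2 k j n p t}))
    have a2 := measureReal_union_le (μ := birthMeasure n)
      {t | ¬ ∀ K, t K ≤ 1} ({t | ¬ Good1 k j n p t} ∪ {t | ¬ Good2 k j n p t})
    have a3 := measureReal_union_le (μ := birthMeasure n)
      {t | ¬ Good1 k j n p t} {t | ¬ Good2 k j n p t}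
    simp only [ε]
    linarith
  calc ENNReal.ofReal (1 - ε n) ≤ ENNReal.ofReal ((birthMeasure n).real T) :=
        ENNReal.ofReal_le_ofReal (by linarith)
    _ = birthMeasure n T := by
        rw [Measure.real, ENNReal.ofReal_toReal (measure_ne_top _ _)]

end RSC
end

section
/- Let k ≥ 2 and j ∈ {1,…,k−1}. With high probability, there exists a 4-tuple (K,C,w,a) that forms a copy of M_j^* in G_p for every p in the range [p_{j−1}^−, p_j^{(1)}] simultaneously, where p_{j−1}^− := (1 − 1/√(log n))·j·(log n)·(k−j+1)!/((k−j+2)·n^{k−j+1}) and p_j^{(1)} := 1/(10·(j+1)·binom(k+1, j+1)·n^{k−j}). -/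
open MeasureTheory Filter

attribute [local instance] Classical.propDecidable

namespace RSC

variable {V : Type*}

instance unif_prob : IsProbabilityMeasure (volume.restrict (Set.Icc (0 : ℝ) 1)) :=
  ⟨by simp⟩

instance birth_prob (n : ℕ) : IsProbabilityMeasure (birthMeasure n) := by
  unfold birthMeasure; infer_instance

/-- The event that all sets in `R` are born by `p`, and no set in `F` is born by `q`. -/
def Ev {n : ℕ} (p q : ℝ) (R F : Finset (Finset (Fin n))) : Set (Finset (Fin n) → ℝ) :=
  {t | (∀ K ∈ R, t K ≤ p) ∧ ∀ K ∈ F, q < t K}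

lemma Ev_eq_pi {n : ℕ} (p q : ℝ) (R F : Finset (Finset (Fin n))) (h : Disjoint R F) :
    Ev p q R F = Set.univ.pi fun K =>
      if K ∈ R then Set.Iic p else if K ∈ F then Set.Ioi q else Set.univ := by
  ext t
  simp only [Ev, Set.mem_ofPred_eq, Set.mem_pi, Set.mem_univ, true_imp_iff]
  constructor
  · rintro ⟨h1, h2⟩ K
    split_ifs with a b
    · exact h1 K a
    · exact h2 K b
    · trivial
  · intro H
    refine ⟨fun K hK => ?_, fun K hK => ?_⟩
    · have := H K
      rwa [if_pos hK] at this
    · have := H K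
      rwa [if_neg (fun h' => Finset.disjoint_left.1 h h' hK), if_pos hK] at this

lemma Ev_meas {n : ℕ} (p q : ℝ) (R F : Finset (Finset (Fin n))) :
    MeasurableSet (Ev p q R F) := by
  have : Ev p q R F = (⋂ K ∈ R, {t | t K ≤ p}) ∩ ⋂ K ∈ F, {t | q < t K} := by
    ext t; simp [Ev]
  rw [this]
  refine MeasurableSet.inter (Finset.measurableSet_biInter _ fun K _ => ?_)
    (Finset.measurableSet_biInter _ fun K _ => ?_)
  · exact measurableSet_le (measurable_pi_apply K) measurable_const
  · exact measurableSet_lt measurable_const (measurable_pi_apply K)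

lemma unif_Iic (p : ℝ) (h0 : 0 ≤ p) (h1 : p ≤ 1) :
    (volume.restrict (Set.Icc (0 : ℝ) 1)) (Set.Iic p) = ENNReal.ofReal p := by
  rw [Measure.restrict_apply measurableSet_Iic]
  have : Set.Iic p ∩ Set.Icc 0 1 = Set.Icc 0 p := by
    ext x; simp only [Set.mem_inter_iff, Set.mem_Iic, Set.mem_Icc]
    constructor
    · rintro ⟨a, b, c⟩; exact ⟨b, a⟩
    · rintro ⟨a, b⟩; exact ⟨b, a, b.trans h1⟩
  rw [this]; simp

lemma unif_Ioi (p : ℝ) (h0 : 0 ≤ p) (h1 : p ≤ 1) :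
    (volume.restrict (Set.Icc (0 : ℝ) 1)) (Set.Ioi p) = ENNReal.ofReal (1 - p) := by
  rw [Measure.restrict_apply measurableSet_Ioi]
  have : Set.Ioi p ∩ Set.Icc 0 1 = Set.Ioc p 1 := by
    ext x; simp only [Set.mem_inter_iff, Set.mem_Ioi, Set.mem_Icc, Set.mem_Ioc]
    constructor
    · rintro ⟨a, b, c⟩; exact ⟨a, c⟩
    · rintro ⟨a, b⟩; exact ⟨a, h0.trans a.le, b⟩
  rw [this]; simp

lemma Ev_prob {n : ℕ} (p q : ℝ) (R F : Finset (Finset (Fin n))) (h : Disjoint R F)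
    (hp0 : 0 ≤ p) (hp1 : p ≤ 1) (hq0 : 0 ≤ q) (hq1 : q ≤ 1) :
    (birthMeasure n).real (Ev p q R F) = p ^ R.card * (1 - q) ^ F.card := by
  rw [Ev_eq_pi p q R F h, Measure.real, birthMeasure, Measure.pi_pi, ENNReal.toReal_prod]
  have : ∀ K : Finset (Fin n), ((volume.restrict (Set.Icc (0 : ℝ) 1))
      (if K ∈ R then Set.Iic p else if K ∈ F then Set.Ioi q else Set.univ)).toReal
      = (if K ∈ R then p else 1) * (if K ∈ F then (1 - q) else 1) := by
    intro K
    by_cases a : K ∈ R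
    · have b : K ∉ F := fun h' => Finset.disjoint_left.1 h a h'
      rw [if_pos a, if_pos a, if_neg b, unif_Iic p hp0 hp1, ENNReal.toReal_ofReal hp0, mul_one]
    · by_cases b : K ∈ F
      · rw [if_neg a, if_neg a, if_pos b, if_pos b, unif_Ioi q hq0 hq1,
          ENNReal.toReal_ofReal (by linarith), one_mul]
      · rw [if_neg a, if_neg a, if_neg b, if_neg b, measure_univ]; simp
  rw [Finset.prod_congr rfl fun K _ => this K, Finset.prod_mul_distrib]
  simp [Finset.prod_ite]

lemma Ev_inter_prob {n : ℕ} (p q : ℝ) (R F R' F' : Finset (Finset (Fin n)))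
    (hp0 : 0 ≤ p) (hp1 : p ≤ 1) (hq0 : 0 ≤ q) (hq1 : q ≤ 1) :
    (birthMeasure n).real (Ev p q R F ∩ Ev p q R' F') ≤
      p ^ (R ∪ R').card * (1 - q) ^ ((F ∪ F') \ (R ∪ R')).card := by
  rw [← Ev_prob p q (R ∪ R') ((F ∪ F') \ (R ∪ R')) Finset.disjoint_sdiff hp0 hp1 hq0 hq1]
  refine measureReal_mono ?_
  rintro t ⟨⟨a, b⟩, c, d⟩
  refine ⟨fun K hK => ?_, fun K hK => ?_⟩
  · rcases Finset.mem_union.1 hK with h | h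
    exacts [a K h, c K h]
  · rcases Finset.mem_union.1 (Finset.mem_sdiff.1 hK).1 with h | h
    exacts [b K h, d K h]

lemma second_moment {Ω α : Type*} [MeasurableSpace Ω] [Fintype α] (μ : Measure Ω)
    [IsProbabilityMeasure μ] (E : α → Set Ω) (hE : ∀ f, MeasurableSet (E f)) (a δ : ℝ)
    (ha : 0 < a) (hsum : ∑ f, μ.real (E f) = a)
    (h2 : ∑ f, ∑ g, μ.real (E f ∩ E g) ≤ (1 + δ) * a ^ 2) :
    1 - δ ≤ μ.real (⋃ f, E f) := by
  set X : Ω → ℝ := fun ω => ∑ f, (E f).indicator (fun _ => (1 : ℝ)) ω with hX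
  have hi : ∀ f, Integrable ((E f).indicator (fun _ => (1 : ℝ))) μ := fun f =>
    (integrable_const _).indicator (hE f)
  have hXi : Integrable X μ := integrable_finsetSum _ fun f _ => hi f
  have hX1 : ∫ ω, X ω ∂μ = a := by
    rw [integral_finsetSum _ fun f _ => hi f, ← hsum]
    refine Finset.sum_congr rfl fun f _ => ?_
    rw [integral_indicator_const _ (hE f)]; simp
  have hii : ∀ f g, Integrable ((E f ∩ E g).indicator (fun _ => (1 : ℝ))) μ := fun f g =>
    (integrable_const _).indicator ((hE f).inter (hE g))
  have hXX : ∀ ω, X ω ^ 2 = ∑ f, ∑ g, (E f ∩ E g).indicator (fun _ => (1 : ℝ)) ω := by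
    intro ω
    rw [sq, hX, Finset.sum_mul_sum]
    refine Finset.sum_congr rfl fun f _ => Finset.sum_congr rfl fun g _ => ?_
    by_cases h1 : ω ∈ E f <;> by_cases h2 : ω ∈ E g <;> simp [h1, h2]
  have hX2i : Integrable (fun ω => X ω ^ 2) μ := by
    simp_rw [hXX]
    exact integrable_finsetSum _ fun f _ => integrable_finsetSum _ fun g _ => hii f g
  have hX2 : ∫ ω, X ω ^ 2 ∂μ ≤ (1 + δ) * a ^ 2 := by
    refine le_trans (le_of_eq ?_) h2
    simp_rw [hXX]
    rw [integral_finsetSum _ fun f _ => integrable_finsetSum _ fun g _ => hii f g]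
    refine Finset.sum_congr rfl fun f _ => ?_
    rw [integral_finsetSum _ fun g _ => hii f g]
    refine Finset.sum_congr rfl fun g _ => ?_
    rw [integral_indicator_const _ ((hE f).inter (hE g))]; simp
  have hU : MeasurableSet (⋃ f, E f) := MeasurableSet.iUnion hE
  have key : ∫ ω, ((⋃ f, E f)ᶜ).indicator (fun _ => a ^ 2) ω ∂μ ≤
      ∫ ω, (X ω ^ 2 - 2 * a * X ω + a ^ 2) ∂μ := by
    refine integral_mono ((integrable_const _).indicator hU.compl)
      ((hX2i.sub (hXi.const_mul _)).add (integrable_const _)) ?_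
    intro ω
    by_cases h : ω ∈ (⋃ f, E f)
    · simp only [Set.indicator_of_notMem (fun h' : ω ∈ (⋃ f, E f)ᶜ => h' h)]
      nlinarith [sq_nonneg (X ω - a)]
    · have h0 : X ω = 0 := by
        refine Finset.sum_eq_zero fun f _ => ?_
        rw [Set.indicator_of_notMem]
        exact fun h' => h (Set.mem_iUnion.2 ⟨f, h'⟩)
      simp only [Set.indicator_of_mem (show ω ∈ (⋃ f, E f)ᶜ from h), h0]
      simp
  have hadd : ∫ ω, (X ω ^ 2 - 2 * a * X ω + a ^ 2) ∂μ =
      ∫ ω, (X ω ^ 2 - 2 * a * X ω) ∂μ + ∫ _, a ^ 2 ∂μ :=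
    integral_add (hX2i.sub (hXi.const_mul _)) (integrable_const _)
  have hsub : ∫ ω, (X ω ^ 2 - 2 * a * X ω) ∂μ = ∫ ω, X ω ^ 2 ∂μ - ∫ ω, 2 * a * X ω ∂μ :=
    integral_sub hX2i (hXi.const_mul _)
  rw [integral_indicator_const _ hU.compl, hadd, hsub, integral_const_mul, hX1,
    probReal_compl_eq_one_sub hU] at key
  simp at key
  have ha2 : 0 < a ^ 2 := by positivity
  have : (1 - μ.real (⋃ f, E f)) * a ^ 2 ≤ δ * a ^ 2 := by nlinarith
  have := le_of_mul_le_mul_right this ha2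
  linarith

/-! combinatorics -/

abbrev Idx (k j : ℕ) := Fin (j + 2) ⊕ (Fin (j + 2) × Fin (k - j))

/-- index set of the `s`-th simplex -/
def II (k j : ℕ) (s : Fin (j + 2)) : Finset (Idx k j) :=
  (Finset.univ.erase s).disjSum ({s} ×ˢ Finset.univ)

/-- index set of the centre -/
def CI (k j : ℕ) : Finset (Idx k j) :=
  ((Finset.univ.erase 0).erase 1).disjSum ∅

def JS (k j : ℕ) (S : Finset (Fin (j + 2))) : Finset (Idx k j) :=
  (S.image (· + 1)).disjSum (S ×ˢ Finset.univ)

lemma card_II (k j : ℕ) (hjk : j < k) (s) : (II k j s).card = k + 1 := by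
  simp [II]; omega

lemma card_CI (k j : ℕ) : (CI k j).card = j := by
  simp [CI]

lemma card_JS (k j : ℕ) (S) : (JS k j S).card = S.card * (k - j + 1) := by
  rw [JS, Finset.card_disjSum, Finset.card_image_of_injective _ (add_left_injective 1),
    Finset.card_product]
  simp; ring

lemma CI_sub (k j : ℕ) : CI k j ⊆ II k j 0 := by
  intro x; rcases x with x | x <;> simp [CI, II]

section Helpers

variable {k j m n : ℕ}

def vx (e : Idx k j × Fin m ↪ Fin n) (f : Idx k j → Fin m) : Idx k j ↪ Fin n :=
  ⟨fun i => e (i, f i), fun a b h => (Prod.ext_iff.1 (e.injective h)).1⟩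

lemma vx_eq {e : Idx k j × Fin m ↪ Fin n} {f g : Idx k j → Fin m} {a b : Idx k j}
    (h : vx e f a = vx e g b) : a = b ∧ f a = g b :=
  Prod.ext_iff.1 (e.injective h)

def KK (e : Idx k j × Fin m ↪ Fin n) (f : Idx k j → Fin m) (s : Fin (j + 2)) :
    Finset (Fin n) := (II k j s).map (vx e f)

def CC (e : Idx k j × Fin m ↪ Fin n) (f : Idx k j → Fin m) : Finset (Fin n) :=
  (CI k j).map (vx e f)

def RR (e : Idx k j × Fin m ↪ Fin n) (f : Idx k j → Fin m) : Finset (Finset (Fin n)) :=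
  Finset.univ.image (KK e f)

/-- petals -/
noncomputable def PP (e : Idx k j × Fin m ↪ Fin n) (f : Idx k j → Fin m) (u : Idx k j) :
    Finset (Fin n) := insert (vx e f u) (CC e f)

noncomputable def SUP (k : ℕ) {n : ℕ} (A : Finset (Fin n)) : Finset (Finset (Fin n)) :=
  Finset.univ.filter fun K => K.card = k + 1 ∧ A ⊆ K

noncomputable def FF (e : Idx k j × Fin m ↪ Fin n) (f : Idx k j → Fin m) :
    Finset (Finset (Fin n)) :=
  ((II k j 0 \ CI k j).biUnion fun u => SUP k (PP e f u)).erase (KK e f 0)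

lemma card_SUP (A : Finset (Fin n)) (a : ℕ) (ha : a ≤ A.card) :
    (SUP k A).card ≤ n ^ (k + 1 - a) := by
  obtain ⟨B, hBA, hB⟩ := Finset.exists_subset_card_eq ha
  have : (SUP k A).card ≤ (Finset.powersetCard (k + 1 - a) (Finset.univ : Finset (Fin n))).card := by
    refine Finset.card_le_card_of_injOn (fun K => K \ B) ?_ ?_
    · intro K hK
      simp only [SUP, Finset.coe_filter, Set.mem_ofPred_eq, Finset.mem_univ, true_and] at hK
      simp only [Finset.mem_coe, Finset.mem_powersetCard]
      refine ⟨Finset.subset_univ _, ?_⟩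
      rw [Finset.card_sdiff_of_subset (hBA.trans hK.2), hK.1, hB]
    · intro K hK K' hK' h
      simp only [SUP, Finset.coe_filter, Set.mem_ofPred_eq, Finset.mem_univ, true_and] at hK hK'
      rw [← Finset.sdiff_union_of_subset (hBA.trans hK.2),
        ← Finset.sdiff_union_of_subset (hBA.trans hK'.2)]
      simp only at h
      rw [h]
  refine this.trans ?_
  rw [Finset.card_powersetCard, Finset.card_univ, Fintype.card_fin]
  exact Nat.choose_le_pow _ _

lemma card_petal_idx (hjk : j < k) : (II k j 0 \ CI k j).card = k - j + 1 := by
  rw [Finset.card_sdiff_of_subset (CI_sub k j), card_II k j hjk, card_CI]; omega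

lemma vx_notMem_CC (e : Idx k j × Fin m ↪ Fin n) (f g : Idx k j → Fin m) {u : Idx k j}
    (hu : u ∉ CI k j) : vx e f u ∉ CC e g := by
  intro h
  obtain ⟨i, hi, h⟩ := Finset.mem_map.1 h
  obtain ⟨rfl, _⟩ := vx_eq h
  exact hu hi

lemma card_PP (e : Idx k j × Fin m ↪ Fin n) (f : Idx k j → Fin m) {u : Idx k j}
    (hu : u ∉ CI k j) : (PP e f u).card = j + 1 := by
  rw [PP, Finset.card_insert_of_notMem (vx_notMem_CC e f f hu), CC, Finset.card_map, card_CI]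

lemma card_FF (hjk : j < k) (e : Idx k j × Fin m ↪ Fin n) (f : Idx k j → Fin m) :
    (FF e f).card ≤ (k - j + 1) * n ^ (k - j) := by
  refine (Finset.card_le_card (Finset.erase_subset _ _)).trans ?_
  rw [← card_petal_idx hjk]
  refine Finset.card_biUnion_le_card_mul _ _ _ fun u hu => ?_
  have := card_SUP (k := k) (PP e f u) (j + 1) (card_PP e f (Finset.mem_sdiff.1 hu).2).ge
  rwa [show k + 1 - (j + 1) = k - j by omega] at this

lemma PP_eq {e : Idx k j × Fin m ↪ Fin n} {f g : Idx k j → Fin m} {u u' : Idx k j}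
    (hu' : u' ∉ CI k j) (h : PP e f u ⊆ PP e g u') : ∀ i ∈ CI k j, f i = g i := by
  intro i hi
  have : vx e f i ∈ PP e g u' := h (Finset.mem_insert_of_mem (Finset.mem_map_of_mem _ hi))
  rcases Finset.mem_insert.1 this with h | h
  · obtain ⟨rfl, _⟩ := vx_eq h
    exact absurd hi hu'
  · obtain ⟨i', hi', h⟩ := Finset.mem_map.1 h
    obtain ⟨rfl, h⟩ := vx_eq h
    exact h.symm

lemma card_FF_inter (hjk : j < k) (e : Idx k j × Fin m ↪ Fin n) (f g : Idx k j → Fin m)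
    (hfg : ¬ ∀ i ∈ CI k j, f i = g i) :
    (FF e f ∩ FF e g).card ≤ (k - j + 1) ^ 2 * n ^ (k - j - 1) := by
  have hsub : FF e f ∩ FF e g ⊆ ((II k j 0 \ CI k j) ×ˢ (II k j 0 \ CI k j)).biUnion
      fun q => SUP k (PP e f q.1 ∪ PP e g q.2) := by
    intro K hK
    simp only [FF, Finset.mem_inter, Finset.mem_erase, Finset.mem_biUnion, SUP, Finset.mem_filter,
      Finset.mem_univ, true_and] at hK
    obtain ⟨⟨_, u, hu, hc, h1⟩, _, u', hu', _, h2⟩ := hK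
    simp only [Finset.mem_biUnion, SUP, Finset.mem_filter, Finset.mem_univ, true_and]
    exact ⟨(u, u'), Finset.mem_product.2 ⟨hu, hu'⟩, hc, Finset.union_subset h1 h2⟩
  refine (Finset.card_le_card hsub).trans ?_
  rw [sq, ← card_petal_idx hjk, ← Finset.card_product]
  refine Finset.card_biUnion_le_card_mul _ _ _ fun q hq => ?_
  obtain ⟨h1, h2⟩ := Finset.mem_product.1 hq
  have h1 := (Finset.mem_sdiff.1 h1).2
  have h2 := (Finset.mem_sdiff.1 h2).2
  have hc : j + 2 ≤ (PP e f q.1 ∪ PP e g q.2).card := by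
    have : PP e g q.2 ⊂ PP e f q.1 ∪ PP e g q.2 := by
      refine (Finset.ssubset_iff_of_subset Finset.subset_union_right).2 ?_
      by_contra hcon
      push Not at hcon
      exact hfg (PP_eq h2 fun x hx => hcon x (Finset.mem_union_left _ hx))
    have := Finset.card_lt_card this
    rw [card_PP e g h2] at this
    omega
  have := card_SUP (k := k) _ _ hc
  rwa [show k + 1 - (j + 2) = k - j - 1 by omega] at this

lemma KK_eq (hjk : j < k) {e : Idx k j × Fin m ↪ Fin n} {f g : Idx k j → Fin m}
    {s s' : Fin (j + 2)} (h : KK e f s = KK e g s') : s = s' ∧ ∀ i ∈ II k j s, f i = g i := by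
  have key : ∀ i ∈ II k j s, i ∈ II k j s' ∧ f i = g i := by
    intro i hi
    have : vx e f i ∈ KK e g s' := h ▸ Finset.mem_map_of_mem _ hi
    obtain ⟨i', hi', h⟩ := Finset.mem_map.1 this
    obtain ⟨rfl, h⟩ := vx_eq h
    exact ⟨hi', h.symm⟩
  refine ⟨?_, fun i hi => (key i hi).2⟩
  have := (key (Sum.inr (s, ⟨0, by omega⟩)) (by simp [II])).1
  simpa [II, eq_comm] using this

lemma card_KK (hjk : j < k) (e : Idx k j × Fin m ↪ Fin n) (f : Idx k j → Fin m) (s) :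
    (KK e f s).card = k + 1 := by
  rw [KK, Finset.card_map, card_II k j hjk]

lemma card_RR (hjk : j < k) (e : Idx k j × Fin m ↪ Fin n) (f : Idx k j → Fin m) :
    (RR e f).card = j + 2 := by
  rw [RR, Finset.card_image_of_injective _ fun a b h => (KK_eq hjk h).1]; simp

noncomputable def SS (f g : Idx k j → Fin m) : Finset (Fin (j + 2)) :=
  Finset.univ.filter fun s => ∀ i ∈ II k j s, f i = g i

lemma card_RR_union (hjk : j < k) (e : Idx k j × Fin m ↪ Fin n) (f g : Idx k j → Fin m) :
    2 * (j + 2) ≤ (RR e f ∪ RR e g).card + (SS f g).card := by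
  have h1 : (RR e f ∩ RR e g).card ≤ (SS f g).card := by
    refine (Finset.card_le_card (t := (SS f g).image (KK e f)) ?_).trans Finset.card_image_le
    intro K hK
    obtain ⟨h1, h2⟩ := Finset.mem_inter.1 hK
    obtain ⟨s, _, rfl⟩ := Finset.mem_image.1 h1
    obtain ⟨s', _, h⟩ := Finset.mem_image.1 h2
    obtain ⟨rfl, h'⟩ := KK_eq hjk h
    exact Finset.mem_image_of_mem _ (Finset.mem_filter.2 ⟨Finset.mem_univ _, fun i hi => (h' i hi).symm⟩)
  have := Finset.card_union_add_card_inter (RR e f) (RR e g)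
  rw [card_RR hjk, card_RR hjk] at this
  omega

lemma SS_agree {f g : Idx k j → Fin m} {S : Finset (Fin (j + 2))} (h : S ⊆ SS f g) :
    ∀ i ∈ JS k j S, f i = g i := by
  have h' : ∀ s ∈ S, ∀ i ∈ II k j s, f i = g i := fun s hs => (Finset.mem_filter.1 (h hs)).2
  rintro (i | ⟨s, l⟩) hi
  · simp only [JS, Finset.inl_mem_disjSum, Finset.mem_image] at hi
    obtain ⟨s, hs, rfl⟩ := hi
    exact h' s hs _ (by simp [II])
  · simp only [JS, Finset.inr_mem_disjSum, Finset.mem_product] at hi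
    exact h' s hi.1 _ (by simp [II])

lemma RR_FF_disj (hjk : j < k) (e : Idx k j × Fin m ↪ Fin n) (f : Idx k j → Fin m) :
    Disjoint (RR e f) (FF e f) := by
  rw [Finset.disjoint_left]
  intro K hK hF
  obtain ⟨s, _, rfl⟩ := Finset.mem_image.1 hK
  simp only [FF, Finset.mem_erase, Finset.mem_biUnion, SUP, Finset.mem_filter,
      Finset.mem_univ, true_and] at hF
  obtain ⟨hne, u, hu, _, hsub⟩ := hF
  have hs : s ≠ 0 := fun h => hne (by rw [h])
  have hmem : ∀ i, vx e f i ∈ KK e f s → i ∈ II k j s := by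
    intro i hi
    simpa [KK] using hi
  have hu1 := hmem u (hsub (Finset.mem_insert_self _ _))
  have hC : ∀ i ∈ CI k j, i ∈ II k j s := fun i hi =>
    hmem i (hsub (Finset.mem_insert_of_mem (Finset.mem_map_of_mem _ hi)))
  have hs1 : s = 1 := by
    by_contra h1
    have := hC (Sum.inl s) (by simp [CI, hs, h1])
    simp [II] at this
  subst hs1
  rcases u with u | u
  · simp [II, CI] at hu hu1
    exact hu.1 (hu.2 hu1)
  · simp [II, CI] at hu hu1
    obtain ⟨a, rfl⟩ := hu1
    obtain ⟨b, hb⟩ := hu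
    exact hs (Prod.ext_iff.1 hb).1.symm

lemma count_agree (T : Finset (Idx k j)) :
    ((Finset.univ : Finset ((Idx k j → Fin m) × (Idx k j → Fin m))).filter
      fun q => ∀ i ∈ T, q.1 i = q.2 i).card * m ^ T.card ≤ (Fintype.card (Idx k j → Fin m)) ^ 2 := by
  have h1 : m ^ T.card = (Finset.univ : Finset (T → Fin m)).card := by simp
  rw [h1, ← Finset.card_product]
  have h2 : (Fintype.card (Idx k j → Fin m)) ^ 2 =
    (Finset.univ : Finset ((Idx k j → Fin m) × (Idx k j → Fin m))).card := by
      rw [Finset.card_univ, Fintype.card_prod, sq]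
  rw [h2]
  refine Finset.card_le_card_of_injOn
    (fun x => (x.1.1, fun i => if h : i ∈ T then x.2 ⟨i, h⟩ else x.1.2 i)) (by simp) ?_
  rintro ⟨⟨f, g⟩, h⟩ hx ⟨⟨f', g'⟩, h'⟩ hx' heq
  simp only [Finset.coe_product, Finset.coe_filter, Set.mem_prod, Set.mem_ofPred_eq, Finset.mem_univ,
    true_and] at hx hx'
  simp only [Prod.mk.injEq] at heq
  obtain ⟨rfl, heq⟩ := heq
  have hh : h = h' := by
    ext i
    have := congrFun heq i.1
    simp at this
    rw [this]
  have hg : g = g' := by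
    funext i
    by_cases hi : i ∈ T
    · rw [← hx.1 i hi, ← hx'.1 i hi]
    · have := congrFun heq i
      simpa [hi] using this
  rw [hh, hg]

lemma pair_count_le (T : Finset (Idx k j)) (hm : 1 ≤ m) (c : ℝ) (hc : 0 ≤ c) :
    ∑ q : (Idx k j → Fin m) × (Idx k j → Fin m), (if ∀ i ∈ T, q.1 i = q.2 i then c else 0) ≤
      (Fintype.card (Idx k j → Fin m) : ℝ) ^ 2 / (m : ℝ) ^ T.card * c := by
  rw [← Finset.sum_filter, Finset.sum_const, nsmul_eq_mul]
  refine mul_le_mul_of_nonneg_right ?_ hc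
  have hm' : (0 : ℝ) < (m : ℝ) ^ T.card := by positivity
  rw [le_div_iff₀ hm']
  have := count_agree (m := m) T
  exact_mod_cast this

set_option maxHeartbeats 1000000 in
lemma pair_bound (hjk : j < k) (e : Idx k j × Fin m ↪ Fin n) (p q : ℝ)
    (hp0 : 0 < p) (hp1 : p ≤ 1) (hq0 : 0 ≤ q) (hq1 : q ≤ 1) (D : ℕ)
    (hD : D = (k - j + 1) ^ 2 * n ^ (k - j - 1) + 2 * (j + 2)) (hqD : q * D < 1)
    (f g : Idx k j → Fin m) :
    (birthMeasure n).real (Ev p q (RR e f) (FF e f) ∩ Ev p q (RR e g) (FF e g)) ≤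
      p ^ (2 * (j + 2)) * ((1 - q) ^ (FF e f).card * (1 - q) ^ (FF e g).card / (1 - q * D)) +
      (if ∀ i ∈ CI k j, f i = g i then p ^ (2 * (j + 2)) else 0) +
      ∑ S ∈ (Finset.univ : Finset (Finset (Fin (j + 2)))).erase ∅,
        (if ∀ i ∈ JS k j S, f i = g i then p ^ (2 * (j + 2)) / p ^ S.card else 0) := by
  have h := Ev_inter_prob p q (RR e f) (FF e f) (RR e g) (FF e g) hp0.le hp1 hq0 hq1
  refine h.trans ?_
  have hq' : 0 ≤ 1 - q := by linarith
  have hq'' : 1 - q ≤ 1 := by linarith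
  have hx : 0 < 1 - q * D := by linarith
  have hA : 0 ≤ p ^ (2 * (j + 2)) *
      ((1 - q) ^ (FF e f).card * (1 - q) ^ (FF e g).card / (1 - q * D)) := by positivity
  have hB : 0 ≤ (if ∀ i ∈ CI k j, f i = g i then p ^ (2 * (j + 2)) else 0) := by
    split_ifs <;> positivity
  have hC : ∀ S ∈ (Finset.univ : Finset (Finset (Fin (j + 2)))).erase ∅,
      0 ≤ (if ∀ i ∈ JS k j S, f i = g i then p ^ (2 * (j + 2)) / p ^ S.card else 0) := by
    intro S _
    split_ifs <;> positivity
  have hU := card_RR_union hjk e f g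
  have hone : (1 - q) ^ ((FF e f ∪ FF e g) \ (RR e f ∪ RR e g)).card ≤ 1 := pow_le_one₀ hq' hq''
  have hone' : p ^ (RR e f ∪ RR e g).card *
      (1 - q) ^ ((FF e f ∪ FF e g) \ (RR e f ∪ RR e g)).card ≤ p ^ (RR e f ∪ RR e g).card :=
    mul_le_of_le_one_right (by positivity) hone
  by_cases hS : SS f g = ∅
  · rw [hS, Finset.card_empty, add_zero] at hU
    have hpp : p ^ (RR e f ∪ RR e g).card ≤ p ^ (2 * (j + 2)) :=
      pow_le_pow_of_le_one hp0.le hp1 hU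
    have hC' := Finset.sum_nonneg hC
    by_cases hc : ∀ i ∈ CI k j, f i = g i
    · rw [if_pos hc]
      linarith
    · have key : p ^ (RR e f ∪ RR e g).card *
        (1 - q) ^ ((FF e f ∪ FF e g) \ (RR e f ∪ RR e g)).card ≤ p ^ (2 * (j + 2)) *
          ((1 - q) ^ (FF e f).card * (1 - q) ^ (FF e g).card / (1 - q * D)) := by
        refine mul_le_mul hpp ?_ (by positivity) (by positivity)
        rw [le_div_iff₀ hx, ← pow_add]
        have hbern : 1 - q * D ≤ (1 - q) ^ D := by
          have := one_add_mul_le_pow (a := -q) (by linarith) D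
          have h2 : (1 + -q) ^ D = (1 - q) ^ D := by ring
          rw [h2] at this
          linarith
        refine (mul_le_mul_of_nonneg_left hbern (pow_nonneg hq' _)).trans ?_
        rw [← pow_add]
        refine pow_le_pow_of_le_one hq' hq'' ?_
        have h1 := card_FF_inter hjk e f g hc
        have h2 := Finset.card_union_add_card_inter (FF e f) (FF e g)
        have h3 := Finset.le_card_sdiff (RR e f ∪ RR e g) (FF e f ∪ FF e g)
        have h4 := Finset.card_union_le (RR e f) (RR e g)
        rw [card_RR hjk, card_RR hjk] at h4
        omega
      linarith
  · have hpp : p ^ (RR e f ∪ RR e g).card ≤ p ^ (2 * (j + 2)) / p ^ (SS f g).card := by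
      rw [le_div_iff₀ (by positivity), ← pow_add]
      exact pow_le_pow_of_le_one hp0.le hp1 hU
    have := Finset.single_le_sum hC (Finset.mem_erase.2 ⟨hS, Finset.mem_univ (SS f g)⟩)
    rw [if_pos (SS_agree (Finset.Subset.refl _))] at this
    linarith

set_option maxHeartbeats 1000000 in
lemma main_bound (hj : 1 ≤ j) (hjk : j < k) (e : Idx k j × Fin m ↪ Fin n) (p q : ℝ) (hm : 1 ≤ m)
    (hp0 : 0 < p) (hp1 : p ≤ 1) (hq0 : 0 ≤ q) (hq1 : q ≤ 1) (D : ℕ)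
    (hD : D = (k - j + 1) ^ 2 * n ^ (k - j - 1) + 2 * (j + 2)) (hqD : q * D < 1)
    (hF : q * (((k - j + 1) * n ^ (k - j) : ℕ) : ℝ) ≤ 1 / 2)
    (x : ℝ) (hx : x = (m : ℝ) ^ (k - j + 1) * p) (hx1 : 1 ≤ x) :
    1 - (1 / (1 - q * D) - 1 + 4 * (1 / (m : ℝ) + 2 ^ (j + 2) / x)) ≤
      (birthMeasure n).real (⋃ f, Ev p q (RR e f) (FF e f)) := by
  have hq' : 0 ≤ 1 - q := by linarith
  have hq'' : 1 - q ≤ 1 := by linarith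
  have hy : 0 < 1 - q * D := by linarith
  have hmR : (1 : ℝ) ≤ m := by exact_mod_cast hm
  set Q : ℝ := ∑ f : Idx k j → Fin m, (1 - q) ^ (FF e f).card with hQ
  set M : ℝ := (Fintype.card (Idx k j → Fin m) : ℝ) with hM
  have hM0 : 0 < M := by
    have : Nonempty (Idx k j → Fin m) := ⟨fun _ => ⟨0, hm⟩⟩
    rw [hM]
    exact_mod_cast Fintype.card_pos
  have hMQ : M ≤ 2 * Q := by
    have : ∀ f : Idx k j → Fin m, (1 : ℝ) / 2 ≤ (1 - q) ^ (FF e f).card := by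
      intro f
      have h1 := one_add_mul_le_pow (a := -q) (by linarith) (FF e f).card
      have h2 : (1 + -q) ^ (FF e f).card = (1 - q) ^ (FF e f).card := by ring
      rw [h2] at h1
      have h3 : ((FF e f).card : ℝ) ≤ (((k - j + 1) * n ^ (k - j) : ℕ) : ℝ) := by
        exact_mod_cast card_FF hjk e f
      have := mul_le_mul_of_nonneg_left h3 hq0
      linarith
    have := Finset.sum_le_sum fun f (_ : f ∈ (Finset.univ : Finset (Idx k j → Fin m))) => this f
    rw [Finset.sum_const, nsmul_eq_mul, Finset.card_univ] at this
    linarith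
  have hQ0 : 0 < Q := by linarith
  refine second_moment _ _ (fun f => Ev_meas _ _ _ _) (p ^ (j + 2) * Q) _ (by positivity) ?_ ?_
  · rw [hQ, Finset.mul_sum]
    refine Finset.sum_congr rfl fun f _ => ?_
    rw [Ev_prob _ _ _ _ (RR_FF_disj hjk e f) hp0.le hp1 hq0 hq1, card_RR hjk]
  · refine (Finset.sum_le_sum fun f _ => Finset.sum_le_sum fun g _ =>
      pair_bound hjk e p q hp0 hp1 hq0 hq1 D hD hqD f g).trans ?_
    rw [← Fintype.sum_prod_type' (f := fun f g : Idx k j → Fin m =>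
      p ^ (2 * (j + 2)) * ((1 - q) ^ (FF e f).card * (1 - q) ^ (FF e g).card / (1 - q * D)) +
      (if ∀ i ∈ CI k j, f i = g i then p ^ (2 * (j + 2)) else 0) +
      ∑ S ∈ (Finset.univ : Finset (Finset (Fin (j + 2)))).erase ∅,
        (if ∀ i ∈ JS k j S, f i = g i then p ^ (2 * (j + 2)) / p ^ S.card else 0))]
    rw [Finset.sum_add_distrib, Finset.sum_add_distrib, Finset.sum_comm]
    set P := p ^ (2 * (j + 2)) with hP
    have hP0 : 0 < P := by positivity
    have t1 : ∑ r : (Idx k j → Fin m) × (Idx k j → Fin m),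
        P * ((1 - q) ^ (FF e r.1).card * (1 - q) ^ (FF e r.2).card / (1 - q * D)) =
        P * (Q ^ 2 / (1 - q * D)) := by
      rw [← Finset.mul_sum, ← Finset.sum_div, sq, hQ, Finset.sum_mul_sum, ← Fintype.sum_prod_type']
    have t2 : ∑ r : (Idx k j → Fin m) × (Idx k j → Fin m),
        (if ∀ i ∈ CI k j, r.1 i = r.2 i then P else 0) ≤ M ^ 2 / m * P := by
      refine (pair_count_le (CI k j) hm P hP0.le).trans ?_
      refine mul_le_mul_of_nonneg_right ?_ hP0.le
      rw [card_CI]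
      refine div_le_div_of_nonneg_left (by positivity) (by positivity) ?_
      exact le_self_pow₀ hmR (by omega)
    have t3 : ∑ S ∈ (Finset.univ : Finset (Finset (Fin (j + 2)))).erase ∅,
        ∑ r : (Idx k j → Fin m) × (Idx k j → Fin m),
        (if ∀ i ∈ JS k j S, r.1 i = r.2 i then P / p ^ S.card else 0) ≤
        2 ^ (j + 2) * (M ^ 2 / x * P) := by
      have : ∀ S ∈ (Finset.univ : Finset (Finset (Fin (j + 2)))).erase ∅,
        ∑ r : (Idx k j → Fin m) × (Idx k j → Fin m),
        (if ∀ i ∈ JS k j S, r.1 i = r.2 i then P / p ^ S.card else 0) ≤ M ^ 2 / x * P := by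
        intro S hS
        refine (pair_count_le (JS k j S) hm _ (by positivity)).trans ?_
        rw [card_JS]
        have hs : S.card ≠ 0 := by
          have := (Finset.mem_erase.1 hS).1
          simpa using this
        have hxx : x ^ S.card = (m : ℝ) ^ (S.card * (k - j + 1)) * p ^ S.card := by
          rw [hx, mul_pow, ← pow_mul, mul_comm S.card]
        have : M ^ 2 / (m : ℝ) ^ (S.card * (k - j + 1)) * (P / p ^ S.card) =
            M ^ 2 / x ^ S.card * P := by
          rw [hxx]; field_simp
        rw [this]
        refine mul_le_mul_of_nonneg_right ?_ hP0.le
        refine div_le_div_of_nonneg_left (by positivity) (by positivity) ?_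
        exact le_self_pow₀ hx1 hs
      refine (Finset.sum_le_card_nsmul _ _ _ this).trans ?_
      rw [nsmul_eq_mul]
      refine mul_le_mul_of_nonneg_right ?_ (by positivity)
      have : ((Finset.univ : Finset (Finset (Fin (j + 2)))).erase ∅).card ≤ 2 ^ (j + 2) := by
        refine (Finset.card_le_card (Finset.erase_subset _ _)).trans ?_
        simp
      exact_mod_cast this
    rw [t1]
    have hM2 : M ^ 2 ≤ 4 * Q ^ 2 := by nlinarith
    have hPP : (p ^ (j + 2) * Q) ^ 2 = P * Q ^ 2 := by rw [hP]; ring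
    rw [hPP]
    have hsplit : M ^ 2 / m * P + 2 ^ (j + 2) * (M ^ 2 / x * P) =
        M ^ 2 * (P * (1 / (m : ℝ) + 2 ^ (j + 2) / x)) := by
      ring
    have hle := mul_le_mul_of_nonneg_right hM2
      (show 0 ≤ P * (1 / (m : ℝ) + 2 ^ (j + 2) / x) by positivity)
    have hfin : (1 + (1 / (1 - q * D) - 1 + 4 * (1 / (m : ℝ) + 2 ^ (j + 2) / x))) * (P * Q ^ 2) =
      P * (Q ^ 2 / (1 - q * D)) + 4 * Q ^ 2 * (P * (1 / (m : ℝ) + 2 ^ (j + 2) / x)) := by ring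
    rw [hfin]
    linarith

lemma star_of_mem (hk : 2 ≤ k) (hj : 1 ≤ j) (hjk : j < k) (e : Idx k j × Fin m ↪ Fin n)
    (f : Idx k j → Fin m) (p0 p1 : ℝ) (t : Finset (Fin n) → ℝ)
    (ht : t ∈ Ev p0 p1 (RR e f) (FF e f)) (p : ℝ) (h0 : p0 ≤ p) (h1 : p ≤ p1) :
    IsMjStar (complexAt k n t p) k j (KK e f 0) (CC e f) (vx e f (Sum.inl 1))
      (vx e f (Sum.inl 0)) := by
  have hK : ∀ s, t (KK e f s) ≤ p := fun s =>
    (ht.1 _ (Finset.mem_image_of_mem _ (Finset.mem_univ s))).trans h0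
  have hsub : ∀ s A, A ⊆ KK e f s → A.Nonempty → A ∈ complexAt k n t p := fun s A hA hne =>
    Or.inr ⟨hne, KK e f s, card_KK hjk e f s, hK s, hA⟩
  have hCcard : (CC e f).card = j := by rw [CC, Finset.card_map, card_CI]
  have hCK : CC e f ⊆ KK e f 0 := Finset.map_subset_map.2 (CI_sub k j)
  have hmem : ∀ i s, vx e f i ∈ KK e f s ↔ i ∈ II k j s := by
    intro i s; simp [KK]
  have hmemC : ∀ i, vx e f i ∈ CC e f ↔ i ∈ CI k j := by
    intro i; simp [CC]
  have hw : vx e f (Sum.inl 1) ∉ CC e f := by rw [hmemC]; simp [CI]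
  have ha : vx e f (Sum.inl 0) ∉ insert (vx e f (Sum.inl 1)) (CC e f) := by
    rw [Finset.mem_insert, hmemC, (vx e f).injective.eq_iff]
    simp [CI]
  refine ⟨⟨⟨hsub 0 _ (Finset.Subset.refl _) ?_, card_KK hjk e f 0⟩, hsub 0 _ hCK ?_, hCcard, hCK, ?_⟩,
    ?_, ?_, ?_, ?_⟩
  · rw [← Finset.card_pos, card_KK hjk]; omega
  · rw [← Finset.card_pos, hCcard]; omega
  · rintro P ⟨v, hv, rfl⟩ K' ⟨hK', hcard⟩ hPK
    obtain ⟨hvK, hvC⟩ := Finset.mem_sdiff.1 hv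
    obtain ⟨u, hu, rfl⟩ := Finset.mem_map.1 hvK
    by_contra hne
    have hKF : K' ∈ FF e f := by
      simp only [FF, Finset.mem_erase, Finset.mem_biUnion, SUP, Finset.mem_filter,
        Finset.mem_univ, true_and]
      refine ⟨hne, u, Finset.mem_sdiff.2 ⟨hu, fun h => hvC ((hmemC u).2 h)⟩, hcard, ?_⟩
      unfold PP
      convert hPK
    have hlt := ht.2 _ hKF
    rcases hK' with ⟨v, rfl⟩ | ⟨_, K'', hc, htK, hs⟩
    · simp at hcard; omega
    · have := Finset.eq_of_subset_of_card_le hs (by omega)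
      subst this
      linarith
  · rw [Finset.mem_sdiff]
    exact ⟨(hmem _ _).2 (by simp [II]), hw⟩
  · rw [hmem]; simp [II]
  · rw [Finset.card_insert_of_notMem ha, Finset.card_insert_of_notMem hw, hCcard]
  · intro τ hτ hc
    have hBig : insert (vx e f (Sum.inl 0)) (insert (vx e f (Sum.inl 1)) (CC e f)) =
        (Finset.univ : Finset (Fin (j + 2))).image (fun i => vx e f (Sum.inl i)) := by
      ext v
      simp only [Finset.mem_insert, CC, Finset.mem_map, Finset.mem_image, Finset.mem_univ, true_and]
      constructor
      · rintro (rfl | rfl | ⟨i, hi, rfl⟩)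
        · exact ⟨0, rfl⟩
        · exact ⟨1, rfl⟩
        · rcases i with i | i
          · exact ⟨i, rfl⟩
          · simp [CI] at hi
      · rintro ⟨i, rfl⟩
        by_cases h0 : i = 0
        · subst h0; exact Or.inl rfl
        · by_cases h1 : i = 1
          · subst h1; exact Or.inr (Or.inl rfl)
          · exact Or.inr (Or.inr ⟨Sum.inl i, by simp [CI, h0, h1], rfl⟩)
    have hex : ∃ s : Fin (j + 2), vx e f (Sum.inl s) ∉ τ := by
      by_contra hcon
      push Not at hcon
      have : (Finset.univ : Finset (Fin (j + 2))).image (fun i => vx e f (Sum.inl i)) ⊆ τ := by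
        intro v hv
        obtain ⟨i, _, rfl⟩ := Finset.mem_image.1 hv
        exact hcon i
      have := Finset.card_le_card this
      rw [Finset.card_image_of_injective _ (fun a b h => Sum.inl_injective ((vx e f).injective h)),
        Finset.card_univ, Fintype.card_fin] at this
      omega
    obtain ⟨s, hs⟩ := hex
    refine hsub s τ ?_ (Finset.card_pos.1 (by omega))
    intro v hv
    have hv' := hτ hv
    rw [hBig] at hv'
    obtain ⟨i, _, rfl⟩ := Finset.mem_image.1 hv'
    rw [hmem]
    simp only [II, Finset.inl_mem_disjSum, Finset.mem_erase, Finset.mem_univ, and_true]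
    rintro rfl
    exact hs hv

lemma choose_lower (hj : 1 ≤ j) (hjk : j < k) : k - j + 1 ≤ Nat.choose (k + 1) (j + 1) := by
  have h1 : Nat.choose (k + 1) (j + 1) = Nat.choose (k + 1) (k - j) := by
    rw [← Nat.choose_symm (by omega)]; congr 1; omega
  rw [h1]
  have h2 := Nat.choose_le_choose (k - j) (show k - j + 1 ≤ k + 1 by omega)
  rw [Nat.choose_succ_self_right] at h2
  exact h2

lemma pjOne_nonneg : 0 ≤ pjOne k j n := by unfold pjOne; positivity

lemma pjOne_mul (hj : 1 ≤ j) (hjk : j < k) (hn : 1 ≤ n) :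
    pjOne k j n * (((k - j + 1) * n ^ (k - j) : ℕ) : ℝ) ≤ 1 / 2 := by
  have hc : ((k - j + 1 : ℕ) : ℝ) ≤ (Nat.choose (k + 1) (j + 1) : ℝ) := by
    exact_mod_cast choose_lower hj hjk
  have hn' : (0 : ℝ) < (n : ℝ) ^ (k - j) := by positivity
  have hc0 : (0 : ℝ) < (Nat.choose (k + 1) (j + 1) : ℝ) := lt_of_lt_of_le (by positivity) hc
  unfold pjOne
  rw [Nat.cast_mul, Nat.cast_pow, div_mul_eq_mul_div, div_le_iff₀ (by positivity), one_mul]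
  have h := mul_le_mul_of_nonneg_right hc hn'.le
  have hjj : (1 : ℝ) ≤ j := by exact_mod_cast hj
  have h2 : 0 ≤ (Nat.choose (k + 1) (j + 1) : ℝ) * (n : ℝ) ^ (k - j) := by positivity
  nlinarith

lemma pjOne_le (hj : 1 ≤ j) (hjk : j < k) :
    pjOne k j n ≤ 1 / (n : ℝ) ^ (k - j) := by
  rcases Nat.eq_zero_or_pos n with rfl | hn
  · unfold pjOne
    rw [Nat.cast_zero, zero_pow (by omega)]; simp
  have hc : (1 : ℝ) ≤ (Nat.choose (k + 1) (j + 1) : ℝ) := by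
    exact_mod_cast Nat.choose_pos (by omega)
  have hjj : (1 : ℝ) ≤ j := by exact_mod_cast hj
  unfold pjOne
  have hn' : (0 : ℝ) < (n : ℝ) ^ (k - j) := by positivity
  refine div_le_div_of_nonneg_left zero_le_one hn' ?_
  refine le_mul_of_one_le_left hn'.le ?_
  nlinarith

lemma pjOne_D (hj : 1 ≤ j) (hjk : j < k) (hn : 1 ≤ n) :
    pjOne k j n * (((k - j + 1) ^ 2 * n ^ (k - j - 1) + 2 * (j + 2) : ℕ) : ℝ) ≤
      ((k - j + 1 : ℕ) ^ 2 + 2 * (j + 2) : ℝ) / n := by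
  have hn1 : (1 : ℝ) ≤ n := by exact_mod_cast hn
  have h1 : (1 : ℝ) ≤ (n : ℝ) ^ (k - j - 1) := one_le_pow₀ hn1
  have hpow : (n : ℝ) ^ (k - j) = (n : ℝ) ^ (k - j - 1) * n := by
    rw [← pow_succ]; congr 1; omega
  refine (mul_le_mul_of_nonneg_right (pjOne_le hj hjk) (by positivity)).trans ?_
  rw [hpow, div_mul_eq_mul_div, one_mul, div_le_div_iff₀ (by positivity) (by positivity)]
  push_cast
  have h2 : (2 * ((j : ℝ) + 2)) ≤ 2 * (j + 2) * (n : ℝ) ^ (k - j - 1) :=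
    le_mul_of_one_le_right (by positivity) h1
  have hn0 : (0 : ℝ) ≤ n := by positivity
  have h3 := mul_le_mul_of_nonneg_right h2 hn0
  nlinarith

lemma p0_bounds (hj : 1 ≤ j) : ∀ᶠ n : ℕ in atTop,
    (j * (Nat.factorial (k - j + 1)) / (2 * (k - j + 2 : ℕ)) : ℝ) * Real.log n / (n : ℝ) ^ (k - j + 1)
      ≤ pjPrevMinus k j n ∧
    pjPrevMinus k j n ≤ (j * (Nat.factorial (k - j + 1)) : ℝ) * (Real.log n / n) := by
  have hlog : Tendsto (fun n : ℕ => Real.log n) atTop atTop :=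
    Real.tendsto_log_atTop.comp tendsto_natCast_atTop_atTop
  filter_upwards [hlog.eventually_ge_atTop 4, eventually_ge_atTop 1] with n hl hn
  have hn1 : (1 : ℝ) ≤ n := by exact_mod_cast hn
  have hs : 2 ≤ Real.sqrt (Real.log n) := by
    rw [show (2 : ℝ) = Real.sqrt 4 by rw [show (4 : ℝ) = 2 ^ 2 by norm_num]; simp]
    exact Real.sqrt_le_sqrt hl
  have hi : 1 / Real.sqrt (Real.log n) ≤ 1 / 2 :=
    one_div_le_one_div_of_le (by norm_num) hs
  have hi0 : 0 ≤ 1 / Real.sqrt (Real.log n) := by positivity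
  set y := 1 - 1 / Real.sqrt (Real.log n) with hy
  have hy1 : 1 / 2 ≤ y := by linarith
  have hy2 : y ≤ 1 := by linarith
  have hl0 : 0 ≤ Real.log n := by linarith
  set A : ℝ := (j : ℝ) * Real.log n * (Nat.factorial (k - j + 1)) / (((k - j + 2 : ℕ) : ℝ) *
    (n : ℝ) ^ (k - j + 1)) with hA
  have hA0 : 0 ≤ A := by positivity
  have hp : pjPrevMinus k j n = y * A := by
    rw [pjPrevMinus, hA, ← hy]; ring
  rw [hp]
  constructor
  · have : (j * (Nat.factorial (k - j + 1)) / (2 * (k - j + 2 : ℕ)) : ℝ) * Real.log n /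
        (n : ℝ) ^ (k - j + 1) = 1 / 2 * A := by
      rw [hA]; field_simp
    rw [this]
    exact mul_le_mul_of_nonneg_right hy1 hA0
  · refine (mul_le_of_le_one_left hA0 hy2).trans ?_
    rw [hA]
    have : (j * (Nat.factorial (k - j + 1)) : ℝ) * (Real.log n / n) =
      (j : ℝ) * Real.log n * (Nat.factorial (k - j + 1)) / n := by ring
    rw [this]
    refine div_le_div_of_nonneg_left (by positivity) (by positivity) ?_
    have h1 : (n : ℝ) ≤ (n : ℝ) ^ (k - j + 1) := le_self_pow₀ hn1 (by omega)
    have h2 : (1 : ℝ) ≤ ((k - j + 2 : ℕ) : ℝ) := by exact_mod_cast (by omega)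
    exact h1.trans (le_mul_of_one_le_left (by positivity) h2)

lemma m_lower (N : ℕ) (hN : 1 ≤ N) (hn : N ≤ n) : (n : ℝ) / (2 * N) ≤ ((n / N : ℕ) : ℝ) := by
  rw [div_le_iff₀ (by positivity)]
  have h1 : 1 ≤ n / N := (Nat.one_le_div_iff hN).2 hn
  have h2 := Nat.div_add_mod n N
  have h3 := Nat.mod_lt n hN
  have : n ≤ (n / N) * (2 * N) := by nlinarith
  exact_mod_cast this

end Helpers

/-- Lemma 4.8: whp one copy of `M_j^*` exists in `G_p` throughout `[p_{j-1}^-, p_j^{(1)}]`. -/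
theorem statement13 (k j : ℕ) (hk : 2 ≤ k) (hj : 1 ≤ j) (hjk : j < k) :
    Tendsto (fun n : ℕ => birthMeasure n {t : Finset (Fin n) → ℝ |
      ∃ (K C : Finset (Fin n)) (w a : Fin n),
        ∀ p : ℝ, pjPrevMinus k j n ≤ p → p ≤ pjOne k j n →
          IsMjStar (complexAt k n t p) k j K C w a})
      atTop (nhds 1) := by
  set N := Fintype.card (Idx k j) with hN
  have hN1 : 1 ≤ N := Fintype.card_pos_iff.2 ⟨Sum.inl 0⟩
  set B : ℝ := ((k - j + 1 : ℕ) ^ 2 + 2 * (j + 2) : ℝ) with hB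
  set D : ℕ → ℕ := fun n => (k - j + 1) ^ 2 * n ^ (k - j - 1) + 2 * (j + 2) with hD
  set x : ℕ → ℝ := fun n => ((n / N : ℕ) : ℝ) ^ (k - j + 1) * pjPrevMinus k j n with hx
  set δ : ℕ → ℝ := fun n => 1 / (1 - pjOne k j n * D n) - 1 +
    4 * (1 / ((n / N : ℕ) : ℝ) + 2 ^ (j + 2) / x n) with hδ
  have hcast : Tendsto (fun n : ℕ => (n : ℝ)) atTop atTop := tendsto_natCast_atTop_atTop
  have hlog : Tendsto (fun n : ℕ => Real.log n) atTop atTop :=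
    Real.tendsto_log_atTop.comp hcast
  have hqD : Tendsto (fun n => pjOne k j n * D n) atTop (nhds 0) := by
    refine tendsto_of_tendsto_of_tendsto_of_le_of_le' tendsto_const_nhds
      (hcast.const_div_atTop B) ?_ ?_
    · exact Eventually.of_forall fun n => mul_nonneg pjOne_nonneg (Nat.cast_nonneg _)
    · filter_upwards [eventually_ge_atTop 1] with n hn
      exact pjOne_D hj hjk hn
  have hm : Tendsto (fun n : ℕ => ((n / N : ℕ) : ℝ)) atTop atTop := by
    refine tendsto_atTop_mono' _ ?_ (hcast.atTop_div_const (show (0 : ℝ) < 2 * N by positivity))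
    filter_upwards [eventually_ge_atTop N] with n hn
    exact m_lower N hN1 hn
  have hjR : (0 : ℝ) < j := by exact_mod_cast hj
  set c : ℝ := (j * (Nat.factorial (k - j + 1)) / (2 * (k - j + 2 : ℕ)) : ℝ) with hc
  have hc0 : 0 < c := by
    rw [hc]
    have := Nat.factorial_pos (k - j + 1)
    positivity
  have hxT : Tendsto x atTop atTop := by
    refine tendsto_atTop_mono' _ ?_ (hlog.const_mul_atTop
      (show (0 : ℝ) < (1 / (2 * N)) ^ (k - j + 1) * c by positivity))
    filter_upwards [eventually_ge_atTop N, eventually_ge_atTop 1, p0_bounds (k := k) hj] with n hn hn1 hp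
    have h1 := m_lower N hN1 hn
    have h2 := pow_le_pow_left₀ (by positivity) h1 (k - j + 1)
    have hl0 : 0 ≤ Real.log n := Real.log_natCast_nonneg n
    have hn0 : (n : ℝ) ≠ 0 := by positivity
    refine le_trans (le_of_eq ?_) (mul_le_mul h2 hp.1 (by positivity) (by positivity))
    rw [← hc, div_pow, div_pow, one_pow]
    field_simp
  have hδT : Tendsto δ atTop (nhds 0) := by
    have h1 : Tendsto (fun n => 1 / (1 - pjOne k j n * D n)) atTop (nhds (1 / (1 - 0))) :=
      tendsto_const_nhds.div (tendsto_const_nhds.sub hqD) (by norm_num)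
    have h2 := hm.const_div_atTop (1 : ℝ)
    have h3 := hxT.const_div_atTop ((2 : ℝ) ^ (j + 2))
    have := (h1.sub_const 1).add ((h2.add h3).const_mul 4)
    simp only [sub_zero, div_one, sub_self, add_zero, mul_zero] at this
    exact this
  have hp1 : ∀ᶠ n : ℕ in atTop, pjPrevMinus k j n ≤ 1 := by
    have h1 : Tendsto (fun n : ℕ => Real.log n / n) atTop (nhds 0) := by
      have := (Real.isLittleO_log_id_atTop.tendsto_div_nhds_zero).comp hcast
      exact this
    have h2 := h1.const_mul (j * (Nat.factorial (k - j + 1)) : ℝ)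
    rw [mul_zero] at h2
    filter_upwards [h2.eventually_le_const zero_lt_one, p0_bounds (k := k) hj] with n h hp
    exact hp.2.trans h
  have hmain : ∀ᶠ n : ℕ in atTop, ENNReal.ofReal (1 - δ n) ≤ birthMeasure n {t |
      ∃ (K C : Finset (Fin n)) (w a : Fin n),
        ∀ p : ℝ, pjPrevMinus k j n ≤ p → p ≤ pjOne k j n →
          IsMjStar (complexAt k n t p) k j K C w a} := by
    filter_upwards [eventually_ge_atTop N, eventually_ge_atTop 1, p0_bounds (k := k) hj, hp1,
      hxT.eventually_ge_atTop 1, hqD.eventually_lt_const zero_lt_one, hlog.eventually_gt_atTop 0]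
      with n hn hn1 hp hp1 hx1 hqD hl
    have hnR : (1 : ℝ) ≤ n := by exact_mod_cast hn1
    have hp0 : 0 < pjPrevMinus k j n := lt_of_lt_of_le (by positivity) hp.1
    have hmpos : 1 ≤ n / N := (Nat.one_le_div_iff hN1).2 hn
    obtain ⟨e⟩ : Nonempty (Idx k j × Fin (n / N) ↪ Fin n) := by
      refine Function.Embedding.nonempty_of_card_le ?_
      rw [Fintype.card_prod, Fintype.card_fin, Fintype.card_fin]
      exact Nat.mul_div_le n N
    have hq1 : pjOne k j n ≤ 1 := by
      refine (pjOne_le hj hjk).trans ?_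
      rw [div_le_one (by positivity)]
      exact one_le_pow₀ hnR
    have hb := main_bound hj hjk e (pjPrevMinus k j n) (pjOne k j n) hmpos hp0 hp1 pjOne_nonneg hq1
      (D n) rfl hqD (pjOne_mul hj hjk hn1) (x n) rfl hx1
    refine (ENNReal.ofReal_le_ofReal hb).trans ?_
    rw [ofReal_measureReal]
    refine measure_mono ?_
    intro t ht
    obtain ⟨f, hf⟩ := Set.mem_iUnion.1 ht
    exact ⟨_, _, _, _, fun p h0 h1 => star_of_mem hk hj hjk e f _ _ t hf p h0 h1⟩
  refine tendsto_of_tendsto_of_tendsto_of_le_of_le' ?_ tendsto_const_nhds hmain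
    (Eventually.of_forall fun n => prob_le_one)
  have := ENNReal.tendsto_ofReal ((tendsto_const_nhds (x := (1 : ℝ))).sub hδT)
  simpa using this

end RSC
end

section
/- Let k ≥ 2 and j ∈ {1,…,k−1}. With high probability, there exists a pair (K,C) that forms a copy of M_j^- in G_p for every p in the range [p_j^{(1)}, p_j^−] simultaneously, where p_j^{(1)} := 1/(10·(j+1)·binom(k+1, j+1)·n^{k−j}) and p_j^− := (1 − 1/√(log n))·(j+1)·(log n)·(k−j)!/((k−j+1)·n^{k−j}). -/
open MeasureTheory Filter

attribute [local instance] Classical.propDecidable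

namespace RSC

variable {V : Type*}

/-- Number of supersets of given size. -/
lemma card_supersets_le {n : ℕ} (k r : ℕ) (hr : r ≤ k + 1) (B : Finset (Fin n))
    (hB : r ≤ B.card) :
    (Finset.univ.filter (fun S : Finset (Fin n) => S.card = k + 1 ∧ B ⊆ S)).card
      ≤ n.choose (k + 1 - r) := by
  obtain ⟨B', hB', hc⟩ := Finset.exists_subset_card_eq hB
  have h : (Finset.univ.filter (fun S : Finset (Fin n) => S.card = k + 1 ∧ B ⊆ S)).card
      ≤ (Finset.powersetCard (k + 1 - r) (Finset.univ : Finset (Fin n))).card := by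
    refine Finset.card_le_card_of_injOn (fun S => S \ B') ?_ ?_
    · intro S hS
      simp only [Finset.coe_filter, Finset.mem_univ, true_and, Set.mem_ofPred_eq] at hS
      simp only [Finset.mem_coe, Finset.mem_powersetCard]
      refine ⟨Finset.subset_univ _, ?_⟩
      rw [Finset.card_sdiff_of_subset (hB'.trans hS.2), hS.1, hc]
    · intro S hS T hT hST
      simp only [Finset.coe_filter, Finset.mem_univ, true_and, Set.mem_ofPred_eq] at hS hT
      have h1 := Finset.sdiff_union_of_subset (hB'.trans hS.2)
      have h2 := Finset.sdiff_union_of_subset (hB'.trans hT.2)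
      rw [← h1, ← h2]
      simp only at hST
      rw [hST]
  simpa using h

/-- The forbidden sets of the pair `(K,C)`. -/
noncomputable def Nb (k n : ℕ) (C K : Finset (Fin n)) : Finset (Finset (Fin n)) :=
  Finset.univ.filter (fun S => S ≠ K ∧ S.card = k + 1 ∧ ∃ w ∈ K \ C, insert w C ⊆ S)

lemma mem_Nb {k n : ℕ} {C K S : Finset (Fin n)} :
    S ∈ Nb k n C K ↔ S ≠ K ∧ S.card = k + 1 ∧ ∃ w ∈ K \ C, insert w C ⊆ S := by
  simp [Nb]

lemma card_Nb_le {k j n : ℕ} (hjk : j < k) {C K : Finset (Fin n)} (hC : C.card = j)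
    (hK : K.card = k + 1) (hCK : C ⊆ K) :
    (Nb k n C K).card ≤ (k - j + 1) * n.choose (k - j) := by
  have hsub : Nb k n C K ⊆ (K \ C).biUnion (fun w =>
      Finset.univ.filter (fun S : Finset (Fin n) => S.card = k + 1 ∧ insert w C ⊆ S)) := by
    intro S hS
    obtain ⟨_, h2, w, hw, h3⟩ := mem_Nb.1 hS
    simp only [Finset.mem_biUnion, Finset.mem_filter, Finset.mem_univ, true_and]
    exact ⟨w, hw, h2, h3⟩
  refine (Finset.card_le_card hsub).trans ?_
  have hcard : (K \ C).card = k - j + 1 := by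
    rw [Finset.card_sdiff_of_subset hCK]; omega
  rw [← hcard]
  refine Finset.card_biUnion_le_card_mul _ _ _ fun w hw => ?_
  have := card_supersets_le k (j + 1) (by omega) (insert w C)
    (by rw [Finset.card_insert_of_notMem (Finset.mem_sdiff.1 hw).2, hC])
  convert this using 2
  omega

lemma card_Nb_inter_le {k j n : ℕ} (hjk : j < k) {C K D L : Finset (Fin n)} (hC : C.card = j)
    (hK : K.card = k + 1) (hCK : C ⊆ K) (hD : D.card = j)
    (hL : L.card = k + 1) (hDL : D ⊆ L) (hKL : K ≠ L) (hLN : L ∉ Nb k n C K) :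
    (Nb k n C K ∩ Nb k n D L).card ≤ (k - j + 1) ^ 2 * n ^ (k - j - 1) := by
  have hsub : Nb k n C K ∩ Nb k n D L ⊆ ((K \ C) ×ˢ (L \ D)).biUnion (fun w =>
      Finset.univ.filter (fun S : Finset (Fin n) => S.card = k + 1 ∧
        insert w.1 C ∪ insert w.2 D ⊆ S)) := by
    intro S hS
    rw [Finset.mem_inter] at hS
    obtain ⟨_, h2, w, hw, h3⟩ := mem_Nb.1 hS.1
    obtain ⟨_, _, v, hv, h4⟩ := mem_Nb.1 hS.2
    simp only [Finset.mem_biUnion, Finset.mem_filter, Finset.mem_univ, true_and]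
    exact ⟨(w, v), Finset.mk_mem_product hw hv, h2, Finset.union_subset h3 h4⟩
  refine (Finset.card_le_card hsub).trans ?_
  have hcard : (K \ C).card = k - j + 1 := by
    rw [Finset.card_sdiff_of_subset hCK]; omega
  have hcard' : (L \ D).card = k - j + 1 := by
    rw [Finset.card_sdiff_of_subset hDL]; omega
  have hc2 : ((K \ C) ×ˢ (L \ D)).card = (k - j + 1) ^ 2 := by
    rw [Finset.card_product, hcard, hcard', sq]
  rw [← hc2]
  refine Finset.card_biUnion_le_card_mul _ _ _ fun w hw => ?_
  obtain ⟨hw1, hw2⟩ := Finset.mem_product.1 hw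
  have e1 : (insert w.1 C).card = j + 1 := by
    rw [Finset.card_insert_of_notMem (Finset.mem_sdiff.1 hw1).2, hC]
  have e2 : (insert w.2 D).card = j + 1 := by
    rw [Finset.card_insert_of_notMem (Finset.mem_sdiff.1 hw2).2, hD]
  have hge : j + 2 ≤ (insert w.1 C ∪ insert w.2 D).card := by
    by_contra hlt
    have h1 : insert w.1 C = insert w.1 C ∪ insert w.2 D :=
      Finset.eq_of_subset_of_card_le Finset.subset_union_left (by omega)
    have h2 : insert w.2 D = insert w.1 C ∪ insert w.2 D :=
      Finset.eq_of_subset_of_card_le Finset.subset_union_right (by omega)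
    apply hLN
    refine mem_Nb.2 ⟨hKL.symm, hL, w.1, hw1, ?_⟩
    rw [h1, ← h2]
    exact Finset.insert_subset (Finset.mem_sdiff.1 hw2).1 hDL
  have := card_supersets_le k (j + 2) (by omega) _ hge
  refine this.trans ?_
  have e : k + 1 - (j + 2) = k - j - 1 := by omega
  rw [e]
  exact Nat.choose_le_pow _ _

/-- Second moment bound. -/
lemma second_moment_s14 {Ω ι : Type*} [MeasurableSpace Ω] (μ : Measure Ω) [IsProbabilityMeasure μ]
    (I : Finset ι) (A : ι → Set Ω) (hA : ∀ i, MeasurableSet (A i)) (s : ℝ) :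
    2 * s * (∑ i ∈ I, μ.real (A i)) - s ^ 2 * (∑ i ∈ I, ∑ l ∈ I, μ.real (A i ∩ A l))
      ≤ μ.real (⋃ i ∈ I, A i) := by
  have hU : MeasurableSet (⋃ i ∈ I, A i) := Finset.measurableSet_biUnion _ fun i _ => hA i
  have hint : ∀ B : Set Ω, MeasurableSet B → Integrable (B.indicator (fun _ => (1 : ℝ))) μ :=
    fun B hB => (integrable_const (1 : ℝ)).indicator hB
  have hval : ∀ B : Set Ω, MeasurableSet B → ∫ x, B.indicator (fun _ => (1 : ℝ)) x ∂μ = μ.real B :=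
    fun B hB => by rw [integral_indicator hB]; simp
  have hi1 : Integrable (fun x => ∑ i ∈ I, (A i).indicator (fun _ => (1 : ℝ)) x) μ :=
    integrable_finsetSum _ fun i _ => hint _ (hA i)
  have hi2 : Integrable (fun x => ∑ i ∈ I, ∑ l ∈ I,
      (A i ∩ A l).indicator (fun _ => (1 : ℝ)) x) μ :=
    integrable_finsetSum _ fun i _ => integrable_finsetSum _ fun l _ =>
      hint _ ((hA i).inter (hA l))
  have e1 : ∑ i ∈ I, μ.real (A i) = ∫ x, ∑ i ∈ I, (A i).indicator (fun _ => (1 : ℝ)) x ∂μ := by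
    rw [integral_finsetSum _ fun i _ => hint _ (hA i)]
    exact Finset.sum_congr rfl fun i _ => (hval _ (hA i)).symm
  have e2 : ∑ i ∈ I, ∑ l ∈ I, μ.real (A i ∩ A l) =
      ∫ x, ∑ i ∈ I, ∑ l ∈ I, (A i ∩ A l).indicator (fun _ => (1 : ℝ)) x ∂μ := by
    rw [integral_finsetSum _ fun i _ => integrable_finsetSum _ fun l _ =>
      hint _ ((hA i).inter (hA l))]
    refine Finset.sum_congr rfl fun i _ => ?_
    rw [integral_finsetSum _ fun l _ => hint _ ((hA i).inter (hA l))]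
    exact Finset.sum_congr rfl fun l _ => (hval _ ((hA i).inter (hA l))).symm
  rw [e1, e2, ← hval _ hU, ← integral_const_mul, ← integral_const_mul,
    ← integral_sub (hi1.const_mul _) (hi2.const_mul _)]
  refine integral_mono ((hi1.const_mul _).sub (hi2.const_mul _)) (hint _ hU) fun x => ?_
  simp only
  have hprod : ∑ i ∈ I, ∑ l ∈ I, (A i ∩ A l).indicator (fun _ => (1 : ℝ)) x
      = (∑ i ∈ I, (A i).indicator (fun _ => (1 : ℝ)) x) ^ 2 := by
    rw [sq, Finset.sum_mul_sum]
    refine Finset.sum_congr rfl fun i _ => Finset.sum_congr rfl fun l _ => ?_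
    by_cases h1 : x ∈ A i <;> by_cases h2 : x ∈ A l <;> simp [Set.indicator, h1, h2]
  rw [hprod]
  by_cases hx : x ∈ ⋃ i ∈ I, A i
  · rw [Set.indicator_of_mem hx]
    nlinarith [sq_nonneg (1 - s * ∑ i ∈ I, (A i).indicator (fun _ => (1 : ℝ)) x)]
  · rw [Set.indicator_of_notMem hx]
    have : ∑ i ∈ I, (A i).indicator (fun _ => (1 : ℝ)) x = 0 := by
      refine Finset.sum_eq_zero fun i hi => ?_
      refine Set.indicator_of_notMem (fun h => hx ?_) _
      simp only [Set.mem_iUnion]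
      exact ⟨i, hi, h⟩
    rw [this]; simp

/-- The uniform measure on `[0,1]`. -/
noncomputable def uni : Measure ℝ := volume.restrict (Set.Icc (0 : ℝ) 1)

instance : IsProbabilityMeasure uni := ⟨by simp [uni]⟩

lemma uni_Iic {a : ℝ} (ha : 0 ≤ a) (ha1 : a ≤ 1) : uni.real (Set.Iic a) = a := by
  have : Set.Iic a ∩ Set.Icc (0 : ℝ) 1 = Set.Icc 0 a := by
    ext x; simp only [Set.mem_inter_iff, Set.mem_Iic, Set.mem_Icc]
    constructor
    · rintro ⟨h1, h2, h3⟩; exact ⟨h2, h1⟩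
    · rintro ⟨h1, h2⟩; exact ⟨h2, h1, h2.trans ha1⟩
  rw [uni, measureReal_def, Measure.restrict_apply measurableSet_Iic, this, Real.volume_Icc]
  simp [ha]

lemma uni_Ioi {b : ℝ} (hb : 0 ≤ b) (hb1 : b ≤ 1) : uni.real (Set.Ioi b) = 1 - b := by
  rw [← Set.compl_Iic, probReal_compl_eq_one_sub measurableSet_Iic, uni_Iic hb hb1]

/-- The coordinate constraints. -/
noncomputable def box (k n : ℕ) (a b : ℝ) (C K : Finset (Fin n)) (S : Finset (Fin n)) : Set ℝ :=
  if S = K then Set.Iic a else if S ∈ Nb k n C K then Set.Ioi b else Set.univ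

lemma measurableSet_box {k n : ℕ} {a b : ℝ} {C K S : Finset (Fin n)} :
    MeasurableSet (box k n a b C K S) := by
  unfold box
  split_ifs
  · exact measurableSet_Iic
  · exact measurableSet_Ioi
  · exact MeasurableSet.univ

lemma birth_real_pi (n : ℕ) (B : Finset (Fin n) → Set ℝ) :
    (birthMeasure n).real (Set.univ.pi B) = ∏ S, uni.real (B S) := by
  have : birthMeasure n = Measure.pi fun _ => uni := rfl
  rw [this, measureReal_def, Measure.pi_pi, ENNReal.toReal_prod]
  rfl

instance (n : ℕ) : IsProbabilityMeasure (birthMeasure n) := by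
  have : birthMeasure n = Measure.pi fun _ => uni := rfl
  rw [this]; infer_instance

lemma uni_box {k n : ℕ} {a b : ℝ} (ha : 0 ≤ a) (ha1 : a ≤ 1) (hb : 0 ≤ b) (hb1 : b ≤ 1)
    {C K S : Finset (Fin n)} : uni.real (box k n a b C K S) =
      (if S = K then a else 1) * (if S ∈ Nb k n C K then 1 - b else 1) := by
  unfold box
  by_cases h : S = K
  · have : S ∉ Nb k n C K := fun hh => (mem_Nb.1 hh).1 h
    simp [h, uni_Iic ha ha1, h ▸ this]
  · by_cases h2 : S ∈ Nb k n C K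
    · simp [h, h2, uni_Ioi hb hb1]
    · simp [h, h2]

lemma prob_box {k n : ℕ} {a b : ℝ} (ha : 0 ≤ a) (ha1 : a ≤ 1) (hb : 0 ≤ b) (hb1 : b ≤ 1)
    {C K : Finset (Fin n)} : (birthMeasure n).real (Set.univ.pi (box k n a b C K)) =
      a * (1 - b) ^ (Nb k n C K).card := by
  rw [birth_real_pi]
  simp_rw [uni_box ha ha1 hb hb1]
  rw [Finset.prod_mul_distrib]
  congr 1
  · simp
  · rw [Finset.prod_ite]; simp

lemma prob_box_inter {k j n : ℕ} (hjk : j < k) {a b : ℝ} (ha : 0 ≤ a) (hab : a ≤ b)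
    (hb1 : b < 1) {C K D L : Finset (Fin n)} (hC : C.card = j)
    (hK : K.card = k + 1) (hCK : C ⊆ K) (hD : D.card = j)
    (hL : L.card = k + 1) (hDL : D ⊆ L) (hKL : K ≠ L) :
    (birthMeasure n).real (Set.univ.pi (box k n a b C K) ∩ Set.univ.pi (box k n a b D L)) ≤
      (birthMeasure n).real (Set.univ.pi (box k n a b C K)) *
      (birthMeasure n).real (Set.univ.pi (box k n a b D L)) *
        ((1 - b)⁻¹) ^ ((k - j + 1) ^ 2 * n ^ (k - j - 1)) := by
  have ha1 : a ≤ 1 := by linarith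
  have hb : 0 ≤ b := ha.trans hab
  have hinv : 1 ≤ (1 - b)⁻¹ := (one_le_inv₀ (by linarith)).2 (by linarith)
  have hrhs : 0 ≤ (birthMeasure n).real (Set.univ.pi (box k n a b C K)) *
      (birthMeasure n).real (Set.univ.pi (box k n a b D L)) *
        ((1 - b)⁻¹) ^ ((k - j + 1) ^ 2 * n ^ (k - j - 1)) := by positivity
  rw [← Set.pi_inter_distrib]
  by_cases h1 : L ∈ Nb k n C K
  · rw [birth_real_pi, Finset.prod_eq_zero (Finset.mem_univ L)]
    · exact hrhs
    · have : box k n a b C K L ∩ box k n a b D L L = ∅ := by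
        simp only [box, h1, if_neg hKL.symm, if_true]
        ext x; simp only [Set.mem_inter_iff, Set.mem_Ioi, Set.mem_Iic, Set.mem_empty_iff_false]
        constructor
        · rintro ⟨h, h'⟩; linarith
        · exact False.elim
      rw [this]; simp
  by_cases h2 : K ∈ Nb k n D L
  · rw [birth_real_pi, Finset.prod_eq_zero (Finset.mem_univ K)]
    · exact hrhs
    · have : box k n a b C K K ∩ box k n a b D L K = ∅ := by
        simp only [box, h2, if_neg hKL, if_true]
        ext x; simp only [Set.mem_inter_iff, Set.mem_Ioi, Set.mem_Iic, Set.mem_empty_iff_false]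
        constructor
        · rintro ⟨h, h'⟩; linarith
        · exact False.elim
      rw [this]; simp
  have key : (birthMeasure n).real (Set.univ.pi fun S => box k n a b C K S ∩ box k n a b D L S) =
      (birthMeasure n).real (Set.univ.pi (box k n a b C K)) *
      (birthMeasure n).real (Set.univ.pi (box k n a b D L)) *
        ((1 - b)⁻¹) ^ (Nb k n C K ∩ Nb k n D L).card := by
    have hp : ((1 - b)⁻¹) ^ (Nb k n C K ∩ Nb k n D L).card =
        ∏ S : Finset (Fin n), (if S ∈ Nb k n C K ∩ Nb k n D L then (1 - b)⁻¹ else 1) := by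
      rw [Finset.prod_ite, Finset.filter_mem_eq_inter]; simp
    rw [hp, birth_real_pi, birth_real_pi, birth_real_pi, ← Finset.prod_mul_distrib,
      ← Finset.prod_mul_distrib]
    refine Finset.prod_congr rfl fun S _ => ?_
    have hne : (1 - b) ≠ 0 := by linarith
    rw [uni_box ha ha1 hb hb1.le, uni_box ha ha1 hb hb1.le]
    unfold box
    by_cases e1 : S = K
    · subst e1
      have : S ∉ Nb k n C S := fun hh => (mem_Nb.1 hh).1 rfl
      simp [hKL, h2, this, uni_Iic ha ha1]
    by_cases e2 : S = L
    · subst e2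
      have : S ∉ Nb k n D S := fun hh => (mem_Nb.1 hh).1 rfl
      simp [hKL.symm, h1, this, uni_Iic ha ha1]
    by_cases e3 : S ∈ Nb k n C K <;> by_cases e4 : S ∈ Nb k n D L <;>
      simp [e1, e2, e3, e4, uni_Ioi hb hb1.le, hne]
  rw [key]
  gcongr
  exact card_Nb_inter_le hjk hC hK hCK hD hL hDL hKL h1

lemma isMjMinus_of_mem {k j n : ℕ} (hk : 2 ≤ k) (hj : 1 ≤ j) {a b p : ℝ}
    {C K : Finset (Fin n)} (hC : C.card = j) (hK : K.card = k + 1) (hCK : C ⊆ K)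
    {t : Finset (Fin n) → ℝ} (ht : t ∈ Set.univ.pi (box k n a b C K)) (hap : a ≤ p) (hpb : p ≤ b) :
    IsMjMinus (complexAt k n t p) k j K C := by
  have htK : t K ≤ p := by
    have := ht K (Set.mem_univ _)
    simp only [box, if_true, Set.mem_Iic] at this
    linarith
  refine ⟨⟨Or.inr ⟨Finset.card_pos.1 (by omega), K, hK, htK, subset_rfl⟩, hK⟩,
    Or.inr ⟨Finset.card_pos.1 (by omega), K, hK, htK, hCK⟩, hC, hCK, ?_⟩
  rintro P ⟨w, hw, rfl⟩ K' ⟨hK', hcard⟩ hP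
  by_contra hne
  have hmem : K' ∈ Nb k n C K := mem_Nb.2 ⟨hne, hcard, w, hw, hP⟩
  have h1 := ht K' (Set.mem_univ _)
  simp only [box, if_neg hne, hmem, if_true, Set.mem_Ioi] at h1
  rcases hK' with ⟨v, hv⟩ | ⟨_, M, hM, htM, hsub⟩
  · rw [hv] at hcard; simp at hcard; omega
  · have : K' = M := Finset.eq_of_subset_of_card_le hsub (by omega)
    rw [this] at h1; linarith

lemma prob_lower {k j n : ℕ} (hk : 2 ≤ k) (hj : 1 ≤ j) (hjk : j < k) {a b : ℝ}
    (ha : 0 < a) (hab : a ≤ b) (hb1 : b < 1) {E : ℝ} (hE : 0 < E)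
    (hE2 : E ≤ n.choose (k + 1) * (a * (1 - b) ^ ((k - j + 1) * n.choose (k - j)))) :
    2 - 1 / E - ((1 - b)⁻¹) ^ ((k - j + 1) ^ 2 * n ^ (k - j - 1)) ≤
    (birthMeasure n).real {t : Finset (Fin n) → ℝ |
      ∃ K C : Finset (Fin n), ∀ p : ℝ, a ≤ p → p ≤ b →
          IsMjMinus (complexAt k n t p) k j K C} := by
  have hex : ∀ K : Finset (Fin n), ∃ C : Finset (Fin n), K.card = k + 1 → C ⊆ K ∧ C.card = j := by
    intro K
    by_cases h : K.card = k + 1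
    · obtain ⟨C, h1, h2⟩ := Finset.exists_subset_card_eq (show j ≤ K.card by omega)
      exact ⟨C, fun _ => ⟨h1, h2⟩⟩
    · exact ⟨∅, fun h' => absurd h' h⟩
  choose C hC using hex
  set I : Finset (Finset (Fin n)) := Finset.powersetCard (k + 1) Finset.univ with hI
  have hIm : ∀ K ∈ I, K.card = k + 1 := fun K hK => (Finset.mem_powersetCard.1 hK).2
  set A : Finset (Fin n) → Set (Finset (Fin n) → ℝ) :=
    fun K => Set.univ.pi (box k n a b (C K) K) with hAdef
  have hA : ∀ K, MeasurableSet (A K) := fun K =>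
    MeasurableSet.univ_pi fun S => measurableSet_box
  set c := ((1 - b)⁻¹) ^ ((k - j + 1) ^ 2 * n ^ (k - j - 1)) with hc
  have hc0 : 0 ≤ c := by
    have : 0 < 1 - b := by linarith
    positivity
  set μ := birthMeasure n
  set X := ∑ K ∈ I, μ.real (A K) with hX
  have hEX : E ≤ X := by
    refine hE2.trans ?_
    have h1 : (n.choose (k + 1) : ℝ) = (I.card : ℝ) := by simp [hI]
    rw [h1, ← nsmul_eq_mul]
    refine Finset.card_nsmul_le_sum _ _ _ fun K hK => ?_
    have hKc := hIm K hK
    rw [hAdef]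
    simp only
    rw [prob_box ha.le (by linarith) (by linarith) hb1.le]
    refine mul_le_mul_of_nonneg_left ?_ ha.le
    exact pow_le_pow_of_le_one (by linarith) (by linarith)
      (card_Nb_le hjk (hC K hKc).2 hKc (hC K hKc).1)
  have hXpos : 0 < X := hE.trans_le hEX
  have hY : ∑ K ∈ I, ∑ L ∈ I, μ.real (A K ∩ A L) ≤ X + X ^ 2 * c := by
    have : ∀ K ∈ I, ∀ L ∈ I, μ.real (A K ∩ A L) ≤
        (if K = L then μ.real (A K) else 0) + μ.real (A K) * μ.real (A L) * c := by
      intro K hK L hL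
      by_cases h : K = L
      · subst h
        simp only [Set.inter_self, if_true]
        have : 0 ≤ μ.real (A K) * μ.real (A K) * c := by positivity
        linarith
      · rw [if_neg h, zero_add]
        have hKc := hIm K hK
        have hLc := hIm L hL
        exact prob_box_inter hjk ha.le hab hb1 (hC K hKc).2 hKc (hC K hKc).1 (hC L hLc).2 hLc
          (hC L hLc).1 h
    refine (Finset.sum_le_sum fun K hK => Finset.sum_le_sum fun L hL => this K hK L hL).trans ?_
    simp_rw [Finset.sum_add_distrib]
    refine add_le_add ?_ ?_
    · rw [hX]
      refine Finset.sum_le_sum fun K hK => ?_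
      rw [Finset.sum_ite_eq]; simp [hK]
    · rw [hX, sq, Finset.sum_mul_sum, Finset.sum_mul]
      simp_rw [Finset.sum_mul]
      exact le_rfl
  have h2 := second_moment_s14 μ I A hA (1 / X)
  have hmono : μ.real (⋃ K ∈ I, A K) ≤ μ.real {t : Finset (Fin n) → ℝ |
      ∃ K C : Finset (Fin n), ∀ p : ℝ, a ≤ p → p ≤ b →
          IsMjMinus (complexAt k n t p) k j K C} := by
    refine measureReal_mono ?_
    intro t ht
    simp only [Set.mem_iUnion] at ht
    obtain ⟨K, hK, ht⟩ := ht
    have hKc := hIm K hK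
    exact ⟨K, C K, fun p h1 h2 => isMjMinus_of_mem hk hj (hC K hKc).2 hKc (hC K hKc).1 ht h1 h2⟩
  refine le_trans ?_ (h2.trans hmono)
  have h3 : (1 / X) ^ 2 * ∑ K ∈ I, ∑ L ∈ I, μ.real (A K ∩ A L) ≤ 1 / X + c := by
    calc _ ≤ (1 / X) ^ 2 * (X + X ^ 2 * c) := by gcongr
      _ = _ := by field_simp
  have h4 : 2 * (1 / X) * X = 2 := by field_simp
  have h5 : 1 / X ≤ 1 / E := one_div_le_one_div_of_le hE hEX
  rw [h4]; linarith

lemma one_sub_inv_le {b : ℝ} (hb : 0 ≤ b) (hb2 : b ≤ 1 / 2) :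
    (1 - b)⁻¹ ≤ Real.exp (b + 2 * b ^ 2) := by
  have h1 : (1 - b)⁻¹ ≤ 1 + (b + 2 * b ^ 2) := by
    rw [inv_le_iff_one_le_mul₀ (by linarith)]
    nlinarith [mul_nonneg (sq_nonneg b) (show 0 ≤ 1 - 2 * b by linarith)]
  refine h1.trans ?_
  have := Real.add_one_le_exp (b + 2 * b ^ 2)
  linarith

set_option maxHeartbeats 2000000 in
lemma asym (k j n : ℕ) (hj : 1 ≤ j) (hjk : j < k) {D Q L : ℝ}
    (hD : D = (j + 1 : ℝ) * (Nat.factorial (k - j)) / ((k - j + 1 : ℕ) : ℝ))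
    (hQ : Q = 10 * ((j : ℝ) + 1) * (Nat.choose (k + 1) (j + 1)))
    (hLdef : L = Real.log n)
    (hn : 2 * (k + 1) ≤ n) (hL4 : 4 ≤ L) (hLm : 2 * ((k - j + 1 : ℕ) : ℝ) ≤ L)
    (hDL : D * (L / n) ≤ 1 / 2) :
    0 < pjOne k j n ∧ pjOne k j n ≤ pjMinus k j n ∧ pjMinus k j n < 1 ∧
    (1 / (2 ^ (k + 1) * (Nat.factorial (k + 1)) * Q)) *
      Real.exp ((j + 1) * Real.sqrt L - 2 * D * (j + 1) * (L ^ 2 / n)) ≤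
      n.choose (k + 1) * (pjOne k j n *
        (1 - pjMinus k j n) ^ ((k - j + 1) * n.choose (k - j))) ∧
    ((1 - pjMinus k j n)⁻¹) ^ ((k - j + 1) ^ 2 * n ^ (k - j - 1)) ≤
      Real.exp (2 * ((k - j + 1 : ℕ) : ℝ) ^ 2 * D * (L / n)) := by
  obtain ⟨m, rfl⟩ : ∃ m, k = j + (m + 1) := ⟨k - j - 1, by omega⟩
  have hm : j + (m + 1) - j = m + 1 := by omega
  have hm' : j + (m + 1) - j - 1 = m := by omega
  have hb0 : pjMinus (j + (m + 1)) j n = D * (1 - 1 / Real.sqrt L) * L / (n : ℝ) ^ (m + 1) := by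
    rw [pjMinus, hD, hm, ← hLdef]
    field_simp
  have ha0 : pjOne (j + (m + 1)) j n = 1 / (Q * (n : ℝ) ^ (m + 1)) := by
    rw [pjOne, hQ, hm]
  rw [hm] at hLm hD
  rw [hm', hm, hb0, ha0]
  clear hm hm' hb0 ha0
  set r := Real.sqrt L with hr
  have hr2 : 2 ≤ r := by
    rw [hr]; apply Real.le_sqrt_of_sq_le; linarith
  have hrr : r * r = L := Real.mul_self_sqrt (by linarith)
  have hn0 : (1 : ℝ) ≤ n := by exact_mod_cast (by omega : 1 ≤ n)
  have hnp : (0 : ℝ) < n := by linarith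
  have hnm : (1 : ℝ) ≤ (n : ℝ) ^ (m + 1) := one_le_pow₀ hn0
  have hnmp : (0 : ℝ) < (n : ℝ) ^ (m + 1) := by linarith
  have hr1 : 1 / r ≤ 1 / 2 := one_div_le_one_div_of_le (by norm_num) hr2
  have hr1p : 0 < 1 / r := by positivity
  have hj1 : (0 : ℝ) < (j : ℝ) + 1 := by positivity
  have hM1 : (0 : ℝ) < ((m + 1 + 1 : ℕ) : ℝ) := by positivity
  have hfac : (1 : ℝ) ≤ ((m + 1).factorial : ℝ) := by exact_mod_cast Nat.factorial_pos (m + 1)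
  have hDp : 0 < D := by rw [hD]; positivity
  have hDM : 1 ≤ D * ((m + 1 + 1 : ℕ) : ℝ) := by
    rw [hD, div_mul_cancel₀ _ hM1.ne']
    have : (1 : ℝ) ≤ (j : ℝ) + 1 := by
      have : (0 : ℝ) ≤ j := Nat.cast_nonneg _
      linarith
    nlinarith
  have hch : (1 : ℝ) ≤ ((j + (m + 1) + 1).choose (j + 1) : ℝ) := by
    exact_mod_cast Nat.choose_pos (by omega)
  have hQ1 : 1 ≤ Q := by
    rw [hQ]
    have : (0 : ℝ) ≤ j := Nat.cast_nonneg _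
    nlinarith
  set b := D * (1 - 1 / r) * L / (n : ℝ) ^ (m + 1) with hb
  have hbp : 0 < b := by
    rw [hb]
    have : 0 < 1 - 1 / r := by linarith
    have : 0 < L := by linarith
    positivity
  have hb_le : b * (n : ℝ) ^ m ≤ D * (L / n) := by
    rw [hb, pow_succ]
    have : D * (1 - 1 / r) * L / ((n : ℝ) ^ m * n) * (n : ℝ) ^ m = (1 - 1 / r) * (D * (L / n)) := by
      field_simp
    rw [this]
    have : 0 ≤ D * (L / n) := by
      have : 0 < L := by linarith
      positivity
    nlinarith
  have hb_le' : b ≤ D * (L / n) := by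
    refine le_trans ?_ hb_le
    have : (1 : ℝ) ≤ (n : ℝ) ^ m := one_le_pow₀ hn0
    nlinarith
  have hb2 : b ≤ 1 / 2 := hb_le'.trans hDL
  have hinv := one_sub_inv_le hbp.le hb2
  have h1b : 0 < 1 - b := by linarith
  refine ⟨by positivity, ?_, by linarith, ?_, ?_⟩
  · -- a ≤ b
    rw [hb, one_div, mul_inv, div_eq_mul_inv]
    refine mul_le_mul_of_nonneg_right ?_ (by positivity)
    have h1 : Q⁻¹ ≤ 1 := inv_le_one_of_one_le₀ hQ1
    refine h1.trans ?_
    have h2 : D * (2 * ((m + 1 + 1 : ℕ) : ℝ)) ≤ D * L := mul_le_mul_of_nonneg_left hLm hDp.le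
    have h3 : D * (1 - 1 / r) * L = (D * L) * (1 - 1 / r) := by ring
    rw [h3]
    nlinarith
  · -- expectation
    have hbM : b * (((m + 1 + 1) * n.choose (m + 1) : ℕ) : ℝ) ≤ (j + 1) * (L - r) := by
      have hc : (n.choose (m + 1) : ℝ) ≤ (n : ℝ) ^ (m + 1) / ((m + 1).factorial : ℝ) :=
        Nat.choose_le_pow_div _ _
      calc b * (((m + 1 + 1) * n.choose (m + 1) : ℕ) : ℝ)
          = b * ((m + 1 + 1 : ℕ) : ℝ) * (n.choose (m + 1) : ℝ) := by push_cast; ring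
        _ ≤ b * ((m + 1 + 1 : ℕ) : ℝ) * ((n : ℝ) ^ (m + 1) / ((m + 1).factorial : ℝ)) := by gcongr
        _ = (j + 1) * ((1 - 1 / r) * L) := by
            rw [hb, hD]; field_simp
        _ = (j + 1) * (L - r) := by
            congr 1
            rw [← hrr]; field_simp
    have hpow : Real.exp (-((j + 1) * (L - r)) - 2 * D * (j + 1) * (L ^ 2 / n)) ≤
        (1 - b) ^ ((m + 1 + 1) * n.choose (m + 1)) := by
      have h1 : Real.exp (-(b + 2 * b ^ 2)) ≤ 1 - b := by
        rw [Real.exp_neg]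
        exact inv_le_of_inv_le₀ h1b hinv
      calc _ ≤ Real.exp ((((m + 1 + 1) * n.choose (m + 1) : ℕ) : ℝ) * (-(b + 2 * b ^ 2))) := by
            apply Real.exp_le_exp.2
            set M : ℝ := (((m + 1 + 1) * n.choose (m + 1) : ℕ) : ℝ)
            have hM0 : 0 ≤ M := Nat.cast_nonneg _
            have h2 : b * (b * M) ≤ (D * (L / n)) * ((j + 1) * (L - r)) := by
              apply mul_le_mul hb_le' hbM (by positivity) (hbp.le.trans hb_le')
            have h3 : (D * (L / n)) * ((j + 1) * (L - r)) ≤ (D * (L / n)) * ((j + 1) * L) := by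
              apply mul_le_mul_of_nonneg_left _ (hbp.le.trans hb_le')
              apply mul_le_mul_of_nonneg_left _ hj1.le
              linarith
            have h4 : (D * (L / n)) * ((j + 1) * L) = D * (j + 1) * (L ^ 2 / n) := by ring
            have h5 : M * (-(b + 2 * b ^ 2)) = -(b * M) - 2 * (b * (b * M)) := by ring
            rw [h5]
            linarith
        _ = Real.exp (-(b + 2 * b ^ 2)) ^ ((m + 1 + 1) * n.choose (m + 1)) :=
            Real.exp_nat_mul _ _
        _ ≤ _ := by gcongr
    have hcc : ((n : ℝ) / 2) ^ (j + (m + 1) + 1) / ((j + (m + 1) + 1).factorial : ℝ) ≤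
        (n.choose (j + (m + 1) + 1) : ℝ) := by
      refine le_trans ?_ (Nat.pow_le_choose (j + (m + 1) + 1) n)
      gcongr
      rw [div_le_iff₀ (by norm_num)]
      have : n ≤ (n + 1 - (j + (m + 1) + 1)) * 2 := by omega
      exact_mod_cast this
    have hnexp : (n : ℝ) ^ (j + 1) = Real.exp ((j + 1) * L) := by
      have : (n : ℝ) = Real.exp L := by rw [hLdef, Real.exp_log hnp]
      rw [this, ← Real.exp_nat_mul]
      push_cast; rfl
    calc _ = ((n : ℝ) / 2) ^ (j + (m + 1) + 1) / ((j + (m + 1) + 1).factorial : ℝ) *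
          (1 / (Q * (n : ℝ) ^ (m + 1)) *
            Real.exp (-((j + 1) * (L - r)) - 2 * D * (j + 1) * (L ^ 2 / n))) := by
          have e1 : Real.exp ((j + 1) * r - 2 * D * (j + 1) * (L ^ 2 / n)) =
              (n : ℝ) ^ (j + 1) *
              Real.exp (-((j + 1) * (L - r)) - 2 * D * (j + 1) * (L ^ 2 / n)) := by
            rw [hnexp, ← Real.exp_add]; congr 1; ring
          rw [e1, div_pow]
          have e2 : (n : ℝ) ^ (j + (m + 1) + 1) = (n : ℝ) ^ (j + 1) * (n : ℝ) ^ (m + 1) := by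
            rw [← pow_add]; congr 1; ring
          rw [e2]
          field_simp
      _ ≤ _ := by gcongr
  · calc ((1 - b)⁻¹) ^ ((m + 1 + 1) ^ 2 * n ^ m)
        ≤ Real.exp (b + 2 * b ^ 2) ^ ((m + 1 + 1) ^ 2 * n ^ m) := by gcongr
      _ = Real.exp ((((m + 1 + 1) ^ 2 * n ^ m : ℕ) : ℝ) * (b + 2 * b ^ 2)) :=
          (Real.exp_nat_mul _ _).symm
      _ ≤ _ := by
          apply Real.exp_le_exp.2
          have h1 : b + 2 * b ^ 2 ≤ 2 * b := by nlinarith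
          calc (((m + 1 + 1) ^ 2 * n ^ m : ℕ) : ℝ) * (b + 2 * b ^ 2)
              ≤ (((m + 1 + 1) ^ 2 * n ^ m : ℕ) : ℝ) * (2 * b) := by gcongr
            _ = 2 * ((m + 1 + 1 : ℕ) : ℝ) ^ 2 * (b * (n : ℝ) ^ m) := by push_cast; ring
            _ ≤ 2 * ((m + 1 + 1 : ℕ) : ℝ) ^ 2 * (D * (L / n)) := by gcongr
            _ = _ := by ring


/-- Lemma 4.9: whp one copy of `M_j^-` exists in `G_p` throughout `[p_j^{(1)}, p_j^-]`. -/
theorem statement14 (k j : ℕ) (hk : 2 ≤ k) (hj : 1 ≤ j) (hjk : j < k) :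
    Tendsto (fun n : ℕ => birthMeasure n {t : Finset (Fin n) → ℝ |
      ∃ K C : Finset (Fin n),
        ∀ p : ℝ, pjOne k j n ≤ p → p ≤ pjMinus k j n →
          IsMjMinus (complexAt k n t p) k j K C})
      atTop (nhds 1) := by
  set D : ℝ := (j + 1 : ℝ) * (Nat.factorial (k - j)) / ((k - j + 1 : ℕ) : ℝ) with hD
  set Q : ℝ := 10 * ((j : ℝ) + 1) * (Nat.choose (k + 1) (j + 1)) with hQ
  set c : ℝ := 1 / (2 ^ (k + 1) * (Nat.factorial (k + 1)) * Q) with hc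
  have hcpos : 0 < c := by
    have : (0 : ℝ) < (Nat.choose (k + 1) (j + 1) : ℝ) := by
      exact_mod_cast Nat.choose_pos (by omega)
    positivity
  have hcast : Tendsto (fun n : ℕ => (n : ℝ)) atTop atTop := tendsto_natCast_atTop_atTop
  have hlog : Tendsto (fun n : ℕ => Real.log n) atTop atTop := Real.tendsto_log_atTop.comp hcast
  have hl1 : Tendsto (fun n : ℕ => Real.log n / (n : ℝ)) atTop (nhds 0) := by
    have := (Real.tendsto_pow_log_div_mul_add_atTop 1 0 1 one_ne_zero).comp hcast
    simpa [Function.comp_def] using this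
  have hl2 : Tendsto (fun n : ℕ => Real.log n ^ 2 / (n : ℝ)) atTop (nhds 0) := by
    have := (Real.tendsto_pow_log_div_mul_add_atTop 1 0 2 one_ne_zero).comp hcast
    simpa [Function.comp_def] using this
  set g : ℕ → ℝ := fun n => (j + 1) * Real.sqrt (Real.log n) -
    2 * D * (j + 1) * (Real.log n ^ 2 / n) with hg
  have hgt : Tendsto g atTop atTop := by
    have h1 : Tendsto (fun n : ℕ => ((j : ℝ) + 1) * Real.sqrt (Real.log n)) atTop atTop :=
      (Real.tendsto_sqrt_atTop.comp hlog).const_mul_atTop (by positivity)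
    have h2 := (hl2.const_mul (2 * D * (j + 1))).neg
    have := h1.atTop_add h2
    simpa [hg, sub_eq_add_neg] using this
  have hE : Tendsto (fun n => c * Real.exp (g n)) atTop atTop :=
    (Real.tendsto_exp_atTop.comp hgt).const_mul_atTop hcpos
  have hE' : Tendsto (fun n => 1 / (c * Real.exp (g n))) atTop (nhds 0) := by
    simp only [one_div]
    exact hE.inv_tendsto_atTop
  have hh : Tendsto (fun n : ℕ => Real.exp (2 * ((k - j + 1 : ℕ) : ℝ) ^ 2 * D *
      (Real.log n / n))) atTop (nhds 1) := by
    have := (Real.continuous_exp.tendsto _).comp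
      (hl1.const_mul (2 * ((k - j + 1 : ℕ) : ℝ) ^ 2 * D))
    simpa [Function.comp_def] using this
  have hlow : Tendsto (fun n : ℕ => 2 - 1 / (c * Real.exp (g n)) -
      Real.exp (2 * ((k - j + 1 : ℕ) : ℝ) ^ 2 * D * (Real.log n / n))) atTop (nhds 1) := by
    have := (tendsto_const_nhds (x := (2 : ℝ))).sub hE' |>.sub hh
    convert this using 2
    norm_num
  have hD0 : Tendsto (fun n : ℕ => D * (Real.log n / n)) atTop (nhds 0) := by
    simpa using hl1.const_mul D
  have hreal : Tendsto (fun n : ℕ => (birthMeasure n).real {t : Finset (Fin n) → ℝ |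
      ∃ K C : Finset (Fin n),
        ∀ p : ℝ, pjOne k j n ≤ p → p ≤ pjMinus k j n →
          IsMjMinus (complexAt k n t p) k j K C}) atTop (nhds 1) := by
    refine tendsto_of_tendsto_of_tendsto_of_le_of_le' hlow tendsto_const_nhds ?_
      (Eventually.of_forall fun n => measureReal_le_one)
    filter_upwards [eventually_ge_atTop (2 * (k + 1)), hlog.eventually_ge_atTop 4,
      hlog.eventually_ge_atTop (2 * ((k - j + 1 : ℕ) : ℝ)),
      hD0.eventually_le_const (show (0 : ℝ) < 1 / 2 by norm_num)] with n h1 h2 h3 h4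
    obtain ⟨p1, p2, p3, p4, p5⟩ := asym k j n hj hjk hD hQ rfl h1 h2 h3 h4
    have := prob_lower hk hj hjk p1 p2 p3 (E := c * Real.exp (g n)) (by positivity) p4
    linarith
  have := ENNReal.tendsto_ofReal hreal
  rw [ENNReal.ofReal_one] at this
  refine this.congr fun n => ?_
  rw [measureReal_def, ENNReal.ofReal_toReal (measure_ne_top _ _)]

end RSC
end
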